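/- arXiv:2003.09247 — 4 statements merged into one kernel-verified Lean document; each statement's English description precedes it below -/
import Mathlib

section
/- In the unbiased Waiter-Client game on the edge set of K_n whose winning sets are the pancyclic spanning subgraphs of K_n, τ_WC(PC_n, 1) = n + (1 + o(1))·log₂ n; that is, for every ε > 0 there exists n₀ such that for all n ≥ n₀, n + (1 − ε)·log₂ n ≤ τ_WC(PC_n, 1) ≤ n + (1 + ε)·log₂ n. -/
open Finset

/-- `WaiterWins board b win t Cl W` means: starting from the position where Client owns the
elements of `Cl` and Waiter owns the elements of `W`, Waiter can force that within the next `t`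
rounds of the `b`-biased Waiter-Client game on the board `board` a position is reached in which
the predicate `win` holds of (Client's elements, Waiter's elements).  In each round Waiter offers
`b+1` previously unclaimed board elements (or all remaining unclaimed elements, if fewer than
`b+1` remain); Client claims exactly one of them, the rest go to Waiter. -/
def WaiterWins {X : Type*} [DecidableEq X] (board : Finset X) (b : ℕ)
    (win : Finset X → Finset X → Prop) :
    ℕ → Finset X → Finset X → Prop
  | 0, Cl, W => win Cl W
  | (t+1), Cl, W => win Cl W ∨
      ∃ O : Finset X, O.Nonempty ∧ O ⊆ board \ (Cl ∪ W) ∧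
        O.card = min (b + 1) ((board \ (Cl ∪ W)).card) ∧
        ∀ x ∈ O, WaiterWins board b win t (insert x Cl) (W ∪ O.erase x)

/-- `tauWC board F b` : the smallest number of rounds within which Waiter can force Client's
elements to contain some member of the winning family `F`, in the `b`-biased Waiter-Client game
on the board `board`. -/
noncomputable def tauWC {X : Type*} [DecidableEq X] (board : Finset X)
    (F : Set (Finset X)) (b : ℕ) : ℕ :=
  sInf {t | WaiterWins board b (fun Cl _ => ∃ A ∈ F, A ⊆ Cl) t ∅ ∅}

/-- The edge set of the complete graph on `Fin n`. -/
def Kedges (n : ℕ) : Finset (Sym2 (Fin n)) :=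
  Finset.univ.filter (fun e => ¬ e.IsDiag)

/-- The family of edge sets of pancyclic (spanning) subgraphs of `K_n`: edge sets containing,
for every `3 ≤ ℓ ≤ n`, the edges of some cycle of length `ℓ`. -/
def PCfamily (n : ℕ) : Set (Finset (Sym2 (Fin n))) :=
  {F | F ⊆ Kedges n ∧ ∀ ℓ : ℕ, 3 ≤ ℓ → ℓ ≤ n →
    ∃ (u : Fin n) (p : (⊤ : SimpleGraph (Fin n)).Walk u u),
      p.IsCycle ∧ p.length = ℓ ∧ ∀ e ∈ p.edges, e ∈ F}

/-! Lower bound: if a graph with `n - 1 + d` edges contains a Hamilton path, then its cycles are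
determined by their edges outside that path, so it has at most `2 ^ d` cycles; a pancyclic graph
has cycles of `n - 2` different lengths.

Upper bound: Waiter first forces a Hamilton cycle in `n + 5` rounds. She extends a path from its
end by offering edges to two new vertices, closes it to a cycle when few vertices are left, and
absorbs these one by one. By choosing the offered vertices carefully she keeps the later chords
unclaimed. She then offers pairs of parallel chords `{i, i + 2 ^ j + 1}`,
`{i + 1, i + 2 ^ j + 2}`, `j < K`, where `i = level j`; each chord saves `2 ^ j` steps on the way
from `level j` to `level (j + 1)`, so combining them shortens a cycle passing through the whole
ladder by any `N < 2 ^ K`. With `K` close to `log₂ n` and `O(log log n)` further chords closing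
shorter cycles, every length occurs. -/

section Game

variable {X ι : Type*} [DecidableEq X] {board : Finset X} {b s t : ℕ}
  {win win' : Finset X → Finset X → Prop} {C W : Finset X}

namespace WaiterWins

lemma of_win (h : win C W) : WaiterWins board b win t C W := by
  cases t with
  | zero => exact h
  | succ t => exact Or.inl h

lemma mono (hwin : ∀ C W, win C W → win' C W) (h : WaiterWins board b win t C W) :
    WaiterWins board b win' t C W := by
  induction t generalizing C W with
  | zero => exact hwin _ _ h
  | succ t ih =>
    rcases h with h | ⟨O, hne, hsub, hcard, hO⟩
    · exact Or.inl (hwin _ _ h)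
    · exact Or.inr ⟨O, hne, hsub, hcard, fun x hx ↦ ih (hO x hx)⟩

lemma mono_rounds (hst : s ≤ t) (h : WaiterWins board b win s C W) :
    WaiterWins board b win t C W := by
  induction s generalizing t C W with
  | zero => exact of_win h
  | succ s ih =>
    obtain ⟨t, rfl⟩ := Nat.exists_eq_add_of_lt hst
    rcases h with h | ⟨O, hne, hsub, hcard, hO⟩
    · exact Or.inl h
    · exact Or.inr ⟨O, hne, hsub, hcard, fun x hx ↦ ih (by omega) (hO x hx)⟩

lemma bind (h : WaiterWins board b win s C W)
    (hwin : ∀ C W, win C W → WaiterWins board b win' t C W) :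
    WaiterWins board b win' (s + t) C W := by
  induction s generalizing C W with
  | zero => exact mono_rounds (by omega) (hwin _ _ h)
  | succ s ih =>
    rcases h with h | ⟨O, hne, hsub, hcard, hO⟩
    · exact mono_rounds (by omega) (hwin _ _ h)
    · rw [Nat.succ_add]
      exact Or.inr ⟨O, hne, hsub, hcard, fun x hx ↦ ih (hO x hx)⟩

lemma exists_card_le (h : WaiterWins board b win t C W) :
    ∃ C' W', win C' W' ∧ #C' ≤ #C + t := by
  induction t generalizing C W with
  | zero => exact ⟨C, W, h, le_rfl⟩
  | succ t ih =>
    rcases h with h | ⟨O, ⟨x, hx⟩, -, -, hO⟩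
    · exact ⟨C, W, h, by omega⟩
    · obtain ⟨C', W', hwin, hcard⟩ := ih (hO x hx)
      exact ⟨C', W', hwin, by have := card_insert_le x C; omega⟩

lemma tauWC_le {F : Set (Finset X)}
    (h : WaiterWins board b (fun C _ ↦ ∃ A ∈ F, A ⊆ C) t ∅ ∅) : tauWC board F b ≤ t :=
  Nat.sInf_le h

lemma within_tauWC {F : Set (Finset X)} (h : WaiterWins board b (fun C _ ↦ ∃ A ∈ F, A ⊆ C) t ∅ ∅) :
    WaiterWins board b (fun C _ ↦ ∃ A ∈ F, A ⊆ C) (tauWC board F b) ∅ ∅ :=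
  Nat.sInf_mem (s := {t | WaiterWins board b (fun C _ ↦ ∃ A ∈ F, A ⊆ C) t ∅ ∅}) ⟨t, h⟩

lemma offer_pair {e f : X} (he : e ∈ board) (hf : f ∈ board) (hef : e ≠ f)
    (he' : e ∉ C ∪ W) (hf' : f ∉ C ∪ W)
    (hClient_e : WaiterWins board 1 win t (insert e C) (insert f W))
    (hClient_f : WaiterWins board 1 win t (insert f C) (insert e W)) :
    WaiterWins board 1 win (t + 1) C W := by
  have hsub : {e, f} ⊆ board \ (C ∪ W) := by
    simp [insert_subset_iff, mem_sdiff, he, hf, he', hf', -mem_union]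
  refine Or.inr ⟨{e, f}, insert_nonempty _ _, hsub, ?_, ?_⟩
  · have := card_le_card hsub
    rw [card_pair hef] at this ⊢
    omega
  · simp only [mem_insert, mem_singleton, forall_eq_or_imp, forall_eq]
    constructor
    · rwa [erase_insert (by simpa), union_comm, ← insert_eq]
    · rwa [pair_comm, erase_insert (by simpa using hef.symm), union_comm, ← insert_eq]

lemma offer_disjoint_pairs (e f : ι → X) (I : Finset ι)
    (hboard : ∀ i ∈ I, e i ∈ board ∧ f i ∈ board) (hef : ∀ i ∈ I, e i ≠ f i)
    (hfree : ∀ i ∈ I, e i ∉ C ∪ W ∧ f i ∉ C ∪ W)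
    (hdisj : ∀ i ∈ I, ∀ j ∈ I, i ≠ j → e i ≠ e j ∧ e i ≠ f j ∧ f i ≠ f j) :
    WaiterWins board 1 (fun C' W' ↦ C ⊆ C' ∧ (∀ i ∈ I, e i ∈ C' ∨ f i ∈ C') ∧
      ∀ x ∈ C' ∪ W', x ∈ C ∪ W ∨ ∃ i ∈ I, x = e i ∨ x = f i) #I C W := by
  classical
  induction I using Finset.induction_on generalizing C W with
  | empty => exact of_win ⟨subset_rfl, by simp, fun x hx ↦ Or.inl hx⟩
  | insert a I ha ih =>
    have hne : ∀ i ∈ I, i ≠ a := fun i hi h ↦ ha (h ▸ hi)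
    have haI := mem_insert_self a I
    have hdisj_a : ∀ i ∈ I, e i ≠ e a ∧ e i ≠ f a ∧ f i ≠ f a ∧ f i ≠ e a := fun i hi ↦
      ⟨(hdisj i (mem_insert_of_mem hi) a haI (hne i hi)).1,
        (hdisj i (mem_insert_of_mem hi) a haI (hne i hi)).2.1,
        (hdisj i (mem_insert_of_mem hi) a haI (hne i hi)).2.2,
        (hdisj a haI i (mem_insert_of_mem hi) (hne i hi).symm).2.1.symm⟩
    have hrest : ∀ x y, (x = e a ∧ y = f a ∨ x = f a ∧ y = e a) →
        WaiterWins board 1 (fun C' W' ↦ C ⊆ C' ∧ (∀ i ∈ insert a I, e i ∈ C' ∨ f i ∈ C') ∧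
          ∀ z ∈ C' ∪ W', z ∈ C ∪ W ∨ ∃ i ∈ insert a I, z = e i ∨ z = f i) #I
          (insert x C) (insert y W) := by
      intro x y hxy
      refine (ih (C := insert x C) (W := insert y W) (fun i hi ↦ hboard i (mem_insert_of_mem hi))
        (fun i hi ↦ hef i (mem_insert_of_mem hi)) (fun i hi ↦ ?_)
        (fun i hi j hj ↦ hdisj i (mem_insert_of_mem hi) j (mem_insert_of_mem hj))).mono ?_
      · have := hfree i (mem_insert_of_mem hi)
        have := hdisj_a i hi
        grind
      · rintro C' W' ⟨hC, hI, hclaimed⟩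
        refine ⟨(subset_insert _ _).trans hC, ?_, fun z hz ↦ ?_⟩
        · have := hC (mem_insert_self x C)
          grind
        · have := hclaimed z hz
          grind
    rw [card_insert_of_notMem ha]
    exact offer_pair (hboard a haI).1 (hboard a haI).2 (hef a haI) (hfree a haI).1 (hfree a haI).2
      (hrest _ _ (Or.inl ⟨rfl, rfl⟩)) (hrest _ _ (Or.inr ⟨rfl, rfl⟩))

end WaiterWins

end Game

section CycleSpace

variable {V : Type*} [DecidableEq V] {G : SimpleGraph V} {u v : V}

lemma eq_empty_of_even_of_subset_path_edges {p : G.Walk u v} (hp : p.IsPath)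
    {D : Finset (Sym2 V)} (hD : D ⊆ p.edges.toFinset) (heven : ∀ x, Even #{e ∈ D | x ∈ e}) :
    D = ∅ := by
  induction p with
  | nil => simpa using hD
  | @cons u w v h q ih =>
    rw [SimpleGraph.Walk.cons_isPath_iff] at hp
    have hu : ∀ e ∈ D, u ∈ e → e = s(u, w) := fun e he hue ↦ by
      have := hD he
      rw [SimpleGraph.Walk.edges_cons, List.mem_toFinset, List.mem_cons] at this
      exact this.resolve_right fun h ↦ hp.2 (SimpleGraph.Walk.mem_support_of_mem_edges h hue)
    have hfirst : s(u, w) ∉ D := fun hmem ↦ by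
      have hfilter : {e ∈ D | u ∈ e} = {s(u, w)} := by
        ext e
        simp only [mem_filter, mem_singleton]
        exact ⟨fun he ↦ hu e he.1 he.2, by rintro rfl; simp [hmem]⟩
      simpa [hfilter] using heven u
    refine ih hp.1 fun e he ↦ ?_
    have := hD he
    rw [SimpleGraph.Walk.edges_cons, List.mem_toFinset, List.mem_cons] at this
    exact List.mem_toFinset.2 (this.resolve_left (by rintro rfl; exact hfirst he))

lemma even_card_filter_symmDiff {α : Type*} [DecidableEq α] {A B : Finset α} {P : α → Prop}
    [DecidablePred P] (hA : Even #(A.filter P)) (hB : Even #(B.filter P)) :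
    Even #((symmDiff A B).filter P) := by
  have hunion : (symmDiff A B).filter P =
      (A.filter P \ B.filter P) ∪ (B.filter P \ A.filter P) := by
    grind [mem_symmDiff]
  have hinterA := card_sdiff_add_card_inter (A.filter P) (B.filter P)
  have hinterB := card_sdiff_add_card_inter (B.filter P) (A.filter P)
  rw [inter_comm] at hinterB
  rw [hunion, card_union_of_disjoint disjoint_sdiff_sdiff]
  grind

lemma eq_of_sdiff_path_edges_eq {p : G.Walk u v} (hp : p.IsPath) {A B : Finset (Sym2 V)}
    (hA : ∀ x, Even #{e ∈ A | x ∈ e}) (hB : ∀ x, Even #{e ∈ B | x ∈ e})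
    (hAB : A \ p.edges.toFinset = B \ p.edges.toFinset) : A = B := by
  refine symmDiff_eq_empty.1 (eq_empty_of_even_of_subset_path_edges hp (fun e he ↦ ?_)
    fun x ↦ even_card_filter_symmDiff (hA x) (hB x))
  have := congrArg (e ∈ ·) hAB
  grind [mem_symmDiff]

lemma even_card_filter_edges_of_isCycle {p : G.Walk u u} (hp : p.IsCycle) (x : V) :
    Even #{e ∈ p.edges.toFinset | x ∈ e} := by
  have hfilter : {e ∈ p.edges.toFinset | x ∈ e} = (p.edges.filter (x ∈ ·)).toFinset := by
    ext e; simp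
  rw [hfilter, List.toFinset_card_of_nodup (hp.isCircuit.isTrail.edges_nodup.filter _),
    ← List.countP_eq_length_filter]
  exact (hp.isCircuit.isTrail.even_countP_edges_iff x).2 fun h ↦ absurd rfl h

lemma card_edges_toFinset {p : G.Walk u v} (hp : p.IsTrail) : #p.edges.toFinset = p.length := by
  rw [List.toFinset_card_of_nodup hp.edges_nodup, SimpleGraph.Walk.length_edges]

/- Cycles are determined by their edges outside a fixed path, because the cycle space meets the
edge space of a path trivially. -/
lemma card_cycle_lengths_le_two_pow {p : G.Walk u v} (hp : p.IsPath) {C : Finset (Sym2 V)}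
    (hpC : p.edges.toFinset ⊆ C) {L : Finset ℕ}
    (hL : ∀ l ∈ L, ∃ (w : V) (c : G.Walk w w), c.IsCycle ∧ c.length = l ∧ c.edges.toFinset ⊆ C) :
    #L ≤ 2 ^ (#C - p.length) := by
  have hcycle : ∀ l, ∃ D : Finset (Sym2 V), l ∈ L →
      D ⊆ C ∧ #D = l ∧ ∀ x, Even #{e ∈ D | x ∈ e} := by
    intro l
    by_cases hl : l ∈ L
    · obtain ⟨w, c, hc, rfl, hcC⟩ := hL l hl
      exact ⟨_, fun _ ↦ ⟨hcC, card_edges_toFinset hc.isCircuit.isTrail,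
        even_card_filter_edges_of_isCycle hc⟩⟩
    · exact ⟨∅, fun h ↦ absurd h hl⟩
  choose D hD using hcycle
  rw [← card_edges_toFinset hp.isTrail, ← card_sdiff_of_subset hpC, ← card_powerset]
  refine card_le_card_of_injOn (fun l ↦ D l \ p.edges.toFinset) (fun l hl ↦ ?_)
    fun l hl l' hl' heq ↦ ?_
  · exact mem_powerset.2 (sdiff_subset_sdiff (hD l hl).1 subset_rfl)
  · have := eq_of_sdiff_path_edges_eq hp (hD l hl).2.2 (hD l' hl').2.2 heq
    rw [← (hD l hl).2.1, ← (hD l' hl').2.1, this]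

end CycleSpace

lemma sub_two_le_two_pow_of_mem_PCfamily {n : ℕ} (hn : 3 ≤ n) {A C : Finset (Sym2 (Fin n))}
    (hA : A ∈ PCfamily n) (hAC : A ⊆ C) : n ≤ #C + 1 ∧ n - 2 ≤ 2 ^ (#C + 1 - n) := by
  have hcycle : ∀ l ∈ Icc 3 n, ∃ (w : Fin n) (c : (⊤ : SimpleGraph (Fin n)).Walk w w),
      c.IsCycle ∧ c.length = l ∧ c.edges.toFinset ⊆ C := fun l hl ↦ by
    obtain ⟨w, c, hc, hlen, hedge⟩ := hA.2 l (mem_Icc.1 hl).1 (mem_Icc.1 hl).2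
    exact ⟨w, c, hc, hlen, fun e he ↦ hAC (hedge e (List.mem_toFinset.1 he))⟩
  obtain ⟨w, c, hc, hlen, hcC⟩ := hcycle n (mem_Icc.2 ⟨hn, le_rfl⟩)
  have hpath := hc.isPath_tail
  have hpathC : c.tail.edges.toFinset ⊆ C := fun e he ↦ by
    rw [c.edges_tail, List.mem_toFinset] at he
    exact hcC (List.mem_toFinset.2 (List.mem_of_mem_tail he))
  have hpathlen : c.tail.length + 1 = n := by rw [c.length_tail_add_one hc.not_nil, hlen]
  have hcard := card_le_card hpathC
  rw [card_edges_toFinset hpath.isTrail] at hcard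
  have hcount := card_cycle_lengths_le_two_pow hpath hpathC hcycle
  rw [Nat.card_Icc, show #C - c.tail.length = #C + 1 - n by omega] at hcount
  exact ⟨by omega, by omega⟩

section Path

variable {V : Type*} {C C' : Finset (Sym2 V)} {m i j : ℕ} {c : ℕ → V} {x y : V}

/-- The vertices `c 0, …, c m` form a path with edges in `C`; the values of `c` beyond `m` are
irrelevant. -/
structure PathIn (C : Finset (Sym2 V)) (m : ℕ) (c : ℕ → V) : Prop where
  injOn : Set.InjOn c (Set.Iic m)
  edge_mem : ∀ i < m, s(c i, c (i + 1)) ∈ C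

/-- The sequence `c 0, …, c i, x, c (i + 1), …`. -/
def insertAfter (c : ℕ → V) (i : ℕ) (x : V) (j : ℕ) : V :=
  if j ≤ i then c j else if j = i + 1 then x else c (j - 1)

lemma insertAfter_of_le (hj : j ≤ i) : insertAfter c i x j = c j := if_pos hj

lemma insertAfter_succ_self : insertAfter c i x (i + 1) = x := by simp [insertAfter]

lemma insertAfter_succ_of_lt (hj : i < j) : insertAfter c i x (j + 1) = c j := by
  grind [insertAfter]

/-- The set of vertices `c 0, …, c m`. -/
def visited [DecidableEq V] (c : ℕ → V) (m : ℕ) : Finset V := (Iic m).image c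

lemma mem_visited [DecidableEq V] : x ∈ visited c m ↔ ∃ j ≤ m, c j = x := by simp [visited]

lemma ne_of_notMem_visited [DecidableEq V] (hx : x ∉ visited c m) (hj : j ≤ m) : c j ≠ x :=
  fun h ↦ hx (mem_visited.2 ⟨j, hj, h⟩)

lemma card_visited_le [DecidableEq V] : #(visited c m) ≤ m + 1 :=
  card_image_le.trans (by simp)

lemma visited_insertAfter [DecidableEq V] (hi : i ≤ m) :
    visited (insertAfter c i x) (m + 1) = insert x (visited c m) := by
  ext y
  simp only [mem_visited, mem_insert]
  constructor
  · rintro ⟨j, hj, rfl⟩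
    rcases lt_trichotomy j (i + 1) with hji | rfl | hji
    · exact Or.inr ⟨j, by omega, (insertAfter_of_le (by omega)).symm⟩
    · exact Or.inl insertAfter_succ_self
    · obtain ⟨j, rfl⟩ := Nat.exists_eq_succ_of_ne_zero (by omega : j ≠ 0)
      exact Or.inr ⟨j, by omega, (insertAfter_succ_of_lt (by omega)).symm⟩
  · rintro (rfl | ⟨j, hj, rfl⟩)
    · exact ⟨i + 1, by omega, insertAfter_succ_self⟩
    · rcases le_or_gt j i with hji | hji
      · exact ⟨j, by omega, insertAfter_of_le hji⟩
      · exact ⟨j + 1, by omega, insertAfter_succ_of_lt hji⟩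

lemma PathIn.insertAfter [DecidableEq V] (h : PathIn C m c) (hC : C ⊆ C') (hi : i ≤ m)
    (hx : x ∉ visited c m) (hleft : s(c i, x) ∈ C') (hright : i < m → s(x, c (i + 1)) ∈ C') :
    PathIn C' (m + 1) (insertAfter c i x) where
  injOn := by
    have hc : ∀ j ≤ m, c j ≠ x := fun j ↦ ne_of_notMem_visited hx
    have hinj : ∀ j ≤ m, ∀ k ≤ m, c j = c k → j = k := fun j hj k hk ↦ h.injOn hj hk
    intro j hj k hk
    simp only [Set.mem_Iic] at hj hk
    unfold _root_.insertAfter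
    grind
  edge_mem := by
    intro j hj
    rcases lt_trichotomy j i with hji | rfl | hji
    · rw [insertAfter_of_le hji.le, insertAfter_of_le hji]
      exact hC (h.edge_mem j (by omega))
    · rwa [insertAfter_of_le le_rfl, insertAfter_succ_self]
    · rw [insertAfter_succ_of_lt hji]
      rcases (Nat.succ_le_of_lt hji).eq_or_lt with rfl | hji'
      · rw [insertAfter_succ_self]
        exact hright (by omega)
      · obtain ⟨j, rfl⟩ := Nat.exists_eq_succ_of_ne_zero (by omega : j ≠ 0)
        rw [insertAfter_succ_of_lt (by omega)]
        exact hC (h.edge_mem j (by omega))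

end Path

lemma mk_mem_Kedges {n : ℕ} {x y : Fin n} : s(x, y) ∈ Kedges n ↔ x ≠ y := by simp [Kedges]

/-- Invariant of the path-building stage. The path `c 0, …, c m` was built from its end by offering
two unvisited vertices at a time, and `β i` is the vertex refused at position `i`. At positions in
`S` the refused vertices are distinct and, up to position `r`, never used by the path. -/
structure FreshPath {V : Type*} [DecidableEq V] (S : Finset ℕ) (r m : ℕ) (c β : ℕ → V)
    (C W : Finset (Sym2 V)) : Prop where
  path : PathIn C m c
  exists_mem : ∀ e ∈ C ∪ W, ∃ i < m, c i ∈ e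
  eq_refused_or : ∀ i ∈ S, i < m → ∀ y, s(c i, y) ∈ C ∪ W → y = β i ∨ ∃ j ≤ i + 1, y = c j
  refused_ne : ∀ i ∈ S, ∀ j ∈ S, i < j → j < m → β i ≠ β j
  ne_refused : ∀ i ∈ S, i < m → ∀ j ≤ m, j ≤ r → c j ≠ β i

namespace FreshPath

section Extend

variable {V : Type*} [DecidableEq V] {S : Finset ℕ} {r m : ℕ} {c β : ℕ → V} {x y : V}
  {C W : Finset (Sym2 V)}

lemma start (x : V) : FreshPath S r 0 (fun _ ↦ x) β ∅ ∅ where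
  path := ⟨by simp [Set.InjOn], by simp⟩
  exists_mem := by simp
  eq_refused_or := by simp
  refused_ne := by simp
  ne_refused := by simp

lemma notMem_of_end (h : FreshPath S r m c β C W) (hy : y ∉ visited c m) :
    s(c m, y) ∉ C ∪ W := fun hmem ↦ by
  obtain ⟨i, hi, hie⟩ := h.exists_mem _ hmem
  rcases Sym2.mem_iff.1 hie with heq | heq
  · exact hi.ne (h.path.injOn hi.le Set.self_mem_Iic heq)
  · exact ne_of_notMem_visited hy hi.le heq

lemma extend (h : FreshPath S r m c β C W) (hS : ∀ i ∈ S, i < r) (hx : x ∉ visited c m)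
    (hy : y ∉ visited c m) (hxy : x ≠ y)
    (hfresh : m < r → ∀ i ∈ S, x ≠ β i ∧ y ≠ β i) :
    FreshPath S r (m + 1) (insertAfter c m x) (Function.update β m y)
      (insert s(c m, x) C) (insert s(c m, y) W) := by
  have hcx : ∀ j ≤ m, c j ≠ x := fun j ↦ ne_of_notMem_visited hx
  have hcy : ∀ j ≤ m, c j ≠ y := fun j ↦ ne_of_notMem_visited hy
  have hold : ∀ j ≤ m, insertAfter c m x j = c j := fun j ↦ insertAfter_of_le
  have hnew : insertAfter c m x (m + 1) = x := insertAfter_succ_self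
  have hclaimed : ∀ e ∈ insert s(c m, x) C ∪ insert s(c m, y) W,
      e ∈ C ∪ W ∨ e = s(c m, x) ∨ e = s(c m, y) := by grind
  refine ⟨h.path.insertAfter (subset_insert _ _) le_rfl hx (mem_insert_self _ _) (by simp),
    fun e he ↦ ?_, fun i hiS hi z hz ↦ ?_, fun i hiS j hjS hij hj ↦ ?_, fun i hiS hi j hj hjr ↦ ?_⟩
  · rcases hclaimed e he with he | rfl | rfl
    · obtain ⟨i, hi, hie⟩ := h.exists_mem e he
      exact ⟨i, by omega, by rwa [hold i hi.le]⟩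
    all_goals exact ⟨m, by omega, by simp [hold]⟩
  · rw [hold i (by omega)] at hz
    rcases (Nat.lt_succ_iff.1 hi).lt_or_eq with hi | rfl
    · have hold_edge : s(c i, z) ∈ C ∪ W := by
        have : c i ≠ c m := fun heq ↦ hi.ne (h.path.injOn hi.le Set.self_mem_Iic heq)
        have := hclaimed _ hz
        grind
      have := h.eq_refused_or i hiS hi z hold_edge
      grind
    · rcases hclaimed _ hz with hz | hz | hz
      · obtain ⟨j, hj, rfl⟩ := mem_visited.1 (not_not.1 fun hzc ↦ h.notMem_of_end hzc hz)
        exact Or.inr ⟨j, by omega, (hold j hj).symm⟩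
      · exact Or.inr ⟨i + 1, le_rfl, by grind⟩
      · exact Or.inl (by grind)
  · grind [h.refused_ne]
  · grind [h.ne_refused]

end Extend

variable {n r m : ℕ} {S : Finset ℕ} {c β : ℕ → Fin n} {C W : Finset (Sym2 (Fin n))}

lemma exists_fresh_pair (hmn : m + 3 ≤ n) (hrn : r + #S + 2 ≤ n) :
    ∃ x ∉ visited c m, ∃ y ∉ visited c m, x ≠ y ∧
      (m < r → ∀ i ∈ S, x ≠ β i ∧ y ≠ β i) := by
  obtain ⟨avoid, hvisited, hrefused, hcard⟩ : ∃ avoid : Finset (Fin n), visited c m ⊆ avoid ∧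
      (m < r → S.image β ⊆ avoid) ∧ #avoid + 2 ≤ n := by
    have hvisited := card_visited_le (c := c) (m := m)
    by_cases hmr : m < r
    · refine ⟨_, subset_union_left, fun _ ↦ subset_union_right, ?_⟩
      have := card_union_le (visited c m) (S.image β)
      have := card_image_le (s := S) (f := β)
      omega
    · exact ⟨_, subset_rfl, fun h ↦ absurd h hmr, by omega⟩
  have hcompl : 1 < #avoidᶜ := by rw [card_compl, Fintype.card_fin]; omega
  obtain ⟨x, hx, y, hy, hxy⟩ := one_lt_card.1 hcompl
  rw [mem_compl] at hx hy
  refine ⟨x, fun h ↦ hx (hvisited h), y, fun h ↦ hy (hvisited h), hxy, fun hmr i hi ↦ ?_⟩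
  have hi_avoid : β i ∈ avoid := hrefused hmr (mem_image_of_mem _ hi)
  exact ⟨by rintro rfl; exact hx hi_avoid, by rintro rfl; exact hy hi_avoid⟩

lemma waiterWins_succ (h : FreshPath S r m c β C W) (hS : ∀ i ∈ S, i < r) (hmn : m + 3 ≤ n)
    (hrn : r + #S + 2 ≤ n) :
    WaiterWins (Kedges n) 1 (fun C W ↦ ∃ c β, FreshPath S r (m + 1) c β C W) 1 C W := by
  obtain ⟨x, hx, y, hy, hxy, hfresh⟩ := exists_fresh_pair (c := c) (β := β) hmn hrn
  refine WaiterWins.offer_pair (mk_mem_Kedges.2 (ne_of_notMem_visited hx le_rfl))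
    (mk_mem_Kedges.2 (ne_of_notMem_visited hy le_rfl)) (mt Sym2.congr_right.1 hxy)
    (h.notMem_of_end hx)
    (h.notMem_of_end hy) ⟨_, _, h.extend hS hx hy hxy hfresh⟩
    ⟨_, _, h.extend hS hy hx hxy.symm fun hmr i hi ↦ (hfresh hmr i hi).symm⟩

lemma waiterWins_of_empty (hS : ∀ i ∈ S, i < r) (hmn : m + 2 ≤ n) (hrn : r + #S + 2 ≤ n) :
    WaiterWins (Kedges n) 1 (fun C W ↦ ∃ c β, FreshPath S r m c β C W) m ∅ ∅ := by
  induction m with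
  | zero => exact ⟨_, fun _ ↦ ⟨0, by omega⟩, start ⟨0, by omega⟩⟩
  | succ m ih =>
    refine (ih (by omega)).bind fun C W ⟨c, β, h⟩ ↦ h.waiterWins_succ hS hmn hrn

end FreshPath

/-- Invariant of the cycle-closing and absorption stages. The edge `s(c 0, c m)` closes the path
`c 0, …, c m` to a cycle, the chords joining positions in `S` to later positions up to `r` are
unclaimed, and no unvisited vertex has two claimed edges to the `12 * k` positions following `r`,
which are reserved for absorbing `k` vertices. -/
structure FreshCycle {V : Type*} [DecidableEq V] (S : Finset ℕ) (r k m : ℕ) (c : ℕ → V)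
    (C W : Finset (Sym2 V)) : Prop where
  path : PathIn C m c
  closing_mem : s(c 0, c m) ∈ C
  chord_notMem : ∀ i ∈ S, ∀ j ≤ r, i + 2 ≤ j → s(c i, c j) ∉ C ∪ W
  notMem_or_notMem : ∀ y ∉ visited c m, ∀ i j, r ≤ i → i < j → j < r + 12 * k →
    s(c i, y) ∉ C ∪ W ∨ s(c j, y) ∉ C ∪ W

section Close

variable {V : Type*} [DecidableEq V] {S : Finset ℕ} {r k m p : ℕ} {c β : ℕ → V} {x y : V}
  {C W C' W' : Finset (Sym2 V)}

lemma FreshPath.notMem_of_ne_refused (h : FreshPath S r m c β C W) {i : ℕ} (hiS : i ∈ S)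
    (hi : i < m) (hy : y ∉ visited c m) (hyi : y ≠ β i) : s(c i, y) ∉ C ∪ W := fun hmem ↦ by
  obtain rfl | ⟨j, hj, rfl⟩ := h.eq_refused_or i hiS hi y hmem
  · exact hyi rfl
  · exact ne_of_notMem_visited hy (by omega) rfl

lemma FreshPath.close (h : FreshPath S (r + 12 * k) m c β C W) (hS : Ico r (r + 12 * k) ⊆ S)
    (hr : 0 < r) (hm : r + 12 * k ≤ m) (hC : C ⊆ C')
    (hclaimed : ∀ e ∈ C' ∪ W', e ∈ C ∪ W ∨ ∃ z ∉ visited c m, e = s(c 0, z) ∨ e = s(c m, z))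
    (hy : y ∉ visited c m) (hstart : s(c 0, y) ∈ C') (hend : s(c m, y) ∈ C') :
    FreshCycle S r k (m + 1) (insertAfter c m y) C' W' := by
  have hinj : ∀ i ≤ m, ∀ j ≤ m, c i = c j → i = j := fun i hi j hj ↦ h.path.injOn hi hj
  have hold : ∀ j ≤ m, insertAfter c m y j = c j := fun j ↦ insertAfter_of_le
  refine ⟨h.path.insertAfter hC le_rfl hy hend (by simp), ?_, fun i hiS j hj hij hmem ↦ ?_,
    fun z hz i j hi hij hj ↦ ?_⟩
  · rwa [hold 0 (by omega), insertAfter_succ_self]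
  · rw [hold i (by omega), hold j (by omega)] at hmem
    rcases hclaimed _ hmem with hmem | ⟨z, hz, heq⟩
    · obtain heq | ⟨l, hl, heq⟩ := h.eq_refused_or i hiS (by omega) _ hmem
      · exact h.ne_refused i hiS (by omega) j (by omega) (by omega) heq
      · have := hinj j (by omega) l (by omega) heq
        omega
    · have := ne_of_notMem_visited hz (j := i) (by omega)
      have := ne_of_notMem_visited hz (j := j) (by omega)
      grind
  · rw [visited_insertAfter le_rfl, mem_insert, not_or] at hz
    rw [hold i (by omega), hold j (by omega)]
    have hrefused : ∀ l, r ≤ l → l < r + 12 * k → s(c l, z) ∈ C' ∪ W' → z = β l := by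
      intro l hrl hl hmem
      rcases hclaimed _ hmem with hmem | ⟨z', hz', heq⟩
      · exact not_not.1 fun hzl ↦
          h.notMem_of_ne_refused (hS (mem_Ico.2 ⟨hrl, hl⟩)) (by omega) hz.2 hzl hmem
      · have := hinj l (by omega) 0 (by omega)
        have := hinj l (by omega) m (by omega)
        have := ne_of_notMem_visited hz' (j := l) (by omega)
        grind
    by_contra! hboth
    exact h.refused_ne i (hS (mem_Ico.2 ⟨hi, by omega⟩)) j (hS (mem_Ico.2 ⟨by omega, hj⟩)) hij
      (by omega) ((hrefused i hi (by omega) hboth.1).symm.trans (hrefused j (by omega) hj hboth.2))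

lemma FreshCycle.absorb (h : FreshCycle S r (k + 1) m c C W) (hm : r + 12 * (k + 1) ≤ m)
    (hC : C ⊆ C') (hclaimed : ∀ e ∈ C' ∪ W', e ∈ C ∪ W ∨ x ∈ e) (hx : x ∉ visited c m)
    (hp : r + 12 * k ≤ p) (hpm : p < m) (hleft : s(c p, x) ∈ C') (hright : s(x, c (p + 1)) ∈ C') :
    FreshCycle S r k (m + 1) (insertAfter c p x) C' W' := by
  have hold : ∀ j ≤ r + 12 * k, insertAfter c p x j = c j := fun j hj ↦ insertAfter_of_le (by omega)
  have hcx : ∀ j ≤ m, c j ≠ x := fun j ↦ ne_of_notMem_visited hx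
  refine ⟨h.path.insertAfter hC hpm.le hx hleft fun _ ↦ hright, ?_, fun i hiS j hj hij ↦ ?_,
    fun z hz i j hi hij hj ↦ ?_⟩
  · rw [hold 0 (by omega), insertAfter_succ_of_lt hpm]
    exact hC h.closing_mem
  · rw [hold i (by omega), hold j (by omega)]
    intro hmem
    have := hclaimed _ hmem
    have := h.chord_notMem i hiS j hj hij
    grind
  · rw [visited_insertAfter hpm.le, mem_insert, not_or] at hz
    rw [hold i (by omega), hold j (by omega)]
    have := h.notMem_or_notMem z hz.2 i j hi hij (by omega)
    have := hclaimed s(c i, z)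
    have := hclaimed s(c j, z)
    grind

lemma mem_or_mem_of_mem_insert (hclaimed : ∀ e ∈ C' ∪ W', e ∈ C ∪ W ∨ x ∈ e) {y z : V} :
    ∀ e ∈ insert s(y, x) C' ∪ insert s(z, x) W', e ∈ C ∪ W ∨ x ∈ e := fun e he ↦ by
  simp only [mem_union, mem_insert] at he hclaimed ⊢
  rcases he with (rfl | he) | rfl | he
  exacts [Or.inr (Sym2.mem_mk_right _ _), hclaimed e (Or.inl he),
    Or.inr (Sym2.mem_mk_right _ _), hclaimed e (Or.inr he)]

lemma FreshCycle.exists_six_unclaimed (h : FreshCycle S r (k + 1) m c C W)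
    (hx : x ∉ visited c m) :
    ∃ a, r + 12 * k ≤ a ∧ a + 5 < r + 12 * (k + 1) ∧
      ∀ i, a ≤ i → i ≤ a + 5 → s(c i, x) ∉ C ∪ W := by
  by_contra! hnot
  obtain ⟨i, hi, hi', hix⟩ := hnot (r + 12 * k) (by omega) (by omega)
  obtain ⟨j, hj, hj', hjx⟩ := hnot (r + 12 * k + 6) (by omega) (by omega)
  exact (h.notMem_or_notMem x hx i j (by omega) (by omega) (by omega)).elim (· hix) (· hjx)

end Close

section HamiltonCycle

variable {n r k m : ℕ} {S : Finset ℕ} {c β : ℕ → Fin n} {C W : Finset (Sym2 (Fin n))} {w t : Fin n}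

lemma waiterWins_common_neighbor (hwt : w ≠ t) {X : Finset (Fin n)} (hX : 4 ≤ #X)
    (hfree : ∀ x ∈ X, x ≠ w ∧ x ≠ t ∧ s(w, x) ∉ C ∪ W ∧ s(t, x) ∉ C ∪ W) :
    WaiterWins (Kedges n) 1 (fun C' W' ↦ C ⊆ C' ∧ (∃ y ∈ X, s(w, y) ∈ C' ∧ s(t, y) ∈ C') ∧
      ∀ e ∈ C' ∪ W', e ∈ C ∪ W ∨ ∃ z ∈ X, e = s(w, z) ∨ e = s(t, z)) 3 C W := by
  obtain ⟨z, hzX, hz⟩ : ∃ z : Bool → Bool → Fin n, (∀ i j, z i j ∈ X) ∧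
      ∀ i j i' j', z i j = z i' j' → i = i' ∧ j = j' := by
    obtain ⟨z⟩ : Nonempty (Bool × Bool ↪ X) :=
      Function.Embedding.nonempty_of_card_le (by simpa using hX)
    exact ⟨fun i j ↦ z (i, j), fun i j ↦ (z (i, j)).2, fun i j i' j' h ↦
      Prod.ext_iff.1 (z.injective (Subtype.ext h))⟩
  have hpairs := WaiterWins.offer_disjoint_pairs (board := Kedges n) (C := C) (W := W)
    (fun i ↦ s(w, z i false)) (fun i ↦ s(w, z i true)) univ
    (by simp only [mk_mem_Kedges]; grind) (by simp only [ne_eq, Sym2.congr_right]; grind) (by grind)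
    (by simp only [ne_eq, Sym2.congr_right]; grind)
  refine hpairs.bind (t := 1) fun C₁ W₁ ⟨hC₁, hboth, hpair⟩ ↦ ?_
  have hclaimed : ∀ e ∈ C₁ ∪ W₁, e ∈ C ∪ W ∨ ∃ x ∈ X, e = s(w, x) := fun e he ↦
    (hpair e he).imp_right fun ⟨i, _, hi⟩ ↦
      hi.elim (fun h ↦ ⟨_, hzX i false, h⟩) fun h ↦ ⟨_, hzX i true, h⟩
  have hchosen : ∀ i, ∃ j, s(w, z i j) ∈ C₁ := fun i ↦
    (hboth i (mem_univ i)).elim (⟨_, ·⟩) (⟨_, ·⟩)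
  obtain ⟨j, hj⟩ := hchosen false
  obtain ⟨j', hj'⟩ := hchosen true
  have hfree₁ : ∀ x ∈ X, s(t, x) ∉ C₁ ∪ W₁ := fun x hx hmem ↦ by
    obtain ⟨hxw, -, -, hxt⟩ := hfree x hx
    obtain hmem | ⟨z, -, heq⟩ := hclaimed _ hmem
    · exact hxt hmem
    · rcases Sym2.eq_iff.1 heq with ⟨rfl, -⟩ | ⟨-, rfl⟩
      exacts [hwt rfl, hxw rfl]
  have hne : z false j ≠ z true j' := fun h ↦ by simpa using (hz _ _ _ _ h).1
  refine WaiterWins.offer_pair (mk_mem_Kedges.2 (hfree _ (hzX false j)).2.1.symm)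
    (mk_mem_Kedges.2 (hfree _ (hzX true j')).2.1.symm) (mt Sym2.congr_right.1 hne)
    (hfree₁ _ (hzX _ _)) (hfree₁ _ (hzX _ _)) ?_ ?_
  · exact ⟨hC₁.trans (subset_insert _ _),
      ⟨_, hzX false j, mem_insert_of_mem hj, mem_insert_self _ _⟩, by grind⟩
  · exact ⟨hC₁.trans (subset_insert _ _),
      ⟨_, hzX true j', mem_insert_of_mem hj', mem_insert_self _ _⟩, by grind⟩

lemma FreshPath.waiterWins_close (h : FreshPath S (r + 12 * k) m c β C W)
    (hS : Ico r (r + 12 * k) ⊆ S) (hS₀ : 0 ∈ S) (hr : 0 < r) (hm : r + 12 * k ≤ m)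
    (hmn : m + 6 ≤ n) :
    WaiterWins (Kedges n) 1 (fun C W ↦ ∃ c, FreshCycle S r k (m + 1) c C W) 3 C W := by
  have hne : c 0 ≠ c m := fun heq ↦ by
    have := h.path.injOn (by simp) Set.self_mem_Iic heq
    omega
  set X := (visited c m)ᶜ.erase (β 0)
  have hX : ∀ x ∈ X, x ∉ visited c m ∧ x ≠ β 0 := fun x hx ↦ by
    rw [mem_erase, mem_compl] at hx
    exact hx.symm
  have hXcard : 4 ≤ #X := by
    have hcompl : n - (m + 1) ≤ #(visited c m)ᶜ := by
      have := card_visited_le (c := c) (m := m)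
      rw [card_compl, Fintype.card_fin]
      omega
    have : #(visited c m)ᶜ - 1 ≤ #X := pred_card_le_card_erase
    omega
  refine (waiterWins_common_neighbor hne hXcard fun x hx ↦ ?_).mono
    fun C' W' ⟨hC, ⟨y, hy, hstart, hend⟩, hclaimed⟩ ↦ ⟨_, h.close hS hr hm hC (fun e he ↦ ?_)
      (hX y hy).1 hstart hend⟩
  · exact ⟨(ne_of_notMem_visited (hX x hx).1 (by omega)).symm,
      (ne_of_notMem_visited (hX x hx).1 le_rfl).symm,
      h.notMem_of_ne_refused hS₀ (by omega) (hX x hx).1 (hX x hx).2, h.notMem_of_end (hX x hx).1⟩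
  · exact (hclaimed e he).imp_right fun ⟨z, hz, hez⟩ ↦ ⟨z, (hX z hz).1, hez⟩

lemma FreshCycle.waiterWins_absorb_beside (h : FreshCycle S r (k + 1) m c C W)
    (hm : r + 12 * (k + 1) ≤ m) {C₁ W₁ : Finset (Sym2 (Fin n))} {x : Fin n} (hx : x ∉ visited c m)
    (hC : C ⊆ C₁) (hclaimed : ∀ e ∈ C₁ ∪ W₁, e ∈ C ∪ W ∨ x ∈ e) {i : ℕ} (hi : r + 12 * k ≤ i)
    (him : i + 2 ≤ m) (hmid : s(c (i + 1), x) ∈ C₁) (hleft : s(c i, x) ∉ C₁ ∪ W₁)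
    (hright : s(c (i + 2), x) ∉ C₁ ∪ W₁) :
    WaiterWins (Kedges n) 1 (fun C W ↦ ∃ c, FreshCycle S r k (m + 1) c C W) 1 C₁ W₁ := by
  have hcx : ∀ j ≤ m, s(c j, x) ∈ Kedges n := fun j hj ↦
    mk_mem_Kedges.2 (ne_of_notMem_visited hx hj)
  have hne : s(c i, x) ≠ s(c (i + 2), x) := fun heq ↦ by
    have := h.path.injOn (Set.mem_Iic.2 (by omega)) (Set.mem_Iic.2 him) (Sym2.congr_left.1 heq)
    omega
  have hC' : ∀ e, C ⊆ insert e C₁ := fun e ↦ hC.trans (subset_insert _ _)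
  refine WaiterWins.offer_pair (hcx i (by omega)) (hcx (i + 2) him) hne hleft hright
    ⟨_, h.absorb hm (hC' _) (mem_or_mem_of_mem_insert hclaimed) hx hi (by omega)
      (mem_insert_self _ _) ?_⟩
    ⟨_, h.absorb hm (hC' _) (mem_or_mem_of_mem_insert hclaimed) hx (p := i + 1) (by omega)
      (by omega) (mem_insert_of_mem hmid) ?_⟩
  · exact mem_insert_of_mem (Sym2.eq_swap ▸ hmid)
  · exact Sym2.eq_swap ▸ mem_insert_self _ _

/- Client takes an edge from `x` to one of two inner vertices of six consecutive ones; offering both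
neighbours of that vertex then puts `x` between two consecutive vertices. -/
lemma FreshCycle.waiterWins_absorb (h : FreshCycle S r (k + 1) m c C W)
    (hm : r + 12 * (k + 1) ≤ m) (hmn : m + 2 ≤ n) :
    WaiterWins (Kedges n) 1 (fun C W ↦ ∃ c, FreshCycle S r k (m + 1) c C W) 2 C W := by
  obtain ⟨x, -, hx⟩ : ∃ x ∈ univ, x ∉ visited c m := exists_mem_notMem_of_card_lt_card
    (card_visited_le.trans_lt (by rw [card_univ, Fintype.card_fin]; omega))
  obtain ⟨a, ha, ha', hfree⟩ := h.exists_six_unclaimed hx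
  have hcx : ∀ i ≤ m, s(c i, x) ∈ Kedges n := fun i hi ↦
    mk_mem_Kedges.2 (ne_of_notMem_visited hx hi)
  have hne : ∀ i ≤ m, ∀ j ≤ m, i ≠ j → s(c i, x) ≠ s(c j, x) := fun i hi j hj hij heq ↦
    hij (h.path.injOn hi hj (Sym2.congr_left.1 heq))
  have hround₂ : ∀ i i', (i = a ∧ i' = a + 3 ∨ i = a + 3 ∧ i' = a) →
      WaiterWins (Kedges n) 1 (fun C W ↦ ∃ c, FreshCycle S r k (m + 1) c C W) 1
        (insert s(c (i + 1), x) C) (insert s(c (i' + 1), x) W) := by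
    intro i i' hi
    have hfree₂ : ∀ j, (j = i ∨ j = i + 2) →
        s(c j, x) ∉ insert s(c (i + 1), x) C ∪ insert s(c (i' + 1), x) W := fun j hj ↦ by
      have := hfree j (by omega) (by omega)
      have := hne j (by omega) (i + 1) (by omega) (by omega)
      have := hne j (by omega) (i' + 1) (by omega) (by omega)
      grind
    exact h.waiterWins_absorb_beside hm hx (subset_insert _ _)
      (mem_or_mem_of_mem_insert fun _ ↦ Or.inl) (by omega) (by omega) (mem_insert_self _ _)
      (hfree₂ i (Or.inl rfl)) (hfree₂ (i + 2) (Or.inr rfl))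
  exact WaiterWins.offer_pair (hcx (a + 1) (by omega)) (hcx (a + 4) (by omega))
    (hne _ (by omega) _ (by omega) (by omega)) (hfree _ (by omega) (by omega))
    (hfree _ (by omega) (by omega)) (hround₂ a (a + 3) (by omega)) (hround₂ (a + 3) a (by omega))

lemma FreshCycle.waiterWins_absorb_all (h : FreshCycle S r k m c C W) (hm : r + 12 * k ≤ m)
    (hmn : m + k + 1 ≤ n) :
    WaiterWins (Kedges n) 1 (fun C W ↦ ∃ c, FreshCycle S r 0 (m + k) c C W) (2 * k) C W := by
  induction k generalizing m c C W with
  | zero => exact WaiterWins.of_win ⟨c, h⟩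
  | succ k ih =>
    rw [mul_add, add_comm (2 * k), ← add_assoc, add_right_comm]
    exact (h.waiterWins_absorb hm (by omega)).bind fun C W ⟨c, h⟩ ↦ ih h (by omega) (by omega)

lemma waiterWins_hamilton_cycle (hS : ∀ i ∈ S, i < r + 48) (hrS : Ico r (r + 48) ⊆ S) (hS₀ : 0 ∈ S)
    (hr : 0 < r) (hrn : r + #S + 50 ≤ n) :
    WaiterWins (Kedges n) 1 (fun C W ↦ ∃ c, FreshCycle S r 0 (n - 1) c C W) (n + 5) ∅ ∅ := by
  have hcard : 48 ≤ #S := by simpa using card_le_card hrS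
  have hpath := FreshPath.waiterWins_of_empty (n := n) (m := n - 6) hS (by omega) (by omega)
  have hcycle := hpath.bind fun C W ⟨c, β, h⟩ ↦
    h.waiterWins_close (k := 4) hrS hS₀ hr (by omega) (by omega)
  have hham := hcycle.bind fun C W ⟨c, h⟩ ↦ h.waiterWins_absorb_all (by omega) (by omega)
  rwa [show n - 6 + 3 + 2 * 4 = n + 5 by omega, show n - 6 + 1 + 4 = n - 1 by omega] at hham

end HamiltonCycle

section Climb

/-- There is an `R`-path from `a` to `b` with `l` steps, along which the numbers increase. -/
inductive Climb (R : ℕ → ℕ → Prop) : ℕ → ℕ → ℕ → Prop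
  | refl (a : ℕ) : Climb R a a 0
  | step {a b d l : ℕ} (hab : a < b) (hR : R a b) (h : Climb R b d l) : Climb R a d (l + 1)

variable {R : ℕ → ℕ → Prop} {a b d k l : ℕ}

lemma Climb.trans (h : Climb R a b k) (h' : Climb R b d l) : Climb R a d (k + l) := by
  induction h with
  | refl => rwa [zero_add]
  | step hab hR _ ih => rw [Nat.succ_add]; exact Climb.step hab hR (ih h')

lemma Climb.of_forall_succ (hab : a ≤ b) (hR : ∀ i, a ≤ i → i < b → R i (i + 1)) :
    Climb R a b (b - a) := by
  induction b, hab using Nat.le_induction with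
  | base => rw [Nat.sub_self]; exact Climb.refl a
  | succ b hab ih =>
    rw [Nat.succ_sub hab]
    exact (ih fun i hi hib ↦ hR i hi (by omega)).trans
      (Climb.step b.lt_succ_self (hR b hab b.lt_succ_self) (Climb.refl _))

variable {V : Type*} {C : Finset (Sym2 V)} {c : ℕ → V} {m : ℕ}

lemma Climb.exists_isPath (h : Climb (fun i j ↦ s(c i, c j) ∈ C) a b l)
    (hc : Set.InjOn c (Set.Iic m)) (hb : b ≤ m) :
    a + l ≤ b ∧ ∃ p : (⊤ : SimpleGraph V).Walk (c a) (c b), p.IsPath ∧ p.length = l ∧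
      (∀ e ∈ p.edges, e ∈ C) ∧ ∀ v ∈ p.support, ∃ i, a ≤ i ∧ i ≤ b ∧ v = c i := by
  induction h with
  | refl a => exact ⟨le_rfl, .nil, .nil, rfl, by simp, by simpa using ⟨a, le_rfl, le_rfl, rfl⟩⟩
  | @step a b d l hab hR _ ih =>
    obtain ⟨hbd, p, hp, rfl, hedges, hsupport⟩ := ih hb
    have hne : c a ≠ c b := fun h ↦ hab.ne (hc (by simp; omega) (by simp; omega) h)
    refine ⟨by omega, .cons hne p, hp.cons fun hmem ↦ ?_, rfl, ?_, ?_⟩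
    · obtain ⟨i, hbi, hid, heq⟩ := hsupport _ hmem
      have := hc (by simp; omega) (by simp; omega) heq
      omega
    · simpa using ⟨hR, hedges⟩
    · simp only [SimpleGraph.Walk.support_cons, List.mem_cons, forall_eq_or_imp]
      exact ⟨⟨a, le_rfl, by omega, rfl⟩, fun v hv ↦
        (hsupport v hv).imp fun i hi ↦ ⟨by omega, hi.2⟩⟩

lemma Climb.exists_isCycle (h : Climb (fun i j ↦ s(c i, c j) ∈ C) a b l)
    (hc : Set.InjOn c (Set.Iic m)) (hb : b ≤ m) (hclosing : s(c a, c b) ∈ C) (hl : 2 ≤ l) :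
    ∃ (u : V) (p : (⊤ : SimpleGraph V).Walk u u),
      p.IsCycle ∧ p.length = l + 1 ∧ ∀ e ∈ p.edges, e ∈ C := by
  obtain ⟨hab, p, hp, rfl, hedges, -⟩ := h.exists_isPath hc hb
  have hne : c b ≠ c a := fun heq ↦ by
    have := hc (by simpa) (by simp; omega) heq
    omega
  refine ⟨c b, .cons hne p, ?_, rfl, ?_⟩
  · rw [SimpleGraph.Walk.isCycle_iff_isPath_tail_and_le_length]
    exact ⟨by simpa using hp, by simpa using hl⟩
  · simpa using ⟨Sym2.eq_swap ▸ hclosing, hedges⟩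

end Climb

section Ladder

/-- The foot of the `j`-th rung of the ladder of chords. -/
def level (j : ℕ) : ℕ := 2 ^ j + 2 * j + 1

lemma level_succ (j : ℕ) : level (j + 1) = level j + 2 ^ j + 2 := by
  simp only [level]; ring

lemma two_pow_lt_level (j : ℕ) : 2 ^ j < level j := by
  simp only [level]; omega

lemma level_mono : Monotone level := monotone_nat_of_le_succ fun j ↦ by
  rw [level_succ, add_assoc]
  exact Nat.le_add_right _ _

lemma level_add_one_ne_level (i j : ℕ) : level i + 1 ≠ level j := fun heq ↦ by
  rcases le_or_gt j i with hji | hij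
  · have := level_mono hji
    omega
  · have : level (i + 1) ≤ level j := level_mono hij
    have := Nat.two_pow_pos i
    grind [level_succ]

/-- A path `c 0, …, c m` in `C` such that for every `j < K` one of two parallel chords leads from
`level j` or its successor to within one step of `level (j + 1)`. Using the chord saves `2 ^ j`
steps, whichever of the two is present. -/
structure LadderIn {V : Type*} (C : Finset (Sym2 V)) (K m : ℕ) (c : ℕ → V) : Prop where
  path : PathIn C m c
  level_le : level K ≤ m
  chord_mem : ∀ j < K, s(c (level j), c (level j + 2 ^ j + 1)) ∈ C ∨
    s(c (level j + 1), c (level j + 2 ^ j + 2)) ∈ C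

namespace LadderIn

variable {V : Type*} {C : Finset (Sym2 V)} {K m j a b h L N : ℕ} {c : ℕ → V}

lemma climb_succ (hlad : LadderIn C K m c) (hab : a ≤ b) (hb : b ≤ m) :
    Climb (fun i j ↦ s(c i, c j) ∈ C) a b (b - a) :=
  Climb.of_forall_succ hab fun i _ hi ↦ hlad.path.edge_mem i (by omega)

lemma climb_level_succ (hlad : LadderIn C K m c) (hj : j < K) :
    Climb (fun i j ↦ s(c i, c j) ∈ C) (level j) (level (j + 1)) 2 := by
  have hm : level j + 2 ^ j + 2 ≤ m := by
    rw [← level_succ]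
    exact (level_mono hj).trans hlad.level_le
  have hstep := hlad.path.edge_mem
  have hpos := Nat.two_pow_pos j
  rw [level_succ]
  rcases hlad.chord_mem j hj with hchord | hchord
  · exact .step (by omega) hchord (.step (Nat.lt_succ_self _) (hstep _ (by omega)) (.refl _))
  · exact .step (Nat.lt_succ_self _) (hstep _ (by omega)) (.step (by omega) hchord (.refl _))

/- The chords used on the way up spell out the binary expansion of `N`. -/
lemma climb_level (hlad : LadderIn C K m c) (ha : a ≤ 1) (hj : j ≤ K) (hN : N < 2 ^ j) :
    Climb (fun i j ↦ s(c i, c j) ∈ C) a (level j) (level j - a - N) := by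
  have hm : level j ≤ m := (level_mono hj).trans hlad.level_le
  induction j generalizing N with
  | zero =>
    obtain rfl : N = 0 := by simpa using hN
    exact hlad.climb_succ (by simp [level]; omega) hm
  | succ j ih =>
    have hpow := two_pow_lt_level j
    have hlevel := level_succ j
    rw [pow_succ] at hN
    by_cases hNj : N < 2 ^ j
    · convert (ih (by omega) hNj (by omega)).trans
        (hlad.climb_succ (level_mono (Nat.le_add_right j 1)) hm) using 1
      omega
    · convert (ih (N := N - 2 ^ j) (by omega) (by omega) (by omega)).trans
        (hlad.climb_level_succ hj) using 1
      omega

lemma exists_isCycle (hlad : LadderIn C K m c) (ha : a ≤ 1) (hj : j ≤ K) (hN : N < 2 ^ j)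
    (hh : level j ≤ h) (hhm : h + a ≤ m) (hclosing : s(c a, c (h + a)) ∈ C) (hL : 3 ≤ L)
    (hLN : L + N = h + 1) :
    ∃ (u : V) (p : (⊤ : SimpleGraph V).Walk u u),
      p.IsCycle ∧ p.length = L ∧ ∀ e ∈ p.edges, e ∈ C := by
  have hclimb := (hlad.climb_level ha hj hN).trans
    (hlad.climb_succ (hh.trans (Nat.le_add_right h a)) hhm)
  have hlen : level j - a - N + (h + a - level j) + 1 = L := by
    have := two_pow_lt_level j
    omega
  rw [← hlen]
  exact hclimb.exists_isCycle hlad.path.injOn hhm hclosing (by omega)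

end LadderIn

end Ladder

section Chords

variable {n r k m K : ℕ} {S : Finset ℕ} {c : ℕ → Fin n} {C W : Finset (Sym2 (Fin n))}

lemma FreshCycle.waiterWins_parallel_chords (hcyc : FreshCycle S r k m c C W) (hrm : r ≤ m)
    {T : Finset (ℕ × ℕ)}
    (hT : ∀ p ∈ T, p.1 ∈ S ∧ p.1 + 1 ∈ S ∧ p.1 + 2 ≤ p.2 ∧ p.2 + 1 ≤ r)
    (hTT : ∀ p ∈ T, ∀ p' ∈ T, p.1 + 1 ≠ p'.1) :
    WaiterWins (Kedges n) 1 (fun C' _ ↦ C ⊆ C' ∧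
      ∀ p ∈ T, s(c p.1, c p.2) ∈ C' ∨ s(c (p.1 + 1), c (p.2 + 1)) ∈ C') #T C W := by
  have hinj : ∀ i ≤ m, ∀ j ≤ m, c i = c j → i = j := fun i hi j hj h ↦ hcyc.path.injOn hi hj h
  have hedge : ∀ i j i' j', i < j → j ≤ m → i' < j' → j' ≤ m → s(c i, c j) = s(c i', c j') →
      i = i' ∧ j = j' := fun i j i' j' hij hj hij' hj' heq ↦ by
    rcases Sym2.eq_iff.1 heq with ⟨h, h'⟩ | ⟨h, h'⟩
    · exact ⟨hinj _ (by omega) _ (by omega) h, hinj _ hj _ hj' h'⟩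
    · have := hinj _ (by omega) _ hj' h
      have := hinj _ hj _ (by omega) h'
      omega
  have hne : ∀ i j, i < j → j ≤ m → s(c i, c j) ∈ Kedges n := fun i j hij hj ↦
    mk_mem_Kedges.2 fun h ↦ hij.ne (hinj _ (by omega) _ hj h)
  refine (WaiterWins.offer_disjoint_pairs (fun p : ℕ × ℕ ↦ s(c p.1, c p.2))
    (fun p ↦ s(c (p.1 + 1), c (p.2 + 1))) T (fun p hp ↦ ?_) (fun p hp heq ↦ ?_) (fun p hp ↦ ?_)
    fun p hp p' hp' hpp ↦ ?_).mono fun C' W' h ↦ ⟨h.1, h.2.1⟩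
  · obtain ⟨-, -, hlt, hle⟩ := hT p hp
    exact ⟨hne _ _ (by omega) (by omega), hne _ _ (by omega) (by omega)⟩
  · obtain ⟨-, -, hlt, hle⟩ := hT p hp
    have := hedge _ _ _ _ (by omega) (by omega) (by omega) (by omega) heq
    omega
  · obtain ⟨hS, hS', hlt, hle⟩ := hT p hp
    exact ⟨hcyc.chord_notMem _ hS _ (by omega) hlt, hcyc.chord_notMem _ hS' _ hle (by omega)⟩
  · obtain ⟨-, -, hlt, hle⟩ := hT p hp
    obtain ⟨-, -, hlt', hle'⟩ := hT p' hp'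
    refine ⟨fun heq ↦ hpp ?_, fun heq ↦ hTT p' hp' p hp ?_, fun heq ↦ hpp ?_⟩
    · exact Prod.ext_iff.2 (hedge _ _ _ _ (by omega) (by omega) (by omega) (by omega) heq)
    · exact (hedge _ _ _ _ (by omega) (by omega) (by omega) (by omega) heq).1.symm
    · have := hedge _ _ _ _ (by omega) (by omega) (by omega) (by omega) heq
      exact Prod.ext (by omega) (by omega)

lemma FreshCycle.waiterWins_ladder (hcyc : FreshCycle S r k m c C W) (hrm : r ≤ m)
    (hS₀ : 0 ∈ S) (hS₁ : 1 ∈ S) (hS : ∀ j < K, level j ∈ S ∧ level j + 1 ∈ S) (hK : level K ≤ r)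
    {H : Finset ℕ} (hH : ∀ h ∈ H, 2 ≤ h ∧ h + 1 ≤ r) :
    WaiterWins (Kedges n) 1 (fun C' _ ↦ LadderIn C' K m c ∧ s(c 0, c m) ∈ C' ∧
      ∀ h ∈ H, s(c 0, c h) ∈ C' ∨ s(c 1, c (h + 1)) ∈ C') (K + #H) C W := by
  set T : Finset (ℕ × ℕ) :=
    (range K).image (fun j ↦ (level j, level j + 2 ^ j + 1)) ∪ H.image (fun h ↦ (0, h))
  have hTcard : #T ≤ K + #H := (card_union_le _ _).trans
    (Nat.add_le_add (card_image_le.trans (card_range K).le) card_image_le)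
  have hT : ∀ p ∈ T, (∃ j < K, p = (level j, level j + 2 ^ j + 1)) ∨ ∃ h ∈ H, p = (0, h) := by
    intro p hp
    rcases mem_union.1 hp with hp | hp
    · obtain ⟨j, hj, rfl⟩ := mem_image.1 hp
      exact Or.inl ⟨j, mem_range.1 hj, rfl⟩
    · obtain ⟨h, hh, rfl⟩ := mem_image.1 hp
      exact Or.inr ⟨h, hh, rfl⟩
  refine WaiterWins.mono_rounds hTcard ((hcyc.waiterWins_parallel_chords hrm (T := T)
    (fun p hp ↦ ?_) fun p hp p' hp' ↦ ?_).mono fun C' _ ⟨hC, hchord⟩ ↦ ⟨⟨?_, hK.trans hrm, ?_⟩,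
      hC hcyc.closing_mem, ?_⟩)
  · rcases hT p hp with ⟨j, hj, rfl⟩ | ⟨h, hh, rfl⟩
    · have : level (j + 1) ≤ level K := level_mono hj
      have := level_succ j
      have := Nat.two_pow_pos j
      exact ⟨(hS j hj).1, (hS j hj).2, by dsimp only; omega, by dsimp only; omega⟩
    · exact ⟨hS₀, hS₁, hH h hh⟩
  · have hlow : ∀ j, 1 < level j := fun j ↦ by have := two_pow_lt_level j; grind
    rcases hT p hp with ⟨j, -, rfl⟩ | ⟨h, -, rfl⟩ <;>
      rcases hT p' hp' with ⟨j', -, rfl⟩ | ⟨h', -, rfl⟩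
    exacts [level_add_one_ne_level j j', Nat.succ_ne_zero _, (hlow j').ne, Nat.one_ne_zero]
  · exact ⟨hcyc.path.injOn, fun i hi ↦ hC (hcyc.path.edge_mem i hi)⟩
  · exact fun j hj ↦ hchord _ (mem_union_left _ (mem_image.2 ⟨j, mem_range.2 hj, rfl⟩))
  · exact fun h hh ↦ hchord _ (mem_union_right _ (mem_image.2 ⟨h, hh, rfl⟩))

end Chords

section Pancyclic

variable {n q K r L : ℕ}

/-- Positions whose chords to later vertices must stay unclaimed while the Hamilton cycle is built:
the starting points of all chords offered afterwards, and the `48` positions reserved for absorbing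
the last four vertices. -/
def reservedPositions (K r : ℕ) : Finset ℕ :=
  {0, 1} ∪ (range K).image level ∪ (range K).image (level · + 1) ∪ Ico r (r + 48)

/-- The positions `h` such that Waiter offers `{s(c 0, c h), s(c 1, c (h + 1))}`. The interval
gives the lengths too short for a cycle through `level q`; together with the ladder, the other
positions give all remaining lengths up to `n - 2 ^ K`. -/
def closingPositions (q K r : ℕ) : Finset ℕ :=
  Icc 2 (2 * q + 1) ∪
    {level q, level K, min (level K + 2 ^ K) (r - 1), min (level K + 2 * 2 ^ K) (r - 1)}

lemma card_reservedPositions_le : #(reservedPositions K r) ≤ 2 * K + 50 := by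
  have hlevel : #((range K).image level) ≤ K := card_image_le.trans (card_range K).le
  have hlevel' : #((range K).image (level · + 1)) ≤ K := card_image_le.trans (card_range K).le
  have hIco : #(Ico r (r + 48)) = 48 := by simp
  grind [reservedPositions, card_union_le, card_le_two]

lemma lt_of_mem_reservedPositions (hr : level K ≤ r) {i : ℕ} (hi : i ∈ reservedPositions K r) :
    i < r + 48 := by
  have hlevel : ∀ j < K, level j + 2 ≤ r := fun j hj ↦ by
    have : level (j + 1) ≤ level K := level_mono hj
    grind [level_succ]
  grind [reservedPositions]

lemma card_closingPositions_le : #(closingPositions q K r) ≤ 2 * q + 4 := by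
  have hIcc : #(Icc 2 (2 * q + 1)) = 2 * q := by simp
  grind [closingPositions, card_union_le, card_le_four]

lemma bounds_of_mem_closingPositions (hqK : q ≤ K) (hr : level K + 1 ≤ r) {h : ℕ}
    (hh : h ∈ closingPositions q K r) : 2 ≤ h ∧ h + 1 ≤ r := by
  have hlevel := level_mono hqK
  have hq : 2 * q + 2 ≤ level q := by
    have := Nat.two_pow_pos q
    simp only [level]
    omega
  grind [closingPositions]

lemma exists_closing_of_le (hq : 2 * K < 2 ^ q) (hqK : q ≤ K) (hrn : n < r + 2 ^ K)
    (hn : n < 4 * 2 ^ K) (hL : 3 ≤ L) (hLn : L ≤ n) :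
    (∃ h ∈ closingPositions q K r, ∃ j ≤ K, ∃ N < 2 ^ j, level j ≤ h ∧ L + N = h + 1) ∨
      ∃ N < 2 ^ K, L + N = n := by
  have hlevel : ∀ j, level j = 2 ^ j + 2 * j + 1 := fun _ ↦ rfl
  have hmem : ∀ h, h ∈ closingPositions q K r ↔ h = level q ∨ h = level K ∨
      h = min (level K + 2 ^ K) (r - 1) ∨ h = min (level K + 2 * 2 ^ K) (r - 1) ∨
      2 ≤ h ∧ h ≤ 2 * q + 1 := by
    simp [closingPositions]
  by_cases h₀ : L ≤ 2 * q + 2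
  · exact Or.inl ⟨L - 1, by grind, 0, K.zero_le, 0, one_pos, by grind, by omega⟩
  by_cases h₁ : L ≤ level q + 1
  · exact Or.inl ⟨level q, by grind, q, hqK, level q + 1 - L, by grind, le_rfl, by omega⟩
  have hK : ∀ h ∈ closingPositions q K r, level K ≤ h → L ≤ h + 1 → h + 1 < L + 2 ^ K →
      ∃ h ∈ closingPositions q K r, ∃ j ≤ K, ∃ N < 2 ^ j, level j ≤ h ∧ L + N = h + 1 :=
    fun h hh hKh hLh hhL ↦ ⟨h, hh, K, le_rfl, h + 1 - L, by omega, hKh, by omega⟩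
  by_cases h₂ : L ≤ level K + 1
  · exact Or.inl (hK (level K) (by grind) le_rfl h₂ (by grind))
  by_cases h₃ : L ≤ min (level K + 2 ^ K) (r - 1) + 1
  · exact Or.inl (hK _ (by grind) (by grind) h₃ (by grind))
  by_cases h₄ : L ≤ min (level K + 2 * 2 ^ K) (r - 1) + 1
  · exact Or.inl (hK _ (by grind) (by grind) h₄ (by grind))
  · exact Or.inr ⟨n - L, by grind, by omega⟩

lemma inter_Kedges_mem_PCfamily {C : Finset (Sym2 (Fin n))}
    (h : ∀ L, 3 ≤ L → L ≤ n → ∃ (u : Fin n) (p : (⊤ : SimpleGraph (Fin n)).Walk u u),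
      p.IsCycle ∧ p.length = L ∧ ∀ e ∈ p.edges, e ∈ C) : C ∩ Kedges n ∈ PCfamily n := by
  refine ⟨inter_subset_right, fun L hL hLn ↦ ?_⟩
  obtain ⟨u, p, hp, hlen, hedges⟩ := h L hL hLn
  exact ⟨u, p, hp, hlen, fun e he ↦ mem_inter.2 ⟨hedges e he, mem_filter.2
    ⟨mem_univ e, SimpleGraph.not_isDiag_of_mem_edgeSet _ (p.edges_subset_edgeSet he)⟩⟩⟩

lemma waiterWins_PCfamily (hq : 2 * K < 2 ^ q) (hqK : q ≤ K) (hK : 4 * K + 102 ≤ 2 ^ K)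
    (hn : 2 * 2 ^ K ≤ n) (hn' : n < 4 * 2 ^ K) :
    WaiterWins (Kedges n) 1 (fun C _ ↦ ∃ A ∈ PCfamily n, A ⊆ C) (n + K + 2 * q + 9) ∅ ∅ := by
  obtain ⟨r, hr⟩ : ∃ r, r + 2 * K + 100 = n := ⟨n - (2 * K + 100), by omega⟩
  have hKr : level K + 1 ≤ r := by simp only [level]; omega
  have hrounds : n + 5 + (K + #(closingPositions q K r)) ≤ n + K + 2 * q + 9 := by
    have := card_closingPositions_le (q := q) (K := K) (r := r)
    omega
  have hcard := card_reservedPositions_le (K := K) (r := r)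
  have hcycle := waiterWins_hamilton_cycle (n := n) (S := reservedPositions K r) (r := r)
    (fun i ↦ lt_of_mem_reservedPositions (by omega)) subset_union_right
    (by simp [reservedPositions]) (by omega) (by omega)
  refine .mono_rounds hrounds (hcycle.bind fun C W ⟨c, hc⟩ ↦ (hc.waiterWins_ladder (by omega)
    (by simp [reservedPositions]) (by simp [reservedPositions])
    (fun j hj ↦ by grind [reservedPositions]) (by omega)
    fun h hh ↦ bounds_of_mem_closingPositions hqK hKr hh).mono fun C' _ ⟨hlad, hclosing, hH⟩ ↦
      ⟨_, inter_Kedges_mem_PCfamily fun L hL hLn ↦ ?_, inter_subset_left⟩)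
  obtain ⟨h, hh, j, hj, N, hN, hjh, hLN⟩ | ⟨N, hN, hLN⟩ :=
    exists_closing_of_le (r := r) hq hqK (by omega) hn' hL hLn
  · have := bounds_of_mem_closingPositions hqK hKr hh
    obtain hchord | hchord := hH h hh
    · exact hlad.exists_isCycle (a := 0) zero_le_one hj hN hjh (by omega) hchord hL hLN
    · exact hlad.exists_isCycle (a := 1) le_rfl hj hN hjh (by omega) hchord hL hLN
  · exact hlad.exists_isCycle (a := 0) (h := n - 1) zero_le_one le_rfl hN (by omega) le_rfl hclosing
      hL (by omega)

end Pancyclic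

section Asymptotics

variable {n : ℕ}

lemma four_mul_add_le_two_pow {K : ℕ} (hK : 8 ≤ K) : 4 * K + 102 ≤ 2 ^ K := by
  induction K, hK using Nat.le_induction with
  | base => norm_num
  | succ K hK ih => rw [pow_succ]; omega

lemma waiterWins_PCfamily_log (hn : 512 ≤ n) :
    WaiterWins (Kedges n) 1 (fun C _ ↦ ∃ A ∈ PCfamily n, A ⊆ C)
      (n + Nat.log 2 n + 2 * Nat.log 2 (Nat.log 2 n) + 12) ∅ ∅ := by
  obtain ⟨K, hK⟩ : ∃ K, Nat.log 2 n = K + 1 :=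
    Nat.exists_eq_add_one.2 (Nat.log_pos one_lt_two (by omega))
  have hK₈ : 8 ≤ K := by
    have := Nat.le_log_of_pow_le one_lt_two (show 2 ^ 9 ≤ n by omega)
    omega
  have hpow := four_mul_add_le_two_pow hK₈
  have hlog_lt : Nat.log 2 K < K - 1 := Nat.log_lt_of_lt_pow (by omega) (by
    have := pow_sub_one_mul (by omega : K ≠ 0) 2
    omega)
  have hlow := Nat.pow_log_le_self 2 (by omega : n ≠ 0)
  have hhigh := Nat.lt_pow_succ_log_self one_lt_two n
  have hK_lt := Nat.lt_pow_succ_log_self one_lt_two K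
  have hlog_le : Nat.log 2 K ≤ Nat.log 2 (K + 1) := Nat.log_mono_right K.le_succ
  rw [hK, pow_succ] at hlow hhigh
  rw [pow_succ] at hhigh
  rw [hK]
  exact .mono_rounds (by omega) (waiterWins_PCfamily (q := Nat.log 2 K + 2) (K := K)
    (by rw [pow_succ]; omega) (by omega) hpow (by omega) (by omega))

lemma tauWC_PCfamily_le (hn : 512 ≤ n) :
    tauWC (Kedges n) (PCfamily n) 1 ≤ n + Nat.log 2 n + 2 * Nat.log 2 (Nat.log 2 n) + 12 :=
  (waiterWins_PCfamily_log hn).tauWC_le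

lemma sub_two_le_two_pow_tauWC_PCfamily (hn : 512 ≤ n) :
    n ≤ tauWC (Kedges n) (PCfamily n) 1 + 1 ∧
      n - 2 ≤ 2 ^ (tauWC (Kedges n) (PCfamily n) 1 + 1 - n) := by
  obtain ⟨C, -, ⟨A, hA, hAC⟩, hcard⟩ :=
    (waiterWins_PCfamily_log hn).within_tauWC.exists_card_le
  rw [card_empty, zero_add] at hcard
  obtain ⟨hnC, hle⟩ := sub_two_le_two_pow_of_mem_PCfamily (by omega) hA hAC
  exact ⟨by omega, hle.trans (Nat.pow_le_pow_right two_pos (by omega))⟩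

lemma tauWC_PCfamily_le_logb (hn : 512 ≤ n) :
    (tauWC (Kedges n) (PCfamily n) 1 : ℝ) ≤
      n + Real.logb 2 n + 2 * Real.logb 2 (Real.logb 2 n) + 12 := by
  have hlog : (Nat.log 2 n : ℝ) ≤ Real.logb 2 n := Real.natLog_le_logb n 2
  have hpos : 0 < Nat.log 2 n := Nat.log_pos one_lt_two (by omega)
  have hloglog : (Nat.log 2 (Nat.log 2 n) : ℝ) ≤ Real.logb 2 (Real.logb 2 n) :=
    (Real.natLog_le_logb _ 2).trans
      (Real.logb_le_logb_of_le one_lt_two (by exact_mod_cast hpos) hlog)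
  have hτ : (tauWC (Kedges n) (PCfamily n) 1 : ℝ) ≤
      n + Nat.log 2 n + 2 * Nat.log 2 (Nat.log 2 n) + 12 := by
    exact_mod_cast tauWC_PCfamily_le hn
  linarith

lemma logb_le_tauWC_PCfamily (hn : 512 ≤ n) :
    n + Real.logb 2 n - 2 ≤ (tauWC (Kedges n) (PCfamily n) 1 : ℝ) := by
  obtain ⟨hnτ, hle⟩ := sub_two_le_two_pow_tauWC_PCfamily hn
  obtain ⟨d, hd⟩ := Nat.exists_eq_add_of_le hnτ
  rw [hd, Nat.add_sub_cancel_left] at hle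
  have hpow : (n : ℝ) ≤ 2 ^ (d + 1) := by
    have : n ≤ 2 ^ (d + 1) := by rw [pow_succ]; omega
    exact_mod_cast this
  have hlog : Real.logb 2 n ≤ d + 1 := by
    rw [Real.logb_le_iff_le_rpow one_lt_two (by positivity)]
    exact_mod_cast hpow
  have hτ : (tauWC (Kedges n) (PCfamily n) 1 : ℝ) + 1 = n + d := by exact_mod_cast hd
  linarith

lemma eventually_logb_logb_le {ε : ℝ} (hε : 0 < ε) : ∀ᶠ n : ℕ in Filter.atTop,
    2 * Real.logb 2 (Real.logb 2 n) + 12 ≤ ε * Real.logb 2 n ∧ 2 ≤ ε * Real.logb 2 n := by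
  have htendsto : Filter.Tendsto (fun n : ℕ ↦ Real.logb 2 n) Filter.atTop Filter.atTop :=
    (Real.tendsto_logb_atTop one_lt_two).comp tendsto_natCast_atTop_atTop
  have hlittle := (Real.isLittleO_logb_id_atTop (b := 2)).bound (show 0 < ε / 4 by positivity)
  filter_upwards [htendsto.eventually hlittle, htendsto.eventually_ge_atTop (24 / ε)] with n hlog hn
  have hconst : 24 ≤ ε * Real.logb 2 n := (div_le_iff₀' hε).1 hn
  have hnonneg : 0 ≤ Real.logb 2 n := (by positivity : 0 ≤ 24 / ε).trans hn
  rw [id, Real.norm_of_nonneg hnonneg] at hlog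
  have := (Real.le_norm_self _).trans hlog
  constructor <;> linarith

end Asymptotics

/-- In the unbiased Waiter-Client pancyclicity game on `K_n`,
`τ_WC(PC_n, 1) = n + (1 + o(1))·log₂ n`: for every `ε > 0` and every large enough `n`,
`n + (1−ε) log₂ n ≤ τ_WC(PC_n,1) ≤ n + (1+ε) log₂ n`. -/
theorem WC_pancyclicity_unbiased :
    ∀ ε : ℝ, 0 < ε → ∃ n₀ : ℕ, ∀ n : ℕ, n₀ ≤ n →
      (n : ℝ) + (1 - ε) * Real.logb 2 n ≤ (tauWC (Kedges n) (PCfamily n) 1 : ℝ) ∧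
      (tauWC (Kedges n) (PCfamily n) 1 : ℝ) ≤ (n : ℝ) + (1 + ε) * Real.logb 2 n := by
  intro ε hε
  obtain ⟨n₁, hn₁⟩ := Filter.eventually_atTop.1 (eventually_logb_logb_le hε)
  refine ⟨max 512 n₁, fun n hn ↦ ?_⟩
  have hlower := logb_le_tauWC_PCfamily (le_of_max_le_left hn)
  have hupper := tauWC_PCfamily_le_logb (le_of_max_le_left hn)
  obtain ⟨hloglog, htwo⟩ := hn₁ n (le_of_max_le_right hn)
  exact ⟨by linarith, by linarith⟩
end

section
/- For every large enough integer n, if T is a path on n vertices, then in the unbiased Waiter-Client game on the edge set of K_n whose winning sets are the copies of T in K_n, Waiter can win in exactly n − 1 rounds; that is, τ_WC(F_T, 1) = n − 1. -/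
/-!
A member of the winning family has `n - 1` edges and Client gains one edge per round, so Waiter
needs at least `n - 1` rounds. To meet this bound, Waiter has to make every edge Client claims
useful. The first two offers consist of two edges each, all four at a common vertex `x`, so Client
ends up with a path `p - x - q`. From then on, as long as some vertex `u` is off Client's path,
Waiter offers the two edges joining `u` to the ends of the path, and either choice extends the
path by one vertex. Both edges are free because every claimed edge at a vertex off the path leads
to an interior vertex of the path: this holds after two rounds since all claimed edges contain `x`,
and it persists since the old end to which `u` gets joined becomes an interior vertex while `u` is
now on the path.
-/

open Finset

/-- The family of edge sets of copies (in `K_n`) of the spanning subgraph of `K_n` with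
edge set `E`: images of `E` under permutations of the vertex set. -/
def copiesFamily (n : ℕ) (E : Set (Sym2 (Fin n))) : Set (Finset (Sym2 (Fin n))) :=
  {F | ∃ σ : Equiv.Perm (Fin n), (F : Set (Sym2 (Fin n))) = Sym2.map σ '' E}

/-- The edge set of the path `0 - 1 - ⋯ - (n−1)` on the vertex set `Fin n`. -/
def pathEdges (n : ℕ) : Set (Sym2 (Fin n)) :=
  {e | ∃ i j : Fin n, e = s(i, j) ∧ (j : ℕ) = (i : ℕ) + 1}

/-- Waiter's goal in the game with winning family `F`: Client owns every element of some member
of `F`. The set `_W` of Waiter's elements is there only to match the type of `WaiterWins`. -/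
abbrev ClientContains {X : Type*} (F : Set (Finset X)) (Cl _W : Finset X) : Prop :=
  ∃ A ∈ F, A ⊆ Cl

section Game

variable {X : Type*} [DecidableEq X] {board : Finset X} {win : Finset X → Finset X → Prop}

theorem WaiterWins.of_pair {t : ℕ} {Cl W : Finset X} {x y : X} (hxy : x ≠ y)
    (hx : x ∈ board \ (Cl ∪ W)) (hy : y ∈ board \ (Cl ∪ W))
    (hwinx : WaiterWins board 1 win t (insert x Cl) (insert y W))
    (hwiny : WaiterWins board 1 win t (insert y Cl) (insert x W)) :
    WaiterWins board 1 win (t + 1) Cl W := by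
  have hsub : {x, y} ⊆ board \ (Cl ∪ W) := insert_subset hx (singleton_subset_iff.2 hy)
  have hcard : #{x, y} = 2 := card_pair hxy
  refine Or.inr ⟨{x, y}, insert_nonempty _ _, hsub, ?_, ?_⟩
  · exact (min_eq_left (card_le_card hsub)).symm.trans (by rw [hcard])
  · intro z hz
    rw [mem_insert, mem_singleton] at hz
    rcases hz with rfl | rfl
    · simpa [hxy] using hwinx
    · simpa [pair_comm x, hxy.symm] using hwiny

theorem WaiterWins.exists_card_le_s6 {b t : ℕ} {Cl W : Finset X}
    (h : WaiterWins board b win t Cl W) : ∃ Cl' W', win Cl' W' ∧ #Cl' ≤ #Cl + t := by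
  induction t generalizing Cl W with
  | zero => exact ⟨Cl, W, h, le_rfl⟩
  | succ t ih =>
    rcases h with hwin | ⟨O, ⟨x, hx⟩, -, -, hnext⟩
    · exact ⟨Cl, W, hwin, Nat.le_add_right _ _⟩
    · obtain ⟨Cl', W', hwin, hcard⟩ := ih (hnext x hx)
      have := card_insert_le x Cl
      exact ⟨Cl', W', hwin, by omega⟩

theorem tauWC_eq_of_forall_le_card {F : Set (Finset X)} {b k : ℕ} (hF : ∀ A ∈ F, k ≤ #A)
    (hwin : WaiterWins board b (ClientContains F) k ∅ ∅) : tauWC board F b = k := by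
  refine le_antisymm (Nat.sInf_le hwin) (le_csInf ⟨k, hwin⟩ fun t ht => ?_)
  obtain ⟨Cl, -, ⟨A, hA, hACl⟩, hcard⟩ := WaiterWins.exists_card_le_s6 ht
  calc k ≤ #A := hF A hA
    _ ≤ #Cl := card_le_card hACl
    _ ≤ t := by simpa using hcard

end Game

section Copies

theorem card_of_mem_copiesFamily {n : ℕ} {E : Set (Sym2 (Fin n))} {A : Finset (Sym2 (Fin n))}
    (hA : A ∈ copiesFamily n E) : #A = E.ncard := by
  obtain ⟨σ, hσ⟩ := hA
  rw [← Set.ncard_coe_finset, hσ, Set.ncard_image_of_injective _ (Sym2.map.injective σ.injective)]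

theorem pathEdges_succ (k : ℕ) :
    pathEdges (k + 1) = Set.range fun i : Fin k => s(i.castSucc, i.succ) := by
  ext e
  constructor
  · rintro ⟨i, j, rfl, hij⟩
    exact ⟨⟨i, by omega⟩, by simp [Fin.ext_iff, hij]⟩
  · rintro ⟨i, rfl⟩
    exact ⟨i.castSucc, i.succ, rfl, by simp⟩

theorem ncard_pathEdges (n : ℕ) : (pathEdges n).ncard = n - 1 := by
  cases n with
  | zero => simp [Set.eq_empty_of_isEmpty]
  | succ k =>
    have hinj : Function.Injective fun i : Fin k => s(i.castSucc, i.succ) := by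
      intro i j hij
      simp only [Sym2.eq_iff, Fin.ext_iff, Fin.val_castSucc, Fin.val_succ] at hij
      omega
    rw [pathEdges_succ, ← Set.image_univ, Set.ncard_image_of_injective _ hinj]
    simp

theorem exists_mem_copiesFamily_pathEdges_subset {n : ℕ} {Cl : Finset (Sym2 (Fin n))}
    {l : List (Fin n)} (hnodup : l.Nodup) (hlength : l.length = n)
    (hchain : l.IsChain fun x y => s(x, y) ∈ Cl) :
    ∃ A ∈ copiesFamily n (pathEdges n), A ⊆ Cl := by
  let f : Fin n → Fin n := fun i => l.get (i.cast hlength.symm)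
  have hf : Function.Injective f :=
    (List.nodup_iff_injective_get.1 hnodup).comp (Fin.cast_injective _)
  let σ : Equiv.Perm (Fin n) := Equiv.ofBijective f (Finite.injective_iff_bijective.1 hf)
  refine ⟨(Set.toFinite (Sym2.map σ '' pathEdges n)).toFinset, ⟨σ, by simp⟩, ?_⟩
  rw [Set.Finite.toFinset_subset]
  rintro _ ⟨_, ⟨i, j, rfl, hij⟩, rfl⟩
  have hedge := hchain.getElem i (by omega)
  simpa [σ, f, hij] using hedge

end Copies

/-- The invariant of Waiter's strategy: Client's edges `Cl` contain the path `a, m, b` (with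
interior `m`), and every claimed edge at a vertex `u` off the path leads to the interior, so that
`u` can still be joined to both ends. -/
structure IsExtendablePath {V : Type*} [DecidableEq V] (Cl W : Finset (Sym2 V))
    (a : V) (m : List V) (b : V) : Prop where
  nodup : (a :: (m ++ [b])).Nodup
  isChain : (a :: (m ++ [b])).IsChain fun x y => s(x, y) ∈ Cl
  mem_of_claimed : ∀ ⦃u⦄, u ∉ a :: (m ++ [b]) → ∀ ⦃v⦄, s(u, v) ∈ Cl ∪ W → v ∈ m

namespace IsExtendablePath

variable {V : Type*} [DecidableEq V] {Cl W : Finset (Sym2 V)} {a b u : V} {m : List V}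

theorem of_star {x p q : V} (hp : x ≠ p) (hq : x ≠ q) (hpq : p ≠ q) (hW : ∀ e ∈ W, x ∈ e) :
    IsExtendablePath {s(x, p), s(x, q)} W p [x] q where
  nodup := by simp [hp.symm, hq, hpq]
  isChain := by simp
  mem_of_claimed u hu v huv := by
    have hx : x ∈ s(u, v) := by
      rw [mem_union, mem_insert, mem_singleton] at huv
      rcases huv with (h | h) | h
      · exact h ▸ Sym2.mem_mk_left x p
      · exact h ▸ Sym2.mem_mk_left x q
      · exact hW _ h
    have hxu : x ≠ u := by rintro rfl; simp at hu
    simpa [hxu, eq_comm] using hx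

theorem reverse (h : IsExtendablePath Cl W a m b) : IsExtendablePath Cl W b m.reverse a := by
  have hrev : b :: (m.reverse ++ [a]) = (a :: (m ++ [b])).reverse := by simp
  refine ⟨hrev ▸ List.nodup_reverse.2 h.nodup, ?_, fun u hu v huv => ?_⟩
  · rw [hrev, List.isChain_reverse]
    exact h.isChain.imp fun x y hxy => by rwa [Sym2.eq_swap]
  · rw [hrev, List.mem_reverse] at hu
    exact List.mem_reverse.2 (h.mem_of_claimed hu huv)

theorem ne (h : IsExtendablePath Cl W a m b) : a ≠ b := fun hab =>
  (List.nodup_cons.1 h.nodup).1 (by simp [hab])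

theorem notMem_claimed (h : IsExtendablePath Cl W a m b) (hu : u ∉ a :: (m ++ [b])) :
    s(u, a) ∉ Cl ∪ W := fun hua =>
  (List.nodup_cons.1 h.nodup).1 (List.mem_append_left _ (h.mem_of_claimed hu hua))

theorem cons (h : IsExtendablePath Cl W a m b) (hu : u ∉ a :: (m ++ [b])) :
    IsExtendablePath (insert s(u, a) Cl) (insert s(u, b) W) u (a :: m) b where
  nodup := List.nodup_cons.2 ⟨hu, h.nodup⟩
  isChain := List.IsChain.cons_cons (mem_insert_self _ _)
    (h.isChain.imp fun _ _ => mem_insert_of_mem)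
  mem_of_claimed u' hu' v huv := by
    obtain ⟨hne, hu''⟩ := not_or.1 (mt List.mem_cons.2 hu')
    have hedge {w : V} (hw : w ∈ a :: (m ++ [b])) : s(u', v) ≠ s(u, w) := by
      rintro heq
      rcases Sym2.eq_iff.1 heq with ⟨rfl, -⟩ | ⟨rfl, -⟩
      exacts [hne rfl, hu'' hw]
    have hua : s(u', v) ≠ s(u, a) := hedge (by simp)
    have hub : s(u', v) ≠ s(u, b) := hedge (by simp)
    exact List.mem_cons_of_mem _ (h.mem_of_claimed hu'' (by simpa [hua, hub] using huv))

end IsExtendablePath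

section PathGame

variable {n : ℕ}

theorem WaiterWins.of_incident_pair {win : Finset (Sym2 (Fin n)) → Finset (Sym2 (Fin n)) → Prop}
    {t : ℕ} {Cl W : Finset (Sym2 (Fin n))} {u p q : Fin n} (hup : u ≠ p) (huq : u ≠ q)
    (hpq : p ≠ q) (hp : s(u, p) ∉ Cl ∪ W) (hq : s(u, q) ∉ Cl ∪ W)
    (hwinp : WaiterWins (Kedges n) 1 win t (insert s(u, p) Cl) (insert s(u, q) W))
    (hwinq : WaiterWins (Kedges n) 1 win t (insert s(u, q) Cl) (insert s(u, p) W)) :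
    WaiterWins (Kedges n) 1 win (t + 1) Cl W :=
  .of_pair (mt Sym2.congr_right.1 hpq) (mem_sdiff.2 ⟨by simpa [Kedges] using hup, hp⟩)
    (mem_sdiff.2 ⟨by simpa [Kedges] using huq, hq⟩) hwinp hwinq

theorem IsExtendablePath.waiterWins {t : ℕ} {Cl W : Finset (Sym2 (Fin n))} {a b : Fin n}
    {m : List (Fin n)} (h : IsExtendablePath Cl W a m b)
    (hlength : (a :: (m ++ [b])).length + t = n) :
    WaiterWins (Kedges n) 1 (ClientContains (copiesFamily n (pathEdges n))) t Cl W := by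
  induction t generalizing Cl W a b m with
  | zero => exact exists_mem_copiesFamily_pathEdges_subset h.nodup hlength h.isChain
  | succ t ih =>
    obtain ⟨u, hu⟩ : ∃ u, u ∉ a :: (m ++ [b]) :=
      Cardinal.exists_notMem_of_length_lt _ (by rw [Cardinal.mk_fin, Nat.cast_lt]; omega)
    have hu' : u ∉ b :: (m.reverse ++ [a]) := by grind
    refine .of_incident_pair (u := u) (p := a) (q := b) (by grind) (by grind) h.ne
      (h.notMem_claimed hu) (h.reverse.notMem_claimed hu') (ih (h.cons hu) ?_)
      (ih (h.reverse.cons hu') ?_)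
    all_goals
      simp only [List.length_cons, List.length_append, List.length_reverse] at hlength ⊢
      omega

theorem waiterWins_pathEdges_of_star {t : ℕ} (ht : t + 3 = n) {W : Finset (Sym2 (Fin n))}
    {x p q q' : Fin n} (hnodup : [x, p, q, q'].Nodup) (hW : ∀ e ∈ W, x ∈ e)
    (hq : s(x, q) ∉ W) (hq' : s(x, q') ∉ W) :
    WaiterWins (Kedges n) 1 (ClientContains (copiesFamily n (pathEdges n))) (t + 1)
      {s(x, p)} W := by
  obtain ⟨⟨hxp, hxq, hxq'⟩, ⟨hpq, hpq'⟩, hqq'⟩ :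
      (x ≠ p ∧ x ≠ q ∧ x ≠ q') ∧ (p ≠ q ∧ p ≠ q') ∧ q ≠ q' := by simpa using hnodup
  have hfree {r : Fin n} (hpr : p ≠ r) (hr : s(x, r) ∉ W) : s(x, r) ∉ {s(x, p)} ∪ W :=
    notMem_union.2 ⟨notMem_singleton.2 (mt Sym2.congr_right.1 hpr.symm), hr⟩
  have hwin {r r' : Fin n} (hxr : x ≠ r) (hpr : p ≠ r) : WaiterWins (Kedges n) 1
      (ClientContains (copiesFamily n (pathEdges n))) t {s(x, r), s(x, p)} (insert s(x, r') W) :=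
    (IsExtendablePath.of_star hxr hxp hpr.symm (by simpa using hW)).waiterWins
      (by simpa [add_comm] using ht)
  exact .of_incident_pair hxq hxq' hqq' (hfree hpq hq) (hfree hpq' hq') (hwin hxq hpq)
    (hwin hxq' hpq')

theorem waiterWins_pathEdges (hn : 5 ≤ n) :
    WaiterWins (Kedges n) 1 (ClientContains (copiesFamily n (pathEdges n))) (n - 1) ∅ ∅ := by
  let v : Fin 5 → Fin n := Fin.castLE hn
  have hv : Function.Injective v := Fin.castLE_injective hn
  have hfree {i j : Fin 5} (hij : i ≠ j) : s(v 0, v i) ∉ ({s(v 0, v j)} : Finset _) :=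
    notMem_singleton.2 (mt Sym2.congr_right.1 (hv.ne hij))
  have hwin {i j : Fin 5} (hi : [0, i, 3, 4].Nodup) (hj : [0, j, 3, 4].Nodup) :
      WaiterWins (Kedges n) 1 (ClientContains (copiesFamily n (pathEdges n))) (n - 3 + 1)
        {s(v 0, v i)} {s(v 0, v j)} :=
    waiterWins_pathEdges_of_star (by omega) (hi.map hv) (by simp) (hfree (by grind))
      (hfree (by grind))
  rw [show n - 1 = n - 3 + 1 + 1 by omega]
  exact .of_incident_pair (u := v 0) (p := v 1) (q := v 2) (hv.ne (by decide)) (hv.ne (by decide))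
    (hv.ne (by decide)) (notMem_empty _) (notMem_empty _) (hwin (by decide) (by decide))
    (hwin (by decide) (by decide))

end PathGame

theorem WC_hamilton_path_general {n : ℕ} (hn : 5 ≤ n) :
    tauWC (Kedges n) (copiesFamily n (pathEdges n)) 1 = n - 1 :=
  tauWC_eq_of_forall_le_card
    (fun _ hA => ((card_of_mem_copiesFamily hA).trans (ncard_pathEdges n)).ge)
    (waiterWins_pathEdges hn)

/-- For every large enough `n`, if `T` is a path on `n` vertices, then in the unbiased
Waiter-Client game on `K_n` whose winning sets are the copies of `T`, Waiter wins in exactly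
`n − 1` rounds: `τ_WC(F_T, 1) = n − 1`. -/
theorem WC_hamilton_path :
    ∃ n₀ : ℕ, ∀ n : ℕ, n₀ ≤ n →
      tauWC (Kedges n) (copiesFamily n (pathEdges n)) 1 = n - 1 := by
  exact ⟨5, fun _ => WC_hamilton_path_general⟩
end

section
/- For every ε > 0 and every large enough integer n with 3 dividing n, in the unbiased Waiter-Client game on the edge set of K_n whose winning sets are the triangle factors of K_n, Waiter has a strategy to win within (7/6 + ε)·n rounds; that is, τ_WC(F_{n,K₃-fac}, 1) ≤ (7/6)·n + o(n). -/
open Finset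

/-- The family of edge sets of `H`-factors of `K_n`, where `H` is the graph on `Fin k` with
edge set `E`: vertex-disjoint unions of copies of `H` covering all `n` vertices
(each of the `n/k` copies is given by an embedding `g i`, and the copies partition `Fin n`). -/
def factorFamily (k n : ℕ) (E : Set (Sym2 (Fin k))) : Set (Finset (Sym2 (Fin n))) :=
  {F | ∃ g : Fin (n / k) → Fin k → Fin n,
    (∀ v : Fin n, ∃! p : Fin (n / k) × Fin k, g p.1 p.2 = v) ∧
    (F : Set (Sym2 (Fin n))) = ⋃ i : Fin (n / k), Sym2.map (g i) '' E}

/-!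
A `K₅` of Client to which no vertex sends two edges of Waiter is an absorber: for a vertex `v`
outside of it, two rounds make `v` adjacent to two of its vertices, and then the six vertices split
into two triangles. Waiter first forces `s` disjoint absorbers, where `s = δn` for a small constant
`δ`; each takes a constant number of rounds, so that this costs only `O(s)` rounds. As long as at
least `s` vertices are uncovered, the linearly many claimed edges are too few to meet every set of
twelve uncovered vertices, and on twelve vertices without claimed edges Waiter forces two disjoint
triangles in seven rounds; this is the rate of `7/6` rounds per vertex. The last `s` vertices are
absorbed one by one, in two rounds each.
-/

section Game

variable {X : Type*}

/-- A position of a Waiter-Client game: the elements owned by Client and those owned by Waiter. -/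
structure Position (X : Type*) where
  client : Finset X
  waiter : Finset X

variable [DecidableEq X]

namespace Position

/-- The elements of a position that belong to one of the two players. -/
def claimed (p : Position X) : Finset X := p.client ∪ p.waiter

/-- The position after a round in which Waiter offers `O` and Client claims `x`. -/
def play (p : Position X) (O : Finset X) (x : X) : Position X :=
  ⟨insert x p.client, p.waiter ∪ O.erase x⟩

/-- `p.Extends B m q`: the position `q` arises from `p` by distributing at most `m` elements, all
of them from `B`. -/
structure Extends (p : Position X) (B : Finset X) (m : ℕ) (q : Position X) : Prop where
  client_subset : p.client ⊆ q.client
  waiter_subset : p.waiter ⊆ q.waiter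
  client_subset_union : q.client ⊆ p.client ∪ B
  waiter_subset_union : q.waiter ⊆ p.waiter ∪ B
  card_claimed_le : #q.claimed ≤ #p.claimed + m

theorem mem_claimed {p : Position X} {x : X} : x ∈ p.claimed ↔ x ∈ p.client ∨ x ∈ p.waiter :=
  mem_union

theorem Extends.rfl {p : Position X} {B : Finset X} {m : ℕ} : p.Extends B m p :=
  ⟨Subset.rfl, Subset.rfl, subset_union_left, subset_union_left, Nat.le_add_right _ _⟩

theorem Extends.trans {p q r : Position X} {B : Finset X} {m k : ℕ} (hpq : p.Extends B m q)
    (hqr : q.Extends B k r) : p.Extends B (m + k) r where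
  client_subset := hpq.client_subset.trans hqr.client_subset
  waiter_subset := hpq.waiter_subset.trans hqr.waiter_subset
  client_subset_union :=
    hqr.client_subset_union.trans (union_subset hpq.client_subset_union subset_union_right)
  waiter_subset_union :=
    hqr.waiter_subset_union.trans (union_subset hpq.waiter_subset_union subset_union_right)
  card_claimed_le := by have := hpq.card_claimed_le; have := hqr.card_claimed_le; omega

theorem Extends.claimed_subset_union {p q : Position X} {B : Finset X} {m : ℕ}
    (h : p.Extends B m q) : q.claimed ⊆ p.claimed ∪ B := by
  have := h.client_subset_union
  have := h.waiter_subset_union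
  grind [claimed]

theorem claimed_play_subset {p : Position X} {O : Finset X} {x : X} (hx : x ∈ O) :
    (p.play O x).claimed ⊆ p.claimed ∪ O := by
  grind [claimed, play]

theorem extends_play {p : Position X} {B O : Finset X} (hO : O ⊆ B) {x : X} (hx : x ∈ O) :
    p.Extends B #O (p.play O x) where
  client_subset := subset_insert _ _
  waiter_subset := subset_union_left
  client_subset_union := by grind [play]
  waiter_subset_union := by grind [play]
  card_claimed_le := (card_le_card (claimed_play_subset hx)).trans (card_union_le _ _)

end Position

/-- `Forces b B P t p`: from the position `p`, Waiter can reach within `t` rounds a position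
satisfying `P`, each time offering exactly `b + 1` unclaimed elements of `B`. In contrast to
`WaiterWins`, incomplete last offers are not allowed; this makes the notion monotone in `B`, so that
strategies played on parts of a board can be combined. -/
def Forces (b : ℕ) (B : Finset X) (P : Position X → Prop) : ℕ → Position X → Prop
  | 0, p => P p
  | t + 1, p => P p ∨ ∃ O ⊆ B, Disjoint O p.claimed ∧ #O = b + 1 ∧
      ∀ x ∈ O, Forces b B P t (p.play O x)

namespace Forces

variable {b t s : ℕ} {B B' : Finset X} {P Q : Position X → Prop} {p : Position X}

theorem of_pred (h : P p) : Forces b B P t p := by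
  cases t with
  | zero => exact h
  | succ t => exact Or.inl h

theorem mono_rounds (h : Forces b B P t p) (hts : t ≤ s) : Forces b B P s p := by
  induction t generalizing p s with
  | zero => exact of_pred h
  | succ t ih =>
    obtain ⟨s, rfl⟩ := Nat.exists_eq_add_of_le' ((Nat.succ_pos t).trans_le hts)
    rcases h with h | ⟨O, hOB, hO, hcard, hplay⟩
    · exact of_pred h
    · exact Or.inr ⟨O, hOB, hO, hcard, fun x hx => ih (hplay x hx) (Nat.le_of_succ_le_succ hts)⟩

theorem bind (h : Forces b B P t p) (hPQ : ∀ q, P q → Forces b B Q s q) :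
    Forces b B Q (s + t) p := by
  induction t generalizing p with
  | zero => exact hPQ p h
  | succ t ih =>
    rcases h with h | ⟨O, hOB, hO, hcard, hplay⟩
    · exact (hPQ p h).mono_rounds (Nat.le_add_right s (t + 1))
    · exact Or.inr ⟨O, hOB, hO, hcard, fun x hx => ih (hplay x hx)⟩

theorem mono (h : Forces b B P t p) (hPQ : ∀ q, P q → Q q) : Forces b B Q t p := by
  simpa only [zero_add] using h.bind (s := 0) hPQ

theorem mono_board (h : Forces b B P t p) (hB : B ⊆ B') : Forces b B' P t p := by
  induction t generalizing p with
  | zero => exact h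
  | succ t ih =>
    exact h.imp_right fun ⟨O, hOB, hO, hcard, hplay⟩ =>
      ⟨O, hOB.trans hB, hO, hcard, fun x hx => ih (hplay x hx)⟩

theorem and_extends (h : Forces b B P t p) :
    Forces b B (fun q => P q ∧ p.Extends B ((b + 1) * t) q) t p := by
  induction t generalizing p with
  | zero => exact ⟨h, .rfl⟩
  | succ t ih =>
    rcases h with h | ⟨O, hOB, hO, hcard, hplay⟩
    · exact Or.inl ⟨h, .rfl⟩
    · refine Or.inr ⟨O, hOB, hO, hcard, fun x hx => (ih (hplay x hx)).mono fun q hq => ⟨hq.1, ?_⟩⟩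
      rw [mul_add_one, add_comm, ← hcard]
      simpa only [hcard] using (Position.extends_play hOB hx).trans hq.2

theorem waiterWins (h : Forces b B P t p) :
    WaiterWins B b (fun C W => P ⟨C, W⟩) t p.client p.waiter := by
  induction t generalizing p with
  | zero => exact h
  | succ t ih =>
    rcases h with h | ⟨O, hOB, hO, hcard, hplay⟩
    · exact Or.inl h
    · have hfree : O ⊆ B \ (p.client ∪ p.waiter) := subset_sdiff.mpr ⟨hOB, hO⟩
      refine Or.inr ⟨O, card_pos.mp (by omega), hfree, ?_, fun x hx => ih (hplay x hx)⟩
      have := card_le_card hfree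
      omega

/-- Elements of `O` may already belong to Client; in that case no round is needed. -/
theorem exists_mem_client {O : Finset X} (hO : Disjoint O p.waiter) (hcard : #O = b + 1) :
    Forces b O (fun q => ∃ x ∈ O, x ∈ q.client) 1 p := by
  by_cases hC : ∃ x ∈ O, x ∈ p.client
  · exact of_pred hC
  · push Not at hC
    refine Or.inr ⟨O, Subset.rfl, ?_, hcard, fun x hx => ⟨x, hx, mem_insert_self x _⟩⟩
    exact disjoint_union_right.mpr ⟨disjoint_left.mpr hC, hO⟩

theorem split {R : Finset X} {m : ℕ} (hR : Disjoint R p.claimed) (hcard : #R = (b + 1) * m) :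
    Forces b R (fun q => ∃ N ⊆ R, #N = m ∧ q = ⟨p.client ∪ N, p.waiter ∪ (R \ N)⟩) m p := by
  induction m generalizing R p with
  | zero =>
    obtain rfl : R = ∅ := by simpa using hcard
    exact ⟨∅, Subset.rfl, rfl, by simp⟩
  | succ m ih =>
    obtain ⟨O, hOR, hO⟩ := exists_subset_card_eq (show b + 1 ≤ #R by rw [hcard]; nlinarith)
    refine Or.inr ⟨O, hOR, hR.mono_left hOR, hO, fun x hx => ?_⟩
    have hR' : Disjoint (R \ O) (p.play O x).claimed := by
      have := Position.claimed_play_subset (p := p) hx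
      rw [disjoint_left] at hR ⊢
      grind
    have hcard' : #(R \ O) = (b + 1) * m := by
      rw [card_sdiff_of_subset hOR, hcard, hO, mul_add_one, Nat.add_sub_cancel]
    refine ((ih hR' hcard').mono_board sdiff_subset).mono ?_
    rintro q ⟨N, hN, hNm, rfl⟩
    have hxN : x ∉ N := fun h => (mem_sdiff.mp (hN h)).2 hx
    refine ⟨insert x N, insert_subset (hOR hx) (hN.trans sdiff_subset), ?_, ?_⟩
    · rw [card_insert_of_notMem hxN, hNm]
    · simp only [Position.play, Position.mk.injEq]
      grind

end Forces

end Game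

section Edges

variable {V : Type*}

/-- The graph formed by the edges of Client. -/
def Position.clientGraph (p : Position (Sym2 V)) : SimpleGraph V :=
  SimpleGraph.fromEdgeSet (p.client : Set (Sym2 V))

theorem Position.clientGraph_adj {p : Position (Sym2 V)} {u v : V} :
    p.clientGraph.Adj u v ↔ s(u, v) ∈ p.client ∧ u ≠ v := by
  simp only [clientGraph, SimpleGraph.fromEdgeSet_adj, mem_coe]

variable [DecidableEq V]

/-- The pairs of distinct vertices of `A`. -/
def edgesOn (A : Finset V) : Finset (Sym2 V) := {e ∈ A.sym2 | ¬ e.IsDiag}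

/-- The edges joining `a` to the vertices of `R`. -/
def starEdges (a : V) (R : Finset V) : Finset (Sym2 V) := R.image fun x => s(a, x)

theorem mem_edgesOn {A : Finset V} {u v : V} : s(u, v) ∈ edgesOn A ↔ u ∈ A ∧ v ∈ A ∧ u ≠ v := by
  simp only [edgesOn, mem_filter, mk_mem_sym2_iff, Sym2.mk_isDiag_iff, and_assoc, ne_eq]

theorem edgesOn_mono {A A' : Finset V} (h : A ⊆ A') : edgesOn A ⊆ edgesOn A' :=
  filter_subset_filter _ (sym2_mono h)

theorem disjoint_edgesOn {A A' : Finset V} (h : Disjoint A A') :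
    Disjoint (edgesOn A) (edgesOn A') := by
  refine disjoint_left.mpr fun e => ?_
  induction e with | h u v =>
  exact fun he he' => disjoint_left.mp h (mem_edgesOn.mp he).1 (mem_edgesOn.mp he').1

theorem card_edgesOn (A : Finset V) : #(edgesOn A) = (#A).choose 2 := by
  have himage : edgesOn A = A.offDiag.image Sym2.mk.uncurry := by
    ext e
    induction e with | h u v =>
    rw [mem_edgesOn]
    simp only [mem_image, mem_offDiag, Prod.exists, Function.uncurry_apply_pair]
    grind [Sym2.eq_iff]
  rw [himage, Sym2.card_image_offDiag]

theorem mem_starEdges {a u v : V} {R : Finset V} :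
    s(u, v) ∈ starEdges a R ↔ u = a ∧ v ∈ R ∨ v = a ∧ u ∈ R := by
  simp only [starEdges, mem_image, Sym2.eq_iff]
  grind

theorem starEdges_subset_edgesOn {a : V} {R A : Finset V} (ha : a ∉ R) (hA : insert a R ⊆ A) :
    starEdges a R ⊆ edgesOn A := by
  refine image_subset_iff.mpr fun x hx => mem_edgesOn.mpr ⟨?_, ?_, ?_⟩ <;> grind

theorem Position.Extends.clientGraph_le {p q : Position (Sym2 V)} {B : Finset (Sym2 V)} {m : ℕ}
    (h : p.Extends B m q) : p.clientGraph ≤ q.clientGraph :=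
  SimpleGraph.fromEdgeSet_mono (coe_subset.mpr h.client_subset)

theorem Forces.split_star {b m : ℕ} {p : Position (Sym2 V)} {a : V} {R : Finset V}
    (hR : Disjoint (starEdges a R) p.claimed) (hcard : #R = (b + 1) * m) :
    Forces b (starEdges a R) (fun q => ∃ N ⊆ R, #N = m ∧
      q = ⟨p.client ∪ starEdges a N, p.waiter ∪ starEdges a (R \ N)⟩) m p := by
  have hinj : Function.Injective fun x => s(a, x) := fun _ _ => Sym2.congr_right.mp
  refine (Forces.split hR ((card_image_of_injective R hinj).trans hcard)).mono ?_
  rintro q ⟨E, hE, hEm, rfl⟩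
  obtain ⟨N, hN, rfl⟩ := subset_image_iff.mp hE
  refine ⟨N, hN, (card_image_of_injective N hinj).symm.trans hEm, ?_⟩
  simp only [starEdges, image_sdiff _ _ hinj]

end Edges

section Cliques

variable {V : Type*} [DecidableEq V]

/-- A stage in the construction of a clique `T` of Client: `A` is the set of candidates for the
remaining vertices of the clique, and no vertex sends two edges of Waiter to `T`. -/
structure CliqueStage (p : Position (Sym2 V)) (T A : Finset V) : Prop where
  disjoint : Disjoint T A
  mem_client : ∀ u ∈ T, ∀ v ∈ T ∪ A, u ≠ v → s(u, v) ∈ p.client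
  notMem_client : ∀ v ∉ T, ∀ a ∈ A, s(v, a) ∉ p.client
  notMem_waiter : ∀ v, ∀ a ∈ A, s(v, a) ∉ p.waiter
  waiter_unique : ∀ v, ∀ u ∈ T, ∀ w ∈ T, s(u, v) ∈ p.waiter → s(w, v) ∈ p.waiter → u = w

theorem CliqueStage.grow {p : Position (Sym2 V)} {T A N : Finset V} {a : V}
    (h : CliqueStage p T A) (ha : a ∈ A) (hN : N ⊆ A.erase a) :
    CliqueStage ⟨p.client ∪ starEdges a N, p.waiter ∪ starEdges a (A.erase a \ N)⟩
      (insert a T) N := by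
  obtain ⟨hTA, hclient, hnclient, hnwaiter, hunique⟩ := h
  rw [disjoint_left] at hTA
  have hNA : ∀ x ∈ N, x ∈ A ∧ x ≠ a := fun x hx => by grind
  refine ⟨?_, ?_, ?_, ?_, ?_⟩
  · rw [disjoint_left]
    grind
  · intro u hu v hv huv
    simp only [mem_union, mem_starEdges, mem_insert] at hu hv ⊢
    have := hclient u
    have := hclient v
    have := Sym2.eq_swap (a := u) (b := v)
    grind
  · intro v hv x hx
    simp only [mem_union, mem_starEdges]
    grind
  · intro v x hx
    simp only [mem_union, mem_starEdges]
    grind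
  · intro v u hu w hw huW hwW
    simp only [mem_union, mem_starEdges, mem_insert, mem_sdiff, mem_erase] at hu hw huW hwW
    have := hunique v
    have := hnwaiter u v
    have := hnwaiter w v
    have := hnwaiter v a ha
    have := Sym2.eq_swap (a := a) (b := v)
    grind

/-- The number of candidates from which Waiter can force a clique of a given size: while the
edges from one of them to the others are distributed, one in `b + 1` of the others survives. -/
def reservoir (b : ℕ) : ℕ → ℕ
  | 0 => 0
  | j + 1 => (b + 1) * reservoir b j + 1

theorem CliqueStage.forces_clique {b j : ℕ} {p : Position (Sym2 V)} {T A : Finset V}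
    (h : CliqueStage p T A) (hA : #A = reservoir b j) :
    Forces b (edgesOn A) (fun q => ∃ K ⊆ A, #K = j ∧ CliqueStage q (T ∪ K) ∅)
      (∑ i ∈ range j, reservoir b i) p := by
  induction j generalizing p T A with
  | zero =>
    obtain rfl : A = ∅ := card_eq_zero.mp hA
    exact Forces.of_pred ⟨∅, Subset.rfl, card_empty, by rwa [union_empty]⟩
  | succ j ih =>
    obtain ⟨a, ha⟩ := card_pos.mp (show 0 < #A by rw [hA]; exact Nat.succ_pos _)
    have haT : a ∉ T := disjoint_right.mp h.disjoint ha
    have hcard : #(A.erase a) = (b + 1) * reservoir b j := by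
      rw [card_erase_of_mem ha, hA, reservoir, Nat.add_sub_cancel]
    have hfree : Disjoint (starEdges a (A.erase a)) p.claimed := by
      refine disjoint_left.mpr fun e he => ?_
      obtain ⟨x, hx, rfl⟩ := mem_image.mp he
      have hxA := mem_of_mem_erase hx
      exact fun hp => (Position.mem_claimed.mp hp).elim (h.notMem_client a haT x hxA)
        (h.notMem_waiter a x hxA)
    have hstar : starEdges a (A.erase a) ⊆ edgesOn A :=
      starEdges_subset_edgesOn (notMem_erase a A) (insert_erase ha).subset
    rw [sum_range_succ]
    refine ((Forces.split_star hfree hcard).mono_board hstar).bind ?_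
    rintro q ⟨N, hN, hNcard, rfl⟩
    have hNA : N ⊆ A := hN.trans (erase_subset a A)
    refine ((ih (h.grow ha hN) hNcard).mono_board (edgesOn_mono hNA)).mono ?_
    rintro q ⟨K, hKN, hK, hq⟩
    have haK : a ∉ K := fun haK => notMem_erase a A (hN (hKN haK))
    refine ⟨insert a K, insert_subset ha (hKN.trans hNA), ?_, ?_⟩
    · rw [card_insert_of_notMem haK, hK]
    · rwa [union_insert, ← insert_union]

end Cliques

section SparseSets

variable {V : Type*}

theorem exists_subset_card_eq_not_subset {𝒟 : Finset (Finset V)} {P : Finset V} {r k : ℕ}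
    (h𝒟 : ∀ e ∈ 𝒟, #e = r) (hrk : r ≤ k) (hkP : k ≤ #P)
    (hcount : #𝒟 * k.choose r < (#P).choose r) :
    ∃ A ⊆ P, #A = k ∧ ∀ e ∈ 𝒟, ¬ e ⊆ A := by
  classical
  by_contra! hP
  have hcover : P.powersetCard k ⊆ 𝒟.biUnion fun e => {A ∈ P.powersetCard k | e ⊆ A} := by
    intro A hA
    obtain ⟨hAP, hAk⟩ := mem_powersetCard.mp hA
    obtain ⟨e, he, heA⟩ := hP A hAP hAk
    exact mem_biUnion.mpr ⟨e, he, mem_filter.mpr ⟨hA, heA⟩⟩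
  have hfibre : ∀ e ∈ 𝒟, #{A ∈ P.powersetCard k | e ⊆ A} ≤ (#P - r).choose (k - r) := by
    intro e he
    by_cases heP : e ⊆ P
    · rw [card_filter_powersetCard_subset e P k heP ((h𝒟 e he).trans_le hrk), h𝒟 e he]
    · rw [filter_false_of_mem fun A hA heA => heP (heA.trans (mem_powersetCard.mp hA).1)]
      exact Nat.zero_le _
  have hcard : (#P).choose k ≤ #𝒟 * (#P - r).choose (k - r) := by
    rw [← card_powersetCard]
    exact (card_le_card hcover).trans (card_biUnion_le_card_mul _ _ _ hfibre)
  have hpos : 0 < (#P - r).choose (k - r) := Nat.choose_pos (Nat.sub_le_sub_right hkP r)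
  refine (Nat.mul_lt_mul_of_pos_right hcount hpos).not_ge ?_
  calc (#P).choose r * (#P - r).choose (k - r)
      = (#P).choose k * k.choose r := (Nat.choose_mul hrk).symm
    _ ≤ #𝒟 * (#P - r).choose (k - r) * k.choose r := Nat.mul_le_mul_right _ hcard
    _ = #𝒟 * k.choose r * (#P - r).choose (k - r) := mul_right_comm _ _ _

theorem exists_subset_card_eq_disjoint_edgesOn [DecidableEq V] {D : Finset (Sym2 V)}
    {P : Finset V} {k : ℕ} (hk : 2 ≤ k) (hkP : k ≤ #P) (hcount : #D * k.choose 2 < (#P).choose 2) :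
    ∃ A ⊆ P, #A = k ∧ Disjoint (edgesOn A) D := by
  have hcard : ∀ e ∈ {e ∈ D | ¬ e.IsDiag}.image Sym2.toFinset, #e = 2 := by
    refine forall_mem_image.mpr fun e he => ?_
    exact Sym2.card_toFinset_of_not_isDiag e (mem_filter.mp he).2
  have hle : #({e ∈ D | ¬ e.IsDiag}.image Sym2.toFinset) ≤ #D :=
    card_image_le.trans (card_filter_le _ _)
  obtain ⟨A, hAP, hAk, hA⟩ := exists_subset_card_eq_not_subset hcard hk hkP
    ((Nat.mul_le_mul_right _ hle).trans_lt hcount)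
  refine ⟨A, hAP, hAk, disjoint_left.mpr fun e heA heD => ?_⟩
  obtain ⟨heA, hdiag⟩ := mem_filter.mp heA
  refine hA _ (mem_image_of_mem _ (mem_filter.mpr ⟨heD, hdiag⟩)) fun v hv => ?_
  exact mem_sym2_iff.mp heA v (Sym2.mem_toFinset.mp hv)

end SparseSets

section Tilings

/-- `Tiled Φ S`: the set `S` splits into disjoint nonempty sets, called tiles, which satisfy `Φ`. -/
def Tiled {V : Type*} [DecidableEq V] (Φ : Finset V → Prop) (S : Finset V) : Prop :=
  ∃ Q : Finpartition S, ∀ T ∈ Q.parts, Φ T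

namespace Tiled

variable {V : Type*} [DecidableEq V] {Φ Ψ : Finset V → Prop} {S T : Finset V}

protected theorem empty : Tiled Φ ∅ :=
  ⟨Finpartition.empty _, fun _ hT => absurd hT (notMem_empty _)⟩

theorem union (h : Tiled Φ S) (hΦ : Φ T) (hT : T.Nonempty) (hST : Disjoint S T) :
    Tiled Φ (S ∪ T) := by
  obtain ⟨Q, hQ⟩ := h
  refine ⟨Q.extend hT.ne_empty hST rfl, ?_⟩
  simpa only [Finpartition.extend_parts, forall_mem_insert] using ⟨hΦ, hQ⟩

theorem mono (h : Tiled Φ S) (hΦΨ : ∀ T ⊆ S, Φ T → Ψ T) : Tiled Ψ S := by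
  obtain ⟨Q, hQ⟩ := h
  exact ⟨Q, fun T hT => hΦΨ T (Q.le hT) (hQ T hT)⟩

theorem exists_tile (h : Tiled Φ S) (hS : S.Nonempty) :
    ∃ T ⊆ S, Φ T ∧ Tiled Φ (S \ T) := by
  obtain ⟨Q, hQ⟩ := h
  obtain ⟨T, hT⟩ := Q.parts_nonempty hS.ne_empty
  refine ⟨T, Q.le hT, hQ T hT, Q.avoid T, fun T' hT' => ?_⟩
  obtain ⟨R, hR, hRT, rfl⟩ := Q.mem_avoid.mp hT'
  have hdisj : Disjoint R T := Q.disjoint hR hT fun h => hRT h.le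
  rw [hdisj.sdiff_eq_left]
  exact hQ R hR

theorem exists_equiv {k n : ℕ} (hk : 0 < k) {Φ : Finset (Fin n) → Prop} (h : Tiled Φ univ)
    (hΦ : ∀ T, Φ T → #T = k) :
    ∃ g : Fin (n / k) × Fin k ≃ Fin n, ∀ i, Φ (univ.image fun j => g (i, j)) := by
  obtain ⟨Q, hQ⟩ := h
  have hn : #Q.parts * k = n := by
    rw [← smul_eq_mul, ← sum_const, ← sum_congr rfl fun T hT => hΦ T (hQ T hT),
      Q.sum_card_parts, card_univ, Fintype.card_fin]
  have hparts : #Q.parts = n / k := (Nat.div_eq_of_eq_mul_left hk hn.symm).symm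
  let tile := (Q.parts.equivFinOfCardEq hparts).symm
  have hmem : ∀ i, (tile i : Finset (Fin n)) ∈ Q.parts := fun i => (tile i).2
  let vertex : ∀ i, Fin k ≃ (tile i : Finset (Fin n)) := fun i =>
    ((tile i : Finset (Fin n)).equivFinOfCardEq (hΦ _ (hQ _ (hmem i)))).symm
  let f : Fin (n / k) × Fin k → Fin n := fun p => vertex p.1 p.2
  have hf : Function.Surjective f := by
    intro v
    obtain ⟨T, ⟨hT, hvT⟩, -⟩ := Q.existsUnique_mem (mem_univ v)
    obtain ⟨i, hi⟩ := tile.surjective ⟨T, hT⟩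
    obtain ⟨j, hj⟩ := (vertex i).surjective ⟨v, by rwa [hi]⟩
    exact ⟨(i, j), congrArg Subtype.val hj⟩
  have hbij : Function.Bijective f :=
    (Fintype.bijective_iff_surjective_and_card f).mpr ⟨hf, by simp [← hparts, hn]⟩
  refine ⟨Equiv.ofBijective f hbij, fun i => ?_⟩
  have himage : univ.image (fun j => f (i, j)) = (tile i : Finset (Fin n)) := by
    ext v
    refine ⟨fun hv => ?_, fun hv => ?_⟩
    · obtain ⟨j, -, rfl⟩ := mem_image.mp hv
      exact (vertex i j).2
    · obtain ⟨j, hj⟩ := (vertex i).surjective ⟨v, hv⟩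
      exact mem_image.mpr ⟨j, mem_univ j, congrArg Subtype.val hj⟩
  exact himage ▸ hQ _ (hmem i)

theorem exists_mem_factorFamily {k n : ℕ} (hk : 0 < k) {C : Finset (Sym2 (Fin n))}
    (h : Tiled ((SimpleGraph.fromEdgeSet (C : Set (Sym2 (Fin n)))).IsNClique k) univ) :
    ∃ F ∈ factorFamily k n (⊤ : SimpleGraph (Fin k)).edgeSet, F ⊆ C := by
  obtain ⟨g, hg⟩ := h.exists_equiv hk fun T hT => hT.card_eq
  let F : Set (Sym2 (Fin n)) :=
    ⋃ i, Sym2.map (fun j => g (i, j)) '' (⊤ : SimpleGraph (Fin k)).edgeSet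
  have hF : F ⊆ C := by
    refine Set.iUnion_subset fun i => Set.image_subset_iff.mpr fun e he => ?_
    induction e with | h u v =>
    have hne : g (i, u) ≠ g (i, v) := fun huv =>
      ((SimpleGraph.mem_edgeSet _).mp he).ne (congrArg Prod.snd (g.injective huv))
    exact ((SimpleGraph.fromEdgeSet_adj _).mp ((hg i).isClique (by simp) (by simp) hne)).1
  refine ⟨F.toFinite.toFinset, ⟨fun i j => g (i, j), g.bijective.existsUnique, ?_⟩, ?_⟩
  · exact Set.Finite.coe_toFinset _
  · exact Set.Finite.toFinset_subset.mpr hF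

end Tiled

end Tilings

section Absorbers

variable {V : Type*} [DecidableEq V] {p q : Position (Sym2 V)}

/-- An absorber is a `5`-clique of Client to which no vertex sends two edges of Waiter. For each
vertex `v` outside of it, two rounds suffice to make two vertices `x`, `y` of the clique adjacent to
`v`; then the clique and `v` together split into two triangles, one of them `{x, y, v}`. -/
structure IsAbsorber (p : Position (Sym2 V)) (K : Finset V) : Prop where
  isNClique : p.clientGraph.IsNClique 5 K
  waiter_unique : ∀ v, ∀ u ∈ K, ∀ w ∈ K, s(u, v) ∈ p.waiter → s(w, v) ∈ p.waiter → u = w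

theorem CliqueStage.isAbsorber {K : Finset V} (h : CliqueStage p K ∅) (hK : #K = 5) :
    IsAbsorber p K where
  isNClique :=
    ⟨fun _ hu v hv huv => Position.clientGraph_adj.mpr
      ⟨h.mem_client _ hu v (mem_union_left _ hv) huv, huv⟩, hK⟩
  waiter_unique := h.waiter_unique

theorem IsAbsorber.of_extends {A K : Finset V} {m : ℕ} (h : IsAbsorber p K)
    (hpq : p.Extends (edgesOn A) m q) (hKA : Disjoint K A) : IsAbsorber q K where
  isNClique := h.isNClique.mono hpq.clientGraph_le
  waiter_unique := by
    have hold : ∀ v, ∀ u ∈ K, s(u, v) ∈ q.waiter → s(u, v) ∈ p.waiter := fun v u hu huv =>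
      (mem_union.mp (hpq.waiter_subset_union huv)).resolve_right fun h =>
        disjoint_left.mp hKA hu (mem_edgesOn.mp h).1
    exact fun v u hu w hw huv hwv =>
      h.waiter_unique v u hu w hw (hold v u hu huv) (hold v w hw hwv)

theorem Tiled.isAbsorber_of_extends {A U : Finset V} {m : ℕ} (h : Tiled (IsAbsorber p) U)
    (hpq : p.Extends (edgesOn A) m q) (hUA : Disjoint U A) : Tiled (IsAbsorber q) U :=
  h.mono fun _ hK hKp => hKp.of_extends hpq (hUA.mono_left hK)

theorem forces_isAbsorber {A : Finset V} (hA : #A = 31)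
    (hfree : ∀ v, ∀ x ∈ A, s(v, x) ∉ p.claimed) :
    Forces 1 (edgesOn A) (fun q => ∃ K ⊆ A, #K = 5 ∧ IsAbsorber q K) 26 p := by
  have hstage : CliqueStage p ∅ A :=
    { disjoint := disjoint_empty_left A
      mem_client := fun _ hu => absurd hu (notMem_empty _)
      notMem_client := fun v _ x hx h => hfree v x hx (mem_union_left _ h)
      notMem_waiter := fun v x hx h => hfree v x hx (mem_union_right _ h)
      waiter_unique := fun _ _ hu => absurd hu (notMem_empty _) }
  refine (hstage.forces_clique (b := 1) (j := 5) hA).mono ?_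
  rintro q ⟨K, hKA, hK, hq⟩
  rw [empty_union] at hq
  exact ⟨K, hKA, hK, hq.isAbsorber hK⟩

theorem forces_tiled_isAbsorber {U F : Finset V} {f : ℕ} (hU : Tiled (IsAbsorber p) U)
    (hUF : Disjoint U F) (hF : 31 * f ≤ #F) (hfree : ∀ v, ∀ x ∈ F, s(v, x) ∉ p.claimed) :
    Forces 1 (edgesOn F) (fun q => ∃ K ⊆ F, #K = 5 * f ∧ Tiled (IsAbsorber q) (U ∪ K))
      (26 * f) p := by
  induction f generalizing p U F with
  | zero => exact Forces.of_pred ⟨∅, empty_subset F, rfl, by rwa [union_empty]⟩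
  | succ f ih =>
    obtain ⟨A, hAF, hA⟩ := exists_subset_card_eq (show 31 ≤ #F by omega)
    refine ((forces_isAbsorber hA fun v x hx => hfree v x (hAF hx)).and_extends.mono_board
      (edgesOn_mono hAF)).bind ?_
    rintro q ⟨⟨K, hKA, hK, hKq⟩, hpq⟩
    have hUK : Disjoint U K := hUF.mono_right (hKA.trans hAF)
    have hUKq : Tiled (IsAbsorber q) (U ∪ K) :=
      (hU.isAbsorber_of_extends hpq (hUF.mono_right hAF)).union hKq (card_pos.mp (by omega)) hUK
    have hdisj : Disjoint (U ∪ K) (F \ A) :=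
      disjoint_union_left.mpr ⟨hUF.mono_right sdiff_subset, disjoint_sdiff.mono_left hKA⟩
    have hcard : 31 * f ≤ #(F \ A) := by
      rw [card_sdiff_of_subset hAF]
      omega
    have hfreeq : ∀ v, ∀ x ∈ F \ A, s(v, x) ∉ q.claimed := by
      intro v x hx hvx
      obtain ⟨hxF, hxA⟩ := mem_sdiff.mp hx
      exact (mem_union.mp (hpq.claimed_subset_union hvx)).elim (hfree v x hxF)
        fun h => hxA (mem_edgesOn.mp h).2.1
    refine ((ih hUKq hdisj hcard hfreeq).mono_board (edgesOn_mono sdiff_subset)).mono ?_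
    rintro r ⟨K', hK'F, hK', hr⟩
    have hKK' : Disjoint K K' := hdisj.mono subset_union_right hK'F
    refine ⟨K ∪ K', union_subset (hKA.trans hAF) (hK'F.trans sdiff_subset), ?_, ?_⟩
    · rw [card_union_of_disjoint hKK', hK, hK']
      ring
    · rwa [← union_assoc]

end Absorbers

section Gadget

variable {V : Type*} [DecidableEq V] {p q : Position (Sym2 V)}

theorem Forces.exists_adj {b : ℕ} {a : V} {R : Finset V} (ha : a ∉ R)
    (hR : ∀ x ∈ R, s(a, x) ∉ p.waiter) (hcard : #R = b + 1) :
    Forces b (starEdges a R) (fun q => ∃ x ∈ R, q.clientGraph.Adj a x) 1 p := by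
  have hinj : Function.Injective fun x => s(a, x) := fun _ _ => Sym2.congr_right.mp
  have hfree : Disjoint (starEdges a R) p.waiter := disjoint_left.mpr (forall_mem_image.mpr hR)
  refine (exists_mem_client hfree ((card_image_of_injective R hinj).trans hcard)).mono ?_
  rintro q ⟨e, he, heq⟩
  obtain ⟨x, hx, rfl⟩ := mem_image.mp he
  exact ⟨x, hx, Position.clientGraph_adj.mpr ⟨heq, fun hax => ha (hax ▸ hx)⟩⟩

theorem forces_triangle_of_star {b : ℕ} {a : V} {N Z : Finset V} (hN : #N = b + 1)
    (hZ : #Z = b + 1) (hdisj : Disjoint (insert a N) Z) (hadj : ∀ x ∈ N, p.clientGraph.Adj a x)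
    (hfree : ∀ x ∈ insert a N, ∀ z ∈ Z, s(x, z) ∉ p.waiter) :
    Forces b (edgesOn (insert a N ∪ Z))
      (fun q => ∃ T ⊆ insert a N ∪ Z, q.clientGraph.IsNClique 3 T) 2 p := by
  obtain ⟨haZ, hNZ⟩ := disjoint_insert_left.mp hdisj
  have hstar : starEdges a Z ⊆ edgesOn (insert a N ∪ Z) :=
    starEdges_subset_edgesOn haZ (insert_subset (by simp) subset_union_right)
  refine ((Forces.exists_adj haZ (hfree a (mem_insert_self a N)) hZ).and_extends.mono_board
    hstar).bind (s := 1) ?_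
  rintro q ⟨⟨z, hz, haz⟩, hpq⟩
  have hzN : z ∉ N := disjoint_right.mp hNZ hz
  have hfreeq : ∀ x ∈ N, s(z, x) ∉ q.waiter := by
    intro x hx hzx
    have hxa : x ≠ a := (hadj x hx).ne'
    rcases mem_union.mp (hpq.waiter_subset_union hzx) with h | h
    · exact hfree x (mem_insert_of_mem hx) z hz (Sym2.eq_swap ▸ h)
    · exact (mem_starEdges.mp h).elim (fun h => haz.ne' h.1) fun h => hxa h.1
  have hstar' : starEdges z N ⊆ edgesOn (insert a N ∪ Z) :=
    starEdges_subset_edgesOn hzN (insert_subset (by simp [hz])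
      ((subset_insert a N).trans subset_union_left))
  refine ((Forces.exists_adj hzN hfreeq hN).and_extends.mono_board hstar').mono ?_
  rintro r ⟨⟨x, hx, hzx⟩, hqr⟩
  have hax := hadj x hx
  refine ⟨{a, x, z}, by grind, SimpleGraph.is3Clique_triple_iff.mpr ⟨?_, ?_, hzx.symm⟩⟩
  · exact hqr.clientGraph_le (hpq.clientGraph_le hax)
  · exact hqr.clientGraph_le haz

/-- A cherry is a path of Client with centre `a` and the two endpoints `N` whose closing edge does
not belong to Waiter. -/
structure IsCherry (p : Position (Sym2 V)) (a : V) (N : Finset V) : Prop where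
  card_eq : #N = 2
  adj : ∀ x ∈ N, p.clientGraph.Adj a x
  disjoint_waiter : Disjoint (edgesOn N) p.waiter

theorem IsCherry.of_extends {a : V} {A N : Finset V} {m : ℕ} (h : IsCherry p a N)
    (hpq : p.Extends (edgesOn A) m q) (hNA : Disjoint N A) : IsCherry q a N where
  card_eq := h.card_eq
  adj x hx := hpq.clientGraph_le (h.adj x hx)
  disjoint_waiter :=
    (disjoint_union_right.mpr ⟨h.disjoint_waiter, disjoint_edgesOn hNA⟩).mono_right
      hpq.waiter_subset_union

theorem IsCherry.isNClique {a : V} {N : Finset V} {m : ℕ} {B : Finset (Sym2 V)}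
    (h : IsCherry p a N) (hpq : p.Extends B m q) {e : Sym2 V} (heN : e ∈ edgesOn N)
    (he : e ∈ q.client) : q.clientGraph.IsNClique 3 (insert a N) := by
  induction e with | h x y =>
  obtain ⟨hx, hy, hxy⟩ := mem_edgesOn.mp heN
  obtain rfl : {x, y} = N := eq_of_subset_of_card_le (by simp [insert_subset_iff, hx, hy])
    (by rw [h.card_eq, card_pair hxy])
  exact SimpleGraph.is3Clique_triple_iff.mpr ⟨hpq.clientGraph_le (h.adj x hx),
    hpq.clientGraph_le (h.adj y hy), Position.clientGraph_adj.mpr ⟨he, hxy⟩⟩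

theorem forces_isCherry {B : Finset V} (hB : #B = 5) (hfree : Disjoint (edgesOn B) p.claimed) :
    Forces 1 (edgesOn B) (fun q => ∃ a N, insert a N ⊆ B ∧ IsCherry q a N) 2 p := by
  obtain ⟨a, ha⟩ := card_pos.mp (show 0 < #B by omega)
  have hstar : starEdges a (B.erase a) ⊆ edgesOn B :=
    starEdges_subset_edgesOn (notMem_erase a B) (insert_erase ha).subset
  have hcard : #(B.erase a) = (1 + 1) * 2 := by rw [card_erase_of_mem ha, hB]
  refine ((Forces.split_star (hfree.mono_left hstar) hcard).mono_board hstar).mono ?_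
  rintro q ⟨N, hN, hNcard, rfl⟩
  have hNB : N ⊆ B := hN.trans (erase_subset a B)
  refine ⟨a, N, insert_subset ha hNB, hNcard, fun x hx => ?_, ?_⟩
  · have hax : a ≠ x := (ne_of_mem_erase (hN hx)).symm
    exact Position.clientGraph_adj.mpr
      ⟨mem_union_right _ (mem_starEdges.mpr (Or.inl ⟨rfl, hx⟩)), hax⟩
  · refine disjoint_union_right.mpr ⟨(hfree.mono (edgesOn_mono hNB) subset_union_right), ?_⟩
    refine disjoint_left.mpr fun e => ?_
    induction e with | h x y =>
    simp only [mem_edgesOn, mem_starEdges]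
    grind

/-- Client owns two vertex-disjoint triangles inside `A`. -/
def HasDisjointTriangles (p : Position (Sym2 V)) (A : Finset V) : Prop :=
  ∃ T₁ ⊆ A, ∃ T₂ ⊆ A, Disjoint T₁ T₂ ∧ p.clientGraph.IsNClique 3 T₁ ∧ p.clientGraph.IsNClique 3 T₂

theorem forces_hasDisjointTriangles_of_isNClique {A T N Z : Finset V} {a : V}
    (hTA : T ⊆ A) (hT : p.clientGraph.IsNClique 3 T) (hTN : Disjoint T (insert a N ∪ Z))
    (hA : insert a N ∪ Z ⊆ A) (hN : #N = 2) (hZ : #Z = 2) (hdisj : Disjoint (insert a N) Z)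
    (hadj : ∀ x ∈ N, p.clientGraph.Adj a x)
    (hfree : ∀ x ∈ insert a N, ∀ z ∈ Z, s(x, z) ∉ p.waiter) :
    Forces 1 (edgesOn A) (HasDisjointTriangles · A) 2 p := by
  refine ((forces_triangle_of_star hN hZ hdisj hadj hfree).and_extends.mono_board
    (edgesOn_mono hA)).mono ?_
  rintro q ⟨⟨T', hT', hT'q⟩, hpq⟩
  exact ⟨T, hTA, T', hT'.trans hA, hTN.mono_right hT', hT.mono hpq.clientGraph_le, hT'q⟩

/-- Waiter offers the closing edges of two cherries together: whichever of them Client claims, the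
other cherry can still be completed to a triangle by means of two further vertices. -/
theorem forces_hasDisjointTriangles_of_isCherry {a u : V} {A N M Z : Finset V}
    (hN : IsCherry p a N) (hM : IsCherry p u M) (hNM : Disjoint (insert a N) (insert u M))
    (hA : insert a N ∪ insert u M ∪ Z ⊆ A) (hZ : #Z = 2)
    (hdisj : Disjoint (insert a N ∪ insert u M) Z)
    (hfree : ∀ x ∈ insert a N ∪ insert u M, ∀ z ∈ Z, s(x, z) ∉ p.waiter) :
    Forces 1 (edgesOn A) (HasDisjointTriangles · A) 3 p := by
  obtain ⟨hNZ, hMZ⟩ := disjoint_union_left.mp hdisj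
  obtain ⟨hNMA, hZA⟩ := union_subset_iff.mp hA
  obtain ⟨hNA, hMA⟩ := union_subset_iff.mp hNMA
  have hsubN : N ⊆ insert a N := subset_insert a N
  have hsubM : M ⊆ insert u M := subset_insert u M
  have hcard : #(edgesOn N ∪ edgesOn M) = 1 + 1 := by
    rw [card_union_of_disjoint (disjoint_edgesOn (hNM.mono hsubN hsubM)), card_edgesOn,
      card_edgesOn, hN.card_eq, hM.card_eq, Nat.choose_self]
  have hwaiter : Disjoint (edgesOn N ∪ edgesOn M) p.waiter :=
    disjoint_union_left.mpr ⟨hN.disjoint_waiter, hM.disjoint_waiter⟩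
  have hboard : edgesOn N ∪ edgesOn M ⊆ edgesOn A :=
    union_subset (edgesOn_mono (hsubN.trans hNA)) (edgesOn_mono (hsubM.trans hMA))
  refine ((Forces.exists_mem_client hwaiter hcard).and_extends.mono_board hboard).bind (s := 2) ?_
  rintro q ⟨⟨e, he, heq⟩, hpq⟩
  have hfreeq : ∀ x ∈ insert a N ∪ insert u M, ∀ z ∈ Z, s(x, z) ∉ q.waiter := by
    intro x hx z hz hxz
    have hzN : z ∉ N := fun h => disjoint_right.mp hNZ hz (hsubN h)
    have hzM : z ∉ M := fun h => disjoint_right.mp hMZ hz (hsubM h)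
    have := hpq.waiter_subset_union hxz
    simp only [mem_union, mem_edgesOn, hfree x hx z hz, hzN, hzM, false_and, and_false, or_self]
      at this
  rcases mem_union.mp he with he | he
  · exact forces_hasDisjointTriangles_of_isNClique hNA (hN.isNClique hpq he heq)
      (disjoint_union_right.mpr ⟨hNM, hNZ⟩) (union_subset hMA hZA) hM.card_eq hZ hMZ
      (fun x hx => hpq.clientGraph_le (hM.adj x hx))
      fun x hx => hfreeq x (mem_union_right _ hx)
  · exact forces_hasDisjointTriangles_of_isNClique hMA (hM.isNClique hpq he heq)
      (disjoint_union_right.mpr ⟨hNM.symm, hMZ⟩) (union_subset hNA hZA) hN.card_eq hZ hNZ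
      (fun x hx => hpq.clientGraph_le (hN.adj x hx))
      fun x hx => hfreeq x (mem_union_left _ hx)

theorem forces_hasDisjointTriangles {A : Finset V} (hA : #A = 12)
    (hfree : Disjoint (edgesOn A) p.claimed) :
    Forces 1 (edgesOn A) (HasDisjointTriangles · A) 7 p := by
  obtain ⟨B, hBA, hB⟩ := exists_subset_card_eq (show 5 ≤ #A by omega)
  have hAB : #(A \ B) = 7 := by rw [card_sdiff_of_subset hBA, hA, hB]
  obtain ⟨B', hB'A, hB'⟩ := exists_subset_card_eq (show 5 ≤ #(A \ B) by omega)
  have hZ : #((A \ B) \ B') = 2 := by rw [card_sdiff_of_subset hB'A, hAB, hB']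
  have hBB' : Disjoint B B' := disjoint_sdiff.mono_right hB'A
  have hB'A' : B' ⊆ A := hB'A.trans sdiff_subset
  refine ((forces_isCherry hB (hfree.mono_left (edgesOn_mono hBA))).and_extends.mono_board
    (edgesOn_mono hBA)).bind (s := 5) ?_
  rintro q ⟨⟨a, N, hNB, hN⟩, hpq⟩
  have hfreeq : Disjoint (edgesOn B') q.claimed :=
    (disjoint_union_right.mpr ⟨hfree.mono_left (edgesOn_mono hB'A'),
      disjoint_edgesOn hBB'.symm⟩).mono_right hpq.claimed_subset_union
  refine ((forces_isCherry hB' hfreeq).and_extends.mono_board (edgesOn_mono hB'A')).bind (s := 3) ?_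
  rintro r ⟨⟨u, M, hMB', hM⟩, hqr⟩
  have hNM : insert a N ∪ insert u M ⊆ B ∪ B' := union_subset_union hNB hMB'
  refine forces_hasDisjointTriangles_of_isCherry
    (hN.of_extends hqr (hBB'.mono_left ((subset_insert a N).trans hNB))) hM (hBB'.mono hNB hMB')
    (union_subset (hNM.trans (union_subset hBA hB'A')) (sdiff_subset.trans sdiff_subset)) hZ ?_ ?_
  · exact (by grind [disjoint_left] : Disjoint (B ∪ B') ((A \ B) \ B')).mono_left hNM
  · intro x hx z hz hxz
    have hxA : x ∈ A := union_subset hBA hB'A' (hNM hx)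
    have hr := hqr.waiter_subset_union hxz
    have hq := fun h : s(x, z) ∈ q.waiter => hpq.waiter_subset_union h
    have hp : s(x, z) ∈ edgesOn A → s(x, z) ∉ p.waiter := fun h h' =>
      disjoint_left.mp hfree h (mem_union_right _ h')
    simp only [mem_union, mem_edgesOn] at hr hq hp
    grind

end Gadget

section Absorption

variable {V : Type*} [DecidableEq V] {p : Position (Sym2 V)} {K : Finset V} {v : V}

theorem IsAbsorber.four_le_card (h : IsAbsorber p K) (v : V) :
    4 ≤ #{x ∈ K | s(v, x) ∉ p.waiter} := by
  have hone : #{x ∈ K | s(v, x) ∈ p.waiter} ≤ 1 := by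
    refine card_le_one.mpr fun u hu w hw => ?_
    obtain ⟨huK, hu⟩ := mem_filter.mp hu
    obtain ⟨hwK, hw⟩ := mem_filter.mp hw
    exact h.waiter_unique v u huK w hwK (Sym2.eq_swap ▸ hu) (Sym2.eq_swap ▸ hw)
  have hsum := card_filter_add_card_filter_not (s := K) fun x => s(v, x) ∈ p.waiter
  have := h.isNClique.card_eq
  omega

theorem IsAbsorber.forces_adj_adj (h : IsAbsorber p K) (hv : v ∉ K) :
    Forces 1 (edgesOn (insert v K)) (fun q => ∃ x ∈ K, ∃ y ∈ K, x ≠ y ∧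
      q.clientGraph.Adj v x ∧ q.clientGraph.Adj v y) 2 p := by
  obtain ⟨R, hR, hRcard⟩ := exists_subset_card_eq (h.four_le_card v)
  have hRK : R ⊆ K := hR.trans (filter_subset _ _)
  obtain ⟨R₁, hR₁, hR₁card⟩ := exists_subset_card_eq (show 2 ≤ #R by omega)
  have hR₂card : #(R \ R₁) = 2 := by rw [card_sdiff_of_subset hR₁, hRcard, hR₁card]
  have hvR : v ∉ R := fun hvR => hv (hRK hvR)
  have hfree : ∀ x ∈ R, s(v, x) ∉ p.waiter := fun x hx => (mem_filter.mp (hR hx)).2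
  have hboard : ∀ S ⊆ R, starEdges v S ⊆ edgesOn (insert v K) := fun S hS =>
    starEdges_subset_edgesOn (fun hvS => hvR (hS hvS)) (insert_subset_insert v (hS.trans hRK))
  refine ((Forces.exists_adj (fun hvR₁ => hvR (hR₁ hvR₁)) (fun x hx => hfree x (hR₁ hx))
    hR₁card).and_extends.mono_board (hboard _ hR₁)).bind (s := 1) ?_
  rintro q ⟨⟨x, hx, hvx⟩, hpq⟩
  have hfreeq : ∀ y ∈ R \ R₁, s(v, y) ∉ q.waiter := by
    intro y hy hvy
    obtain ⟨hyR, hyR₁⟩ := mem_sdiff.mp hy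
    refine (mem_union.mp (hpq.waiter_subset_union hvy)).elim (hfree y hyR) fun h => ?_
    exact (mem_starEdges.mp h).elim (fun h => hyR₁ h.2) fun h => hvR (h.1 ▸ hyR)
  refine ((Forces.exists_adj (fun hvR₂ => hvR (sdiff_subset hvR₂)) hfreeq
    hR₂card).and_extends.mono_board (hboard _ sdiff_subset)).mono ?_
  rintro r ⟨⟨y, hy, hvy⟩, hqr⟩
  refine ⟨x, hRK (hR₁ hx), y, hRK (sdiff_subset hy), ?_, hqr.clientGraph_le hvx, hvy⟩
  rintro rfl
  exact (mem_sdiff.mp hy).2 hx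

theorem Tiled.union_absorber {G : SimpleGraph V} {S : Finset V} {x y : V}
    (hS : Tiled (G.IsNClique 3) S) (hK : G.IsNClique 5 K) (hSK : Disjoint S (insert v K))
    (hv : v ∉ K) (hx : x ∈ K) (hy : y ∈ K) (hxy : x ≠ y) (hvx : G.Adj v x) (hvy : G.Adj v y) :
    Tiled (G.IsNClique 3) (S ∪ insert v K) := by
  have htriangle : G.IsNClique 3 {v, x, y} :=
    SimpleGraph.is3Clique_triple_iff.mpr ⟨hvx, hvy, hK.isClique hx hy hxy⟩
  have hxyK : {x, y} ⊆ K := insert_subset hx (singleton_subset_iff.mpr hy)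
  have hrest : G.IsNClique 3 (K \ {x, y}) := by
    refine ⟨hK.isClique.subset (coe_subset.mpr sdiff_subset), ?_⟩
    rw [card_sdiff_of_subset hxyK, hK.card_eq, card_pair hxy]
  have hunion : S ∪ insert v K = S ∪ {v, x, y} ∪ K \ {x, y} := by grind
  rw [disjoint_left] at hSK
  rw [hunion]
  refine (hS.union htriangle (insert_nonempty _ _) ?_).union hrest
    (card_pos.mp (by rw [hrest.card_eq]; norm_num)) ?_ <;>
  · rw [disjoint_left]
    grind

end Absorption

section Stages

variable {V : Type*} [DecidableEq V] [Fintype V] {p q : Position (Sym2 V)} {P U : Finset V}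

/-- A stage of Waiter's strategy: the vertices of `P` are not yet covered by Client's triangles,
those of `U` are covered by absorbers, and all the others are covered by triangles. -/
structure Stage (p : Position (Sym2 V)) (P U : Finset V) : Prop where
  disjoint : Disjoint P U
  tiled_triangles : Tiled (p.clientGraph.IsNClique 3) (P ∪ U)ᶜ
  tiled_absorbers : Tiled (IsAbsorber p) U

namespace Stage

theorem of_extends {A : Finset V} {m : ℕ} (h : Stage p P U) (hpq : p.Extends (edgesOn A) m q)
    (hUA : Disjoint U A) : Stage q P U where
  disjoint := h.disjoint
  tiled_triangles := h.tiled_triangles.mono fun _ _ hT => hT.mono hpq.clientGraph_le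
  tiled_absorbers := h.tiled_absorbers.isAbsorber_of_extends hpq hUA

theorem cover {T : Finset V} (h : Stage p P U) (hTP : T ⊆ P)
    (hT : p.clientGraph.IsNClique 3 T) : Stage p (P \ T) U where
  disjoint := h.disjoint.mono_left sdiff_subset
  tiled_triangles := by
    have hPU := disjoint_left.mp h.disjoint
    have hunion : (P \ T ∪ U)ᶜ = (P ∪ U)ᶜ ∪ T := by grind [mem_compl]
    rw [hunion]
    refine h.tiled_triangles.union hT (card_pos.mp (by rw [hT.card_eq]; norm_num)) ?_
    exact disjoint_compl_left.mono_right (hTP.trans subset_union_left)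
  tiled_absorbers := h.tiled_absorbers

theorem cover_disjointTriangles {A : Finset V} {k : ℕ} (h : Stage p P U) (hAP : A ⊆ P)
    (hA : HasDisjointTriangles p A) (hk : k ≤ 2) : ∃ P', #P = #P' + 3 * k ∧ Stage p P' U := by
  obtain ⟨T₁, hT₁A, T₂, hT₂A, hdisj, hT₁, hT₂⟩ := hA
  have hcard₁ : #(P \ T₁) = #P - 3 := by
    rw [card_sdiff_of_subset (hT₁A.trans hAP), hT₁.card_eq]
  have hT₂P : T₂ ⊆ P \ T₁ := subset_sdiff.mpr ⟨hT₂A.trans hAP, hdisj.symm⟩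
  have hcard₂ : #((P \ T₁) \ T₂) = #P - 3 - 3 := by
    rw [card_sdiff_of_subset hT₂P, hcard₁, hT₂.card_eq]
  have hle₁ := card_le_card (hT₁A.trans hAP)
  have hle₂ := card_le_card hT₂P
  rw [hT₁.card_eq] at hle₁
  rw [hT₂.card_eq] at hle₂
  have hcover₁ := h.cover (hT₁A.trans hAP) hT₁
  interval_cases k
  · exact ⟨P, rfl, h⟩
  · exact ⟨P \ T₁, by omega, hcover₁⟩
  · exact ⟨(P \ T₁) \ T₂, by omega, hcover₁.cover hT₂P hT₂⟩

theorem forces_disjointTriangles {k : ℕ} (h : Stage p P U) (hk : k ≤ 2) (hP : 12 ≤ #P)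
    (hclaimed : #p.claimed * 66 < (#P).choose 2) :
    Forces 1 (edgesOn univ) (fun q => (∃ P', #P = #P' + 3 * k ∧ Stage q P' U) ∧
      #q.claimed ≤ #p.claimed + 14) 7 p := by
  obtain ⟨A, hAP, hA, hfree⟩ :=
    exists_subset_card_eq_disjoint_edgesOn (by norm_num) hP hclaimed
  refine ((forces_hasDisjointTriangles hA hfree).and_extends.mono_board
    (edgesOn_mono (subset_univ A))).mono ?_
  rintro q ⟨hq, hpq⟩
  have hUA : Disjoint U A := h.disjoint.symm.mono_right hAP
  exact ⟨(h.of_extends hpq hUA).cover_disjointTriangles hAP hq hk, hpq.card_claimed_le⟩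

theorem forces_card_eq {s m k : ℕ} (h : Stage p P U) (hP : #P = s + 3 * m) (hmk : m ≤ 2 * k)
    (hs : 12 ≤ s) (hclaimed : (#p.claimed + 14 * k) * 66 < s.choose 2) :
    Forces 1 (edgesOn univ) (fun q => ∃ P', #P' = s ∧ Stage q P' U) (7 * k) p := by
  induction k generalizing p P m with
  | zero => exact Forces.of_pred ⟨P, by omega, h⟩
  | succ k ih =>
    have hchoose : s.choose 2 ≤ (#P).choose 2 := Nat.choose_le_choose 2 (by omega)
    refine (h.forces_disjointTriangles (min_le_right m 2) (by omega) (by omega)).bind ?_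
    rintro q ⟨⟨P', hP', hq⟩, hclaimedq⟩
    exact ih (m := m - min m 2) hq (by omega) (by omega) (by omega)

theorem forces_absorb {v : V} (h : Stage p P U) (hv : v ∈ P) (hU : U.Nonempty) :
    Forces 1 (edgesOn univ) (fun q => ∃ U', #U = #U' + 5 ∧ Stage q (P.erase v) U') 2 p := by
  obtain ⟨K, hKU, hK, hrest⟩ := h.tiled_absorbers.exists_tile hU
  have hPU := disjoint_left.mp h.disjoint
  have hvK : v ∉ K := fun hvK => hPU hv (hKU hvK)
  refine ((hK.forces_adj_adj hvK).and_extends.mono_board (edgesOn_mono (subset_univ _))).mono ?_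
  rintro q ⟨⟨x, hx, y, hy, hxy, hvx, hvy⟩, hpq⟩
  have hcard : #U = #(U \ K) + 5 := by
    rw [← hK.isNClique.card_eq, card_sdiff_add_card_eq_card hKU]
  have hunion : (P.erase v ∪ U \ K)ᶜ = (P ∪ U)ᶜ ∪ insert v K := by grind [mem_compl]
  have hvK_subset : insert v K ⊆ P ∪ U :=
    insert_subset (mem_union_left U hv) (hKU.trans subset_union_right)
  refine ⟨U \ K, hcard, h.disjoint.mono (erase_subset v P) sdiff_subset, ?_, ?_⟩
  · rw [hunion]
    exact (h.tiled_triangles.mono fun _ _ hT => hT.mono hpq.clientGraph_le).union_absorber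
      (hK.isNClique.mono hpq.clientGraph_le) (disjoint_compl_left.mono_right hvK_subset)
      hvK hx hy hxy hvx hvy
  · refine hrest.isAbsorber_of_extends hpq (disjoint_insert_right.mpr ⟨?_, sdiff_disjoint⟩)
    exact fun hvU => hPU hv (sdiff_subset hvU)

theorem forces_tiled (h : Stage p P U) (hU : #U = 5 * #P) :
    Forces 1 (edgesOn univ) (fun q => Tiled (q.clientGraph.IsNClique 3) univ) (2 * #P) p := by
  induction hs : #P generalizing p P U with
  | zero =>
    obtain rfl : P = ∅ := card_eq_zero.mp hs
    obtain rfl : U = ∅ := card_eq_zero.mp (by omega)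
    exact Forces.of_pred (by simpa only [union_empty, compl_empty] using h.tiled_triangles)
  | succ s ih =>
    obtain ⟨v, hv⟩ := card_pos.mp (show 0 < #P by omega)
    have hcard : #(P.erase v) = s := by rw [card_erase_of_mem hv, hs, Nat.add_sub_cancel]
    refine (h.forces_absorb hv (card_pos.mp (by omega))).bind ?_
    rintro q ⟨U', hU', hq⟩
    exact ih hq (by omega) hcard

end Stage

end Stages

section TriangleFactor

theorem forces_tiled_isNClique {V : Type*} [DecidableEq V] [Fintype V] {s m k : ℕ}
    (hV : Fintype.card V = 6 * s + 3 * m) (hmk : m ≤ 2 * k) (hs : 12 ≤ s)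
    (hsV : 31 * s ≤ Fintype.card V) (hclaimed : (52 * s + 14 * k) * 66 < s.choose 2) :
    Forces 1 (edgesOn (univ : Finset V)) (fun q => Tiled (q.clientGraph.IsNClique 3) univ)
      (28 * s + 7 * k) ⟨∅, ∅⟩ := by
  have habsorbers := (forces_tiled_isAbsorber (p := ⟨∅, ∅⟩) Tiled.empty
    (disjoint_empty_left (univ : Finset V)) hsV fun _ _ _ => notMem_empty _).and_extends
  have hrounds : 28 * s + 7 * k = 2 * s + 7 * k + 26 * s := by ring
  rw [hrounds]
  refine habsorbers.bind ?_
  rintro q ⟨⟨U, -, hU, hUq⟩, hq⟩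
  rw [empty_union] at hUq
  have hstage : Stage q Uᶜ U :=
    ⟨disjoint_compl_left, by simpa only [compl_union, compl_compl, inter_compl] using Tiled.empty,
      hUq⟩
  have hcard : #Uᶜ = s + 3 * m := by
    rw [card_compl]
    omega
  have hqcard : #q.claimed ≤ 52 * s :=
    hq.card_claimed_le.trans_eq (by simp only [Position.claimed, empty_union, card_empty]; ring)
  refine (hstage.forces_card_eq hcard hmk hs (by omega)).bind ?_
  rintro r ⟨P, rfl, hr⟩
  exact hr.forces_tiled hU

theorem tauWC_le_of_forces {b k n t : ℕ} (hk : 0 < k)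
    (h : Forces b (edgesOn (univ : Finset (Fin n)))
      (fun q => Tiled (q.clientGraph.IsNClique k) univ) t ⟨∅, ∅⟩) :
    tauWC (Kedges n) (factorFamily k n (⊤ : SimpleGraph (Fin k)).edgeSet) b ≤ t := by
  have hboard : Kedges n = edgesOn univ := by simp only [Kedges, edgesOn, sym2_univ]
  rw [hboard]
  exact Nat.sInf_le (h.mono fun _ hq => hq.exists_mem_factorFamily hk).waiterWins

theorem six_mul_tauWC_le {n s : ℕ} (hn : 3 ∣ n) (hs : 12 ≤ s) (hsn : 31 * s ≤ n)
    (hns : 264 * n < s.choose 2) :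
    6 * tauWC (Kedges n) (factorFamily 3 n (⊤ : SimpleGraph (Fin 3)).edgeSet) 1 ≤
      7 * n + 126 * s + 21 := by
  obtain ⟨m, hm⟩ : ∃ m, n = 6 * s + 3 * m := by
    obtain ⟨l, rfl⟩ := hn
    exact ⟨l - 2 * s, by omega⟩
  have hforces := forces_tiled_isNClique (V := Fin n) (k := (m + 1) / 2)
    (by rwa [Fintype.card_fin]) (by omega) hs (by rwa [Fintype.card_fin]) (by omega)
  have := tauWC_le_of_forces (by norm_num) hforces
  omega

theorem exists_forall_ge_exists_lt_choose_two {ε : ℝ} (hε : 0 < ε) :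
    ∃ n₀ : ℕ, ∀ n ≥ n₀, ∃ s : ℕ, 12 ≤ s ∧ 31 * s ≤ n ∧ 264 * n < s.choose 2 ∧
      126 * s + 21 ≤ 6 * ε * n := by
  set δ : ℝ := min (ε / 22) (1 / 31) 
  have hδ_pos : 0 < δ := lt_min (by positivity) (by norm_num)
  have hδε : 22 * δ ≤ ε := by linarith [min_le_left (ε / 22) (1 / 31)]
  have hδ_le : 31 * δ ≤ 1 := by linarith [min_le_right (ε / 22) (1 / 31)]
  refine ⟨⌈3000 / δ ^ 2⌉₊, fun n hn => ?_⟩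
  have hsq : 3000 ≤ δ ^ 2 * n := by
    rw [mul_comm]
    exact (div_le_iff₀ (by positivity)).mp (Nat.ceil_le.mp hn)
  have hδn : 3000 ≤ δ * n := by nlinarith [(Nat.cast_nonneg n : (0 : ℝ) ≤ n)]
  have hfloor_le : (⌊δ * n⌋₊ : ℝ) ≤ δ * n := Nat.floor_le (by positivity)
  have hlt_floor : δ * n < ⌊δ * n⌋₊ + 1 := Nat.lt_floor_add_one _
  refine ⟨⌊δ * n⌋₊, Nat.le_floor (by push_cast; linarith), ?_, ?_, ?_⟩
  · have : (31 * ⌊δ * n⌋₊ : ℝ) ≤ n := by nlinarith [(Nat.cast_nonneg n : (0 : ℝ) ≤ n)]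
    exact_mod_cast this
  · have hsquare : 264 * (n : ℝ) < ⌊δ * n⌋₊ * (⌊δ * n⌋₊ - 1) / 2 := by
      calc 264 * (n : ℝ) < 3000 * n / 8 := by nlinarith
        _ ≤ δ ^ 2 * n * n / 8 := by gcongr
        _ = δ * n / 2 * (δ * n / 2) / 2 := by ring
        _ ≤ ⌊δ * n⌋₊ * (⌊δ * n⌋₊ - 1) / 2 := by gcongr <;> linarith
    rw [← Nat.cast_choose_two] at hsquare
    exact_mod_cast hsquare
  · nlinarith

end TriangleFactor

/-- For every `ε > 0` and every large enough `n` divisible by `3`, in the unbiased Waiter-Client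
triangle factor game on `K_n`, Waiter has a strategy to win within `(7/6 + ε)·n` rounds:
`τ_WC(F_{n,K₃-fac}, 1) ≤ (7/6)·n + o(n)`. -/
theorem WC_triangle_factor_upper :
    ∀ ε : ℝ, 0 < ε → ∃ n₀ : ℕ, ∀ n : ℕ, n₀ ≤ n → 3 ∣ n →
      (tauWC (Kedges n) (factorFamily 3 n (⊤ : SimpleGraph (Fin 3)).edgeSet) 1 : ℝ) ≤
        ((7 : ℝ) / 6 + ε) * n := by
  intro ε hε
  obtain ⟨n₀, hn₀⟩ := exists_forall_ge_exists_lt_choose_two hε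
  refine ⟨n₀, fun n hn hdvd => ?_⟩
  obtain ⟨s, hs, hsn, hns, hεn⟩ := hn₀ n hn
  have hrounds : (6 * tauWC (Kedges n) (factorFamily 3 n (⊤ : SimpleGraph (Fin 3)).edgeSet) 1 : ℝ)
      ≤ 7 * n + 126 * s + 21 := by exact_mod_cast six_mul_tauWC_le hdvd hs hsn hns
  linarith
end

section
/- For every large enough integer n, in the unbiased Waiter-Client game on the edge set of K_n, Waiter has a strategy to force Client's graph to contain a Hamilton cycle H within n + 1 rounds such that, at the moment H is completed, the following all hold: (1) every vertex v of K_n satisfies d_W(v) < 10, where d_W(v) is the number of Waiter's edges incident to v; (2) the first edge that Client claimed in the game belongs to E(H); and (3) Client's graph contains a path P of length n/5 such that Waiter has claimed no edge with both endpoints in V(P). -/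
open Finset

/-- `WaiterWinsHist board b win t hist W` means: starting from the position where Client has
claimed the elements in the list `hist` (in this order) and Waiter owns the elements of `W`,
Waiter can force that within the next `t` rounds of the `b`-biased Waiter-Client game on the
board `board` a position is reached in which the predicate `win` holds of (Client's history,
Waiter's elements).  In each round Waiter offers `b+1` previously unclaimed board elements (or
all remaining unclaimed elements, if fewer than `b+1` remain); Client claims exactly one of
them, the rest go to Waiter. -/
def WaiterWinsHist {X : Type*} [DecidableEq X] (board : Finset X) (b : ℕ)
    (win : List X → Finset X → Prop) :
    ℕ → List X → Finset X → Prop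
  | 0, hist, W => win hist W
  | (t+1), hist, W => win hist W ∨
      ∃ O : Finset X, O.Nonempty ∧ O ⊆ board \ (hist.toFinset ∪ W) ∧
        O.card = min (b + 1) ((board \ (hist.toFinset ∪ W)).card) ∧
        ∀ x ∈ O, WaiterWinsHist board b win t (hist ++ [x]) (W ∪ O.erase x)

/-- The target condition of Theorem 2.1 (`WCUHC`): Client's claimed edges (the list `hist`)
contain a Hamilton cycle `H` such that, at this moment, (1) every vertex is incident to fewer
than `10` of Waiter's edges, (2) the first edge Client claimed belongs to `H`, and (3) Client's
graph contains a path of length `n/5` none of whose vertex pairs is joined by a Waiter edge. -/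
def HamWithProperties (n : ℕ) (hist : List (Sym2 (Fin n))) (W : Finset (Sym2 (Fin n))) : Prop :=
  ∃ (u : Fin n) (p : (⊤ : SimpleGraph (Fin n)).Walk u u),
    p.IsHamiltonianCycle ∧ (∀ e ∈ p.edges, e ∈ hist.toFinset) ∧
    -- (1) every vertex has Waiter-degree less than 10
    (∀ v : Fin n, (W.filter (fun e => v ∈ e)).card < 10) ∧
    -- (2) the first edge Client claimed lies on the Hamilton cycle
    (∃ e₀, hist.head? = some e₀ ∧ e₀ ∈ p.edges) ∧
    -- (3) a path of length n/5 in Client's graph with no Waiter edge inside its vertex set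
    (∃ (a b : Fin n) (q : (⊤ : SimpleGraph (Fin n)).Walk a b),
      q.IsPath ∧ q.length = n / 5 ∧ (∀ e ∈ q.edges, e ∈ hist.toFinset) ∧
      ∀ x y : Fin n, x ∈ q.support → y ∈ q.support → s(x, y) ∉ W)

/-!
Waiter first lets Client grow a path on slightly more than `n / 5` vertices, offering at each step
two edges from an end to untouched vertices; her own edges then never lie inside the path.
The other vertices are absorbed in pairs. Waiter offers an end two new vertices; Client takes one
of them, and the declined one is then offered to both ends of the longer path. Hence each end is
almost free of Waiter edges and all of Waiter's degrees stay at most `5`.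

When Client's path from `x` to `y` misses only one vertex `z`, Waiter offers `yx` and `yz`. If
Client closes the cycle, `z` is inserted between two consecutive vertices of it; if he takes `yz`,
the resulting Hamilton path is closed, if necessary after a Pósa rotation. Only boundedly many
vertices lie on Client's first edge or are barred by Waiter edges, so there are places on the path
where this can be done without losing the first edge.
-/

section Game

variable {X : Type*} [DecidableEq X] {board : Finset X} {b s t : ℕ}
  {Q win : List X → Finset X → Prop} {hist : List X} {W : Finset X}

namespace WaiterWinsHist

theorem of_win (h : win hist W) : ∀ t, WaiterWinsHist board b win t hist W
  | 0 => h
  | _ + 1 => Or.inl h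

theorem mono (h : WaiterWinsHist board b win s hist W) (hst : s ≤ t) :
    WaiterWinsHist board b win t hist W := by
  induction s generalizing t hist W with
  | zero => exact of_win h t
  | succ s ih =>
    obtain ⟨t, rfl⟩ : ∃ t', t = t' + 1 := ⟨t - 1, by lia⟩
    obtain h | ⟨O, hne, hsub, hcard, hO⟩ := h
    · exact Or.inl h
    · exact Or.inr ⟨O, hne, hsub, hcard, fun x hx => ih (hO x hx) (by lia)⟩

theorem trans (h : WaiterWinsHist board b Q s hist W)
    (hQ : ∀ hist' W', Q hist' W' → WaiterWinsHist board b win t hist' W') :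
    WaiterWinsHist board b win (s + t) hist W := by
  induction s generalizing hist W with
  | zero => simpa using hQ _ _ h
  | succ s ih =>
    rw [Nat.add_right_comm]
    obtain h | ⟨O, hne, hsub, hcard, hO⟩ := h
    · exact (hQ _ _ h).mono (by lia)
    · exact Or.inr ⟨O, hne, hsub, hcard, fun x hx => ih (hO x hx)⟩

theorem succ_of_pair {e f : X} (hef : e ≠ f)
    (hsub : {e, f} ⊆ board \ (hist.toFinset ∪ W))
    (he : WaiterWinsHist board 1 win t (hist ++ [e]) (insert f W))
    (hf : WaiterWinsHist board 1 win t (hist ++ [f]) (insert e W)) :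
    WaiterWinsHist board 1 win (t + 1) hist W := by
  have hcard : #{e, f} = 2 := card_pair hef
  refine Or.inr ⟨{e, f}, insert_nonempty _ _, hsub, ?_, ?_⟩
  · have := card_le_card hsub
    lia
  · simp only [mem_insert, mem_singleton, forall_eq_or_imp, forall_eq]
    constructor
    · rwa [erase_insert (by simpa using hef), union_singleton]
    · rwa [pair_comm, erase_insert (by simpa using hef.symm), union_singleton]

end WaiterWinsHist

theorem toFinset_concat (l : List X) (x : X) : (l ++ [x]).toFinset = insert x l.toFinset := by
  rw [List.toFinset_append, List.toFinset_cons, List.toFinset_nil, insert_empty_eq,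
    union_singleton]

end Game

theorem WaiterWinsHist.succ_of_star {n t : ℕ}
    {win : List (Sym2 (Fin n)) → Finset (Sym2 (Fin n)) → Prop} {hist : List (Sym2 (Fin n))}
    {W : Finset (Sym2 (Fin n))} {c a b : Fin n}
    (hab : a ≠ b) (hca : c ≠ a) (hcb : c ≠ b)
    (ha : s(c, a) ∉ hist.toFinset ∪ W) (hb : s(c, b) ∉ hist.toFinset ∪ W)
    (wa : WaiterWinsHist (Kedges n) 1 win t (hist ++ [s(c, a)]) (insert s(c, b) W))
    (wb : WaiterWinsHist (Kedges n) 1 win t (hist ++ [s(c, b)]) (insert s(c, a) W)) :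
    WaiterWinsHist (Kedges n) 1 win (t + 1) hist W := by
  refine succ_of_pair (mt Sym2.congr_right.1 hab) ?_ wa wb
  simp only [insert_subset_iff, singleton_subset_iff, mem_sdiff, Kedges, mem_filter_univ,
    Sym2.mk_isDiag_iff]
  exact ⟨⟨hca, ha⟩, hcb, hb⟩

section Degree

variable {V : Type*} [DecidableEq V] {W : Finset (Sym2 V)} {v : V}

/-- The degree of `v` in the graph with edge set `W`. -/
def edgeDegree (W : Finset (Sym2 V)) (v : V) : ℕ := #{e ∈ W | v ∈ e}

theorem edgeDegree_empty (v : V) : edgeDegree ∅ v = 0 := by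
  rw [edgeDegree, filter_empty, card_empty]

theorem edgeDegree_insert_le (W : Finset (Sym2 V)) (e : Sym2 V) (v : V) :
    edgeDegree (insert e W) v ≤ edgeDegree W v + 1 := by
  simp only [edgeDegree, filter_insert]
  split_ifs
  · exact card_insert_le _ _
  · exact Nat.le_succ _

theorem edgeDegree_insert_of_ne {c d : V} (hc : v ≠ c) (hd : v ≠ d) :
    edgeDegree (insert s(c, d) W) v = edgeDegree W v := by
  rw [edgeDegree, filter_insert, if_neg (by simp [hc, hd]), edgeDegree]

theorem notMem_of_edgeDegree_eq_zero (h : edgeDegree W v = 0) (u : V) : s(u, v) ∉ W := by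
  intro hu
  rw [edgeDegree, card_eq_zero, filter_eq_empty_iff] at h
  exact h hu (Sym2.mem_mk_right u v)

theorem notMem_insert_mk {u c d : V} (h : s(u, v) ∉ W) (hcd : u = c → v ≠ d)
    (hdc : u = d → v ≠ c) : s(u, v) ∉ insert s(c, d) W := by
  rw [mem_insert, Sym2.eq_iff]
  tauto

theorem notMem_insert_star {z u : V} (h : s(z, u) ∉ W) (huv : u ≠ v) :
    s(z, u) ∉ insert s(z, v) W := by
  rw [mem_insert, Sym2.congr_right, not_or]
  exact ⟨huv, h⟩

/-- The neighbourhood of `v` in the graph with edge set `W`. -/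
def edgeNeighbors [Fintype V] (W : Finset (Sym2 V)) (v : V) : Finset V := {u | s(v, u) ∈ W}

theorem mem_edgeNeighbors [Fintype V] {u : V} : u ∈ edgeNeighbors W v ↔ s(v, u) ∈ W :=
  mem_filter_univ u

theorem card_edgeNeighbors_le [Fintype V] (W : Finset (Sym2 V)) (v : V) :
    #(edgeNeighbors W v) ≤ edgeDegree W v :=
  card_le_card_of_injOn (fun u => s(v, u))
    (fun _ hu => mem_filter.2 ⟨mem_edgeNeighbors.1 hu, Sym2.mem_mk_left _ _⟩)
    (fun _ _ _ _ h => Sym2.congr_right.1 h)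

end Degree

section Path

variable {V : Type*} {x y u v w r : V} {A A₁ A₂ : Finset V} {E E₁ E₂ : Finset (Sym2 V)}

theorem card_eq_length_add_one_of_isPath {p : (⊤ : SimpleGraph V).Walk x y}
    (hp : p.IsPath) (hA : ∀ v, v ∈ p.support ↔ v ∈ A) : #A = p.length + 1 := by
  classical
  rw [← p.length_support, ← List.toFinset_card_of_nodup hp.support_nodup]
  congr 1
  ext v
  rw [List.mem_toFinset, hA]

/-- `PathOn x y A E`: there is a path from `x` to `y` with vertex set `A` and edge set `E`.
Keeping only these two sets frees the strategy from manipulating walks. -/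
def PathOn (x y : V) (A : Finset V) (E : Finset (Sym2 V)) : Prop :=
  ∃ p : (⊤ : SimpleGraph V).Walk x y,
    p.IsPath ∧ (∀ v, v ∈ p.support ↔ v ∈ A) ∧ ∀ e, e ∈ p.edges ↔ e ∈ E

namespace PathOn

theorem singleton (x : V) : PathOn x x {x} ∅ :=
  ⟨.nil, .nil, by simp, by simp⟩

theorem reverse (h : PathOn x y A E) : PathOn y x A E := by
  obtain ⟨p, hp, hA, hE⟩ := h
  exact ⟨p.reverse, hp.reverse, by simpa using hA, by simpa using hE⟩

theorem mem_left (h : PathOn x y A E) : x ∈ A := by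
  obtain ⟨p, -, hA, -⟩ := h
  exact (hA x).1 p.start_mem_support

theorem mem_right (h : PathOn x y A E) : y ∈ A :=
  h.reverse.mem_left

theorem left_mem_of_edge_mem (h : PathOn x y A E) (he : s(u, v) ∈ E) : u ∈ A := by
  obtain ⟨p, -, hA, hE⟩ := h
  exact (hA u).1 (p.fst_mem_support_of_mem_edges ((hE _).2 he))

theorem right_mem_of_edge_mem (h : PathOn x y A E) (he : s(u, v) ∈ E) : v ∈ A :=
  h.left_mem_of_edge_mem (Sym2.eq_swap ▸ he)

theorem notMem_of_three_le_card (h : PathOn x y A E) (hA : 3 ≤ #A) :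
    s(x, y) ∉ E := by
  obtain ⟨p, hp, hpA, hE⟩ := h
  intro he
  have hlen := hp.length_eq_one_of_mem_edges ((hE _).2 he)
  have := card_eq_length_add_one_of_isPath hp hpA
  lia

theorem join [DecidableEq V] (h₁ : PathOn x u A₁ E₁) (h₂ : PathOn v y A₂ E₂)
    (hA : Disjoint A₁ A₂) : PathOn x y (A₁ ∪ A₂) (insert s(u, v) (E₁ ∪ E₂)) := by
  have huv : (⊤ : SimpleGraph V).Adj u v :=
    (SimpleGraph.top_adj u v).2 (disjoint_iff_ne.1 hA u h₁.mem_right v h₂.mem_left)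
  obtain ⟨p, hp, hpA, hpE⟩ := h₁
  obtain ⟨q, hq, hqA, hqE⟩ := h₂
  refine ⟨p.append (.cons huv q), ?_, fun a => ?_, fun e => ?_⟩
  · rw [SimpleGraph.Walk.isPath_def, SimpleGraph.Walk.support_append,
      SimpleGraph.Walk.support_cons, List.tail_cons, List.nodup_append]
    exact ⟨hp.support_nodup, hq.support_nodup, fun a ha b hb =>
      disjoint_iff_ne.1 hA a ((hpA a).1 ha) b ((hqA b).1 hb)⟩
  · simp [SimpleGraph.Walk.support_append, hpA, hqA]
  · simp only [SimpleGraph.Walk.edges_append, SimpleGraph.Walk.edges_cons, List.mem_append,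
      List.mem_cons, hpE, hqE, mem_insert, mem_union, or_left_comm]

theorem cons [DecidableEq V] (h : PathOn x y A E) (hr : r ∉ A) :
    PathOn r y (insert r A) (insert s(x, r) E) := by
  have := (singleton r).join h (disjoint_singleton_left.2 hr)
  rwa [singleton_union, empty_union, Sym2.eq_swap] at this

theorem ne_of_two_le_card (h : PathOn x y A E) (hA : 2 ≤ #A) : x ≠ y := by
  rintro rfl
  obtain ⟨p, hp, hpA, -⟩ := h
  have hlen := card_eq_length_add_one_of_isPath hp hpA
  rw [SimpleGraph.Walk.length_eq_zero_iff.2 (SimpleGraph.Walk.isPath_iff_nil.1 hp)] at hlen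
  lia

theorem nonempty_edges_of_ne (h : PathOn x y A E) (hxy : x ≠ y) : E.Nonempty := by
  obtain ⟨p, -, -, hE⟩ := h
  cases p with
  | nil => exact absurd rfl hxy
  | cons hadj p => exact ⟨_, (hE _).1 List.mem_cons_self⟩

theorem exists_isHamiltonianCycle [Fintype V] [DecidableEq V] (h : PathOn x y univ E)
    (hV : 3 ≤ Fintype.card V) :
    ∃ p : (⊤ : SimpleGraph V).Walk y y,
      p.IsHamiltonianCycle ∧ ∀ e, e ∈ p.edges ↔ e ∈ insert s(x, y) E := by
  have hxy : s(x, y) ∉ E := h.notMem_of_three_le_card hV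
  have hne : x ≠ y := h.ne_of_two_le_card (Nat.le_of_succ_le hV)
  obtain ⟨p, hp, hA, hE⟩ := h
  have hcycle : (p.cons ((SimpleGraph.top_adj y x).2 hne.symm)).IsCycle :=
    p.cons_isCycle_iff _ |>.2 ⟨hp, by rwa [hE, Sym2.eq_swap]⟩
  refine ⟨_, ⟨hcycle, ?_⟩, fun e => ?_⟩
  · intro a
    simpa using hp.isHamiltonian_of_mem (fun a => (hA a).2 (mem_univ a)) a
  · rw [SimpleGraph.Walk.edges_cons, List.mem_cons, hE, mem_insert, Sym2.eq_swap]

theorem exists_subpath (h : PathOn x y A E) {m : ℕ} (hm : m < #A) :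
    ∃ (a b : V) (q : (⊤ : SimpleGraph V).Walk a b), q.IsPath ∧ q.length = m ∧
      (∀ e ∈ q.edges, e ∈ E) ∧ ∀ a ∈ q.support, a ∈ A := by
  obtain ⟨p, hp, hA, hE⟩ := h
  have hlen := card_eq_length_add_one_of_isPath hp hA
  have hsub := p.isSubwalk_take m
  exact ⟨_, _, p.take m, hp.take m, by rw [SimpleGraph.Walk.take_length]; lia,
    fun e he => (hE e).1 (hsub.edges_subset he),
    fun a ha => (hA a).1 (hsub.support_subset ha)⟩

end PathOn

/-- Removing the edge `uv` from some path `PathOn x y A E` leaves a path from `x` to `u` and a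
path from `v` to `y`; in particular `u` precedes `v` on the path. -/
def SplitsAt [DecidableEq V] (x y : V) (A : Finset V) (E : Finset (Sym2 V)) (u v : V) : Prop :=
  ∃ A₁ A₂ E₁ E₂, PathOn x u A₁ E₁ ∧ PathOn v y A₂ E₂ ∧ Disjoint A₁ A₂ ∧ A₁ ∪ A₂ = A ∧
    insert s(u, v) (E₁ ∪ E₂) = E

namespace SplitsAt

variable [DecidableEq V]

theorem left_mem (h : SplitsAt x y A E u v) : u ∈ A := by
  obtain ⟨A₁, A₂, E₁, E₂, h₁, -, -, rfl, -⟩ := h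
  exact mem_union_left _ h₁.mem_right

theorem right_mem (h : SplitsAt x y A E u v) : v ∈ A := by
  obtain ⟨A₁, A₂, E₁, E₂, -, h₂, -, rfl, -⟩ := h
  exact mem_union_right _ h₂.mem_left

theorem ne (h : SplitsAt x y A E u v) : u ≠ v := by
  obtain ⟨A₁, A₂, E₁, E₂, h₁, h₂, hA, -, -⟩ := h
  exact disjoint_iff_ne.1 hA u h₁.mem_right v h₂.mem_left

theorem notMem_of_ne (h : SplitsAt x y A E u v) (hxu : x ≠ u) : s(x, v) ∉ E := by
  obtain ⟨A₁, A₂, E₁, E₂, h₁, h₂, hA, -, rfl⟩ := h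
  rw [mem_insert, mem_union, Sym2.congr_left]
  rintro (he | he | he)
  · exact hxu he
  · exact disjoint_right.1 hA h₂.mem_left (h₁.right_mem_of_edge_mem he)
  · exact disjoint_left.1 hA h₁.mem_left (h₂.left_mem_of_edge_mem he)

theorem exists_disjoint_paths (h : SplitsAt x y A E u v) :
    ∃ A₁ A₂ E₁ E₂, PathOn x u A₁ E₁ ∧ PathOn v y A₂ E₂ ∧ Disjoint A₁ A₂ ∧ A₁ ∪ A₂ = A ∧
      E₁ ∪ E₂ = E.erase s(u, v) := by
  obtain ⟨A₁, A₂, E₁, E₂, h₁, h₂, hA, hAA, rfl⟩ := h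
  refine ⟨A₁, A₂, E₁, E₂, h₁, h₂, hA, hAA, (erase_insert ?_).symm⟩
  rw [mem_union]
  rintro (he | he)
  · exact disjoint_right.1 hA h₂.mem_left (h₁.right_mem_of_edge_mem he)
  · exact disjoint_left.1 hA h₁.mem_right (h₂.left_mem_of_edge_mem he)

/-- Pósa rotation: adding `xv` and removing `uv` makes `u` the first vertex instead of `x`. -/
theorem rotate (h : SplitsAt x y A E u v) :
    PathOn u y A (insert s(x, v) (E.erase s(u, v))) := by
  obtain ⟨A₁, A₂, E₁, E₂, h₁, h₂, hA, rfl, hE⟩ := h.exists_disjoint_paths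
  exact hE ▸ h₁.reverse.join h₂ hA

theorem flip (h : SplitsAt x y A E u v) :
    PathOn u v A (insert s(x, y) (E.erase s(u, v))) := by
  obtain ⟨A₁, A₂, E₁, E₂, h₁, h₂, hA, rfl, hE⟩ := h.exists_disjoint_paths
  exact hE ▸ h₁.reverse.join h₂.reverse hA

end SplitsAt

theorem SplitsAt.of_isSubwalk [DecidableEq V] {p : (⊤ : SimpleGraph V).Walk x y}
    (hp : p.IsPath) (hA : ∀ v, v ∈ p.support ↔ v ∈ A) (hE : ∀ e, e ∈ p.edges ↔ e ∈ E)
    {huv : (⊤ : SimpleGraph V).Adj u v} (h : huv.toWalk.IsSubwalk p) :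
    SplitsAt x y A E u v := by
  obtain ⟨p₁, p₂, rfl⟩ := h
  rw [← SimpleGraph.Walk.append_assoc, SimpleGraph.Adj.toWalk, SimpleGraph.Walk.cons_append,
    SimpleGraph.Walk.nil_append] at hp hA hE
  have hnodup := hp.support_nodup
  rw [SimpleGraph.Walk.support_append, SimpleGraph.Walk.support_cons, List.tail_cons,
    List.nodup_append] at hnodup
  refine ⟨p₁.support.toFinset, p₂.support.toFinset, p₁.edges.toFinset, p₂.edges.toFinset,
    ⟨p₁, .mk' hnodup.1, by simp, by simp⟩, ⟨p₂, .mk' hnodup.2.1, by simp, by simp⟩,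
    disjoint_iff_ne.2 ?_, ?_, ?_⟩
  · simpa only [List.mem_toFinset] using hnodup.2.2
  · ext a
    simp [← hA, SimpleGraph.Walk.support_append]
  · ext e
    simp [← hE, SimpleGraph.Walk.edges_append, or_left_comm]

/-- Among `#B + 1` disjoint blocks of `k` consecutive positions, one avoids `B`. -/
theorem exists_window_notMem {f : ℕ → V} {N k : ℕ} (hf : Set.InjOn f (Set.Iio N))
    (B : Finset V) (hN : k * (#B + 1) ≤ N) : ∃ i, i + k ≤ N ∧ ∀ j < k, f (i + j) ∉ B := by
  by_contra! hB
  have hblock : ∀ q ∈ range (#B + 1), k * q + k ≤ N := fun q hq =>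
    (Nat.mul_le_mul_left k (mem_range.1 hq)).trans hN
  choose! j hjk hjB using fun q hq => hB (k * q) (hblock q hq)
  have hinj : Set.InjOn (fun q => f (k * q + j q)) (range (#B + 1)) := by
    intro q hq q' hq' hqq'
    have hj := hjk q hq
    have hj' := hjk q' hq'
    have heq := hf (Set.mem_Iio.2 (by have := hblock q hq; lia))
      (Set.mem_Iio.2 (by have := hblock q' hq'; lia)) hqq'
    have := congrArg (· / k) heq
    simpa [Nat.mul_add_div (Nat.zero_lt_of_lt hj), Nat.div_eq_of_lt hj, Nat.div_eq_of_lt hj']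
      using this
  have := card_le_card_of_injOn _ hjB hinj
  rw [card_range] at this
  lia

/-- The vertices `u`, `v`, `w` are consecutive on some path `PathOn x y A E`, in this order. -/
structure ConsecutiveTriple [DecidableEq V] (x y : V) (A : Finset V) (E : Finset (Sym2 V))
    (u v w : V) : Prop where
  left : SplitsAt x y A E u v
  right : SplitsAt x y A E v w
  ne : u ≠ w

theorem PathOn.exists_consecutiveTriple [DecidableEq V] (h : PathOn x y A E) (B : Finset V)
    (hB : 3 * #B + 3 ≤ #A) :
    ∃ u v w, ConsecutiveTriple x y A E u v w ∧ u ∉ B ∧ v ∉ B ∧ w ∉ B := by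
  obtain ⟨p, hp, hA, hE⟩ := h
  have hlen := card_eq_length_add_one_of_isPath hp hA
  have hinj : Set.InjOn p.getVert (Set.Iio #A) :=
    hp.getVert_injOn.mono fun i hi => by
      rw [Set.mem_Iio] at hi
      rw [Set.mem_ofPred]
      lia
  obtain ⟨i, hi, hiB⟩ := exists_window_notMem hinj B (k := 3) (by lia)
  have hsplit : ∀ j < p.length, SplitsAt x y A E (p.getVert j) (p.getVert (j + 1)) := fun j hj =>
    .of_isSubwalk hp hA hE ((p.isSubwalk_toWalk_iff_mem_darts (p.adj_getVert_succ hj)).2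
      (p.darts_getElem_eq_getVert j (p.length_darts ▸ hj) ▸ List.getElem_mem _))
  refine ⟨_, _, _, ⟨hsplit i (by lia), hsplit (i + 1) (by lia), fun he => ?_⟩,
    hiB 0 (by lia), hiB 1 (by lia), hiB 2 (by lia)⟩
  have := hinj (Set.mem_Iio.2 (by lia)) (Set.mem_Iio.2 (by lia)) he
  lia

theorem PathOn.exists_two_consecutiveTriple [DecidableEq V] (h : PathOn x y A E) (B : Finset V)
    (hB : 3 * #B + 12 ≤ #A) :
    ∃ u v w u' v' w', ConsecutiveTriple x y A E u v w ∧ ConsecutiveTriple x y A E u' v' w' ∧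
      Disjoint {u, v, w} B ∧ Disjoint {u', v', w'} ({u, v, w} ∪ B) := by
  obtain ⟨u, v, w, ht, hu, hv, hw⟩ := h.exists_consecutiveTriple B (by lia)
  have hcard : #({u, v, w} ∪ B) ≤ #B + 3 := by
    have := card_union_le {u, v, w} B
    have := card_le_three (a := u) (b := v) (c := w)
    lia
  obtain ⟨u', v', w', ht', hu', hv', hw'⟩ := h.exists_consecutiveTriple ({u, v, w} ∪ B) (by lia)
  refine ⟨u, v, w, u', v', w', ht, ht', ?_, ?_⟩ <;>
    simp only [disjoint_insert_left, disjoint_singleton_left]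
  exacts [⟨hu, hv, hw⟩, ⟨hu', hv', hw'⟩]

end Path

section Strategy

variable {n : ℕ} {hist : List (Sym2 (Fin n))} {W : Finset (Sym2 (Fin n))}
  {x y z r c d : Fin n} {A F R : Finset (Fin n)} {m : ℕ}

/-- The vertex set `R` contains a path of length `m` with edges in `C` and spans no edge of `W`:
this is the third property asked of the final position. -/
def Reserved (m : ℕ) (C : Finset (Sym2 (Fin n))) (R : Finset (Fin n))
    (W : Finset (Sym2 (Fin n))) : Prop :=
  (∃ (a b : Fin n) (q : (⊤ : SimpleGraph (Fin n)).Walk a b), q.IsPath ∧ q.length = m ∧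
    (∀ e ∈ q.edges, e ∈ C) ∧ ∀ v ∈ q.support, v ∈ R) ∧
  ∀ u ∈ R, ∀ v ∈ R, s(u, v) ∉ W

theorem Reserved.concat (h : Reserved m hist.toFinset R W) (e : Sym2 (Fin n))
    (hcd : c ∉ R ∨ d ∉ R) : Reserved m (hist ++ [e]).toFinset R (insert s(c, d) W) := by
  obtain ⟨⟨a, b, q, hq, hlen, hE, hR⟩, hW⟩ := h
  refine ⟨⟨a, b, q, hq, hlen, fun f hf => ?_, hR⟩, fun u hu v hv => ?_⟩
  · exact toFinset_concat hist e ▸ mem_insert_of_mem (hE f hf)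
  · exact notMem_insert_mk (hW u hu v hv) (by grind only) (by grind only)

/-- The positions of the opening, in which Client's edges form a path from `x` to `y` with vertex
set `A`, about to be extended at `x` to a vertex of the pool `F`. -/
structure Growing (hist : List (Sym2 (Fin n))) (W : Finset (Sym2 (Fin n))) (x y : Fin n)
    (A F : Finset (Fin n)) : Prop where
  path : PathOn x y A hist.toFinset
  pool_notMem : ∀ v ∈ F, v ∉ A
  degree_pool : ∀ v ∈ F, edgeDegree W v = 0
  le_card_pool : n + 1 ≤ #F + 2 * #A
  inside : ∀ u ∈ A, ∀ v ∈ A, s(u, v) ∉ W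
  outside : ∀ u ∉ A, ∀ v ∉ A, s(u, v) ∉ W
  degree_le : ∀ v, edgeDegree W v ≤ 2
  degree_outside : ∀ v ∉ A, edgeDegree W v ≤ 1
  degree_left : edgeDegree W x ≤ 1
  degree_left_eq_zero : 3 ≤ #A → edgeDegree W x = 0
  degree_right : edgeDegree W y = 0

namespace Growing

theorem singleton (x : Fin n) : Growing [] ∅ x x {x} {x}ᶜ where
  path := .singleton x
  pool_notMem v hv := mem_compl.1 hv
  degree_pool v _ := edgeDegree_empty v
  le_card_pool := by
    rw [card_compl, card_singleton, Fintype.card_fin]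
    lia
  inside _ _ _ _ := notMem_empty _
  outside _ _ _ _ := notMem_empty _
  degree_le v := by simp [edgeDegree_empty]
  degree_outside v _ := by simp [edgeDegree_empty]
  degree_left := by simp [edgeDegree_empty]
  degree_left_eq_zero _ := edgeDegree_empty x
  degree_right := edgeDegree_empty x

theorem extend (h : Growing hist W x y A F) (hr : r ∈ F) (hz : z ∈ F) (hrz : r ≠ z) :
    Growing (hist ++ [s(x, r)]) (insert s(x, z) W) y r (insert r A) ((F.erase r).erase z) := by
  have hrA := h.pool_notMem r hr
  have hzA := h.pool_notMem z hz
  have hxA := h.path.mem_left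
  have hyA := h.path.mem_right
  have hdeg := edgeDegree_insert_le W s(x, z)
  have hdeg' := fun v (hvx : v ≠ x) (hvz : v ≠ z) => edgeDegree_insert_of_ne (W := W) hvx hvz
  have hle := h.degree_le
  have hout := h.degree_outside
  have hpool := h.degree_pool
  have hrW := notMem_of_edgeDegree_eq_zero (hpool r hr)
  have hcardA := card_insert_of_notMem hrA
  exact
    { path := toFinset_concat hist _ ▸ (h.path.cons hrA).reverse
      pool_notMem := by grind [h.pool_notMem]
      degree_pool := by grind [h.pool_notMem]
      le_card_pool := by
        have := h.le_card_pool
        have := card_erase_add_one hr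
        have := card_erase_add_one (mem_erase.2 ⟨hrz.symm, hz⟩)
        lia
      inside := fun u hu v hv => by
        refine notMem_insert_mk ?_ (by grind) (by grind)
        obtain rfl | hu := mem_insert.1 hu
        · exact Sym2.eq_swap ▸ hrW v
        · obtain rfl | hv := mem_insert.1 hv
          · exact hrW u
          · exact h.inside u hu v hv
      outside := fun u hu v hv => by
        rw [mem_insert, not_or] at hu hv
        exact notMem_insert_mk (h.outside u hu.2 v hv.2) (by grind) (by grind)
      degree_le := by grind [h.degree_left]
      degree_outside := by grind
      degree_left := by grind [h.degree_right]
      degree_left_eq_zero := fun hA => by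
        have := h.path.ne_of_two_le_card (by lia)
        grind [h.degree_right]
      degree_right := by grind }

theorem round (h : Growing hist W x y A F) (hA : 2 * #A < n) :
    WaiterWinsHist (Kedges n) 1
      (fun hist' W' => ∃ x' y' A' F', #A' = #A + 1 ∧ Growing hist' W' x' y' A' F') 1 hist W := by
  obtain ⟨r, hr, z, hz, hrz⟩ := one_lt_card.1 (by have := h.le_card_pool; lia : 1 < #F)
  have hfree : ∀ v ∈ F, s(x, v) ∉ hist.toFinset ∪ W := fun v hv => notMem_union.2
    ⟨fun he => h.pool_notMem v hv (h.path.right_mem_of_edge_mem he),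
      notMem_of_edgeDegree_eq_zero (h.degree_pool v hv) x⟩
  have hne : ∀ v ∈ F, x ≠ v := fun v hv =>
    ne_of_mem_of_not_mem h.path.mem_left (h.pool_notMem v hv)
  exact .succ_of_star hrz (hne r hr) (hne z hz) (hfree r hr) (hfree z hz)
    ⟨_, _, _, _, card_insert_of_notMem (h.pool_notMem r hr), h.extend hr hz hrz⟩
    ⟨_, _, _, _, card_insert_of_notMem (h.pool_notMem z hz), h.extend hz hr hrz.symm⟩

theorem rounds (h : Growing hist W x y A F) (k : ℕ) (hk : 2 * (#A + k) < n + 2) :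
    WaiterWinsHist (Kedges n) 1
      (fun hist' W' => ∃ x' y' A' F', #A' = #A + k ∧ Growing hist' W' x' y' A' F') k hist W := by
  induction k with
  | zero => exact ⟨x, y, A, F, rfl, h⟩
  | succ k ih =>
    refine (ih (by lia)).trans fun hist' W' ⟨x', y', A', F', hA', h'⟩ => ?_
    simpa only [hA', add_assoc] using h'.round (by lia)

end Growing

/-- The common part of the positions after the opening: Client's edges form a path from `x` to `y`
with vertex set `A`, and Waiter owns no edge from an end of the path, or from a vertex off the
path, to a vertex off the path. -/
structure OpenPath (hist : List (Sym2 (Fin n))) (W : Finset (Sym2 (Fin n))) (x y : Fin n)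
    (A R : Finset (Fin n)) : Prop where
  path : PathOn x y A hist.toFinset
  ne : x ≠ y
  subset : R ⊆ A
  reserved : Reserved (n / 5) hist.toFinset R W
  left_free : ∀ v ∉ A, s(x, v) ∉ W
  right_free : ∀ v ∉ A, s(y, v) ∉ W
  outside : ∀ u ∉ A, ∀ v ∉ A, s(u, v) ∉ W

namespace OpenPath

theorem reverse (h : OpenPath hist W x y A R) : OpenPath hist W y x A R where
  path := h.path.reverse
  ne := h.ne.symm
  subset := h.subset
  reserved := h.reserved
  left_free := h.right_free
  right_free := h.left_free
  outside := h.outside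

theorem notMem_toFinset (h : OpenPath hist W x y A R) {u v : Fin n} (hv : v ∉ A) :
    s(u, v) ∉ hist.toFinset :=
  fun he => hv (h.path.right_mem_of_edge_mem he)

/-- The hypothesis `hcd` keeps the new Waiter edge `cd` away from the ends of the longer path. -/
theorem extend (h : OpenPath hist W x y A R) (hr : r ∉ A) (hc : c ∈ A) (hd : d ∉ A)
    (hcd : d = r ∨ c ≠ y) :
    OpenPath (hist ++ [s(x, r)]) (insert s(c, d) W) r y (insert r A) R where
  path := toFinset_concat hist _ ▸ h.path.cons hr
  ne := (ne_of_mem_of_not_mem h.path.mem_right hr).symm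
  subset := h.subset.trans (subset_insert r A)
  reserved := h.reserved.concat _ (.inr fun hdR => hd (h.subset hdR))
  left_free v hv := by
    rw [mem_insert, not_or] at hv
    exact notMem_insert_mk (h.outside r hr v hv.2) (by grind only) (by grind only)
  right_free v hv := by
    rw [mem_insert, not_or] at hv
    exact notMem_insert_mk (h.right_free v hv.2) (by grind only) (by grind only)
  outside u hu v hv := by
    rw [mem_insert, not_or] at hu hv
    exact notMem_insert_mk (h.outside u hu.2 v hv.2) (by grind only) (by grind only)

end OpenPath

/-- The positions between two absorptions of a pair of vertices, with bounds on Waiter's degrees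
that survive an absorption. -/
structure BalancedPath (hist : List (Sym2 (Fin n))) (W : Finset (Sym2 (Fin n))) (x y : Fin n)
    (A R : Finset (Fin n)) : Prop extends OpenPath hist W x y A R where
  degree_le : ∀ v, edgeDegree W v ≤ 5
  degree_outside : ∀ v ∉ A, edgeDegree W v ≤ 1
  degree_left : edgeDegree W x ≤ 4
  degree_right : edgeDegree W y ≤ 3

/-- The positions halfway through the absorption of a pair of vertices: `z` is the vertex that
Client has just declined to join to the path. -/
structure PendingPath (hist : List (Sym2 (Fin n))) (W : Finset (Sym2 (Fin n))) (x y z : Fin n)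
    (A R : Finset (Fin n)) : Prop extends OpenPath hist W x y A R where
  notMem : z ∉ A
  ends_free : s(x, y) ∉ W
  degree_le : ∀ v, edgeDegree W v ≤ 5
  degree_outside : ∀ v ∉ A, v ≠ z → edgeDegree W v ≤ 1
  degree_pending : edgeDegree W z ≤ 2
  degree_left : edgeDegree W x ≤ 3
  degree_right : edgeDegree W y ≤ 3

theorem PendingPath.reverse (h : PendingPath hist W x y z A R) : PendingPath hist W y x z A R where
  __ := h.toOpenPath.reverse
  notMem := h.notMem
  degree_le := h.degree_le
  degree_outside := h.degree_outside
  degree_pending := h.degree_pending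
  ends_free := Sym2.eq_swap ▸ h.ends_free
  degree_left := h.degree_right
  degree_right := h.degree_left

theorem BalancedPath.extend (h : BalancedPath hist W x y A R) (hr : r ∉ A) (hz : z ∉ A)
    (hrz : r ≠ z) : PendingPath (hist ++ [s(x, r)]) (insert s(x, z) W) r y z (insert r A) R := by
  have hx := h.path.mem_left
  have hy := h.path.mem_right
  have hdeg := edgeDegree_insert_le W s(x, z)
  have hdeg' := fun v (hvx : v ≠ x) (hvz : v ≠ z) => edgeDegree_insert_of_ne (W := W) hvx hvz
  have hle := h.degree_le
  have hout := h.degree_outside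
  exact
    { __ := h.toOpenPath.extend hr hx hz (.inr h.ne)
      notMem := by grind only [= mem_insert]
      ends_free := notMem_insert_mk (Sym2.eq_swap ▸ h.right_free r hr) (by grind only)
        (by grind only)
      degree_le := by grind [h.degree_left]
      degree_outside := by grind
      degree_pending := by grind
      degree_left := by grind
      degree_right := by grind [h.degree_right, h.ne] }

theorem PendingPath.absorb (h : PendingPath hist W x y z A R) :
    BalancedPath (hist ++ [s(z, x)]) (insert s(z, y) W) y z (insert z A) R := by
  have hy := h.path.mem_right
  have hz := h.notMem
  have hdeg := edgeDegree_insert_le W s(y, z)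
  have hdeg' := fun v (hvy : v ≠ y) (hvz : v ≠ z) => edgeDegree_insert_of_ne (W := W) hvy hvz
  have hle := h.degree_le
  have hout := h.degree_outside
  rw [Sym2.eq_swap, Sym2.eq_swap (a := z)]
  exact
    { __ := (h.toOpenPath.extend hz hy hz (.inl rfl)).reverse
      degree_le := by grind [h.degree_right, h.degree_pending]
      degree_outside := by grind
      degree_left := by grind [h.degree_right]
      degree_right := by grind [h.degree_pending] }

theorem BalancedPath.exists_pending (h : BalancedPath hist W x y A R) (hA : #A + 1 < n) :
    WaiterWinsHist (Kedges n) 1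
      (fun hist' W' => ∃ x' y' z' A', #A' = #A + 1 ∧ x' ∉ R ∧ PendingPath hist' W' x' y' z' A' R)
      1 hist W := by
  obtain ⟨r, hr, z, hz, hrz⟩ := one_lt_card.1
    (by rw [card_compl, Fintype.card_fin]; lia : 1 < #Aᶜ)
  rw [mem_compl] at hr hz
  have hfree : ∀ v ∉ A, s(x, v) ∉ hist.toFinset ∪ W := fun v hv =>
    notMem_union.2 ⟨h.notMem_toFinset hv, h.left_free v hv⟩
  have hne : ∀ v ∉ A, x ≠ v := fun v hv => ne_of_mem_of_not_mem h.path.mem_left hv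
  exact .succ_of_star hrz (hne r hr) (hne z hz) (hfree r hr) (hfree z hz)
    ⟨r, y, z, _, card_insert_of_notMem hr, notMem_mono h.subset hr, h.extend hr hz hrz⟩
    ⟨z, y, r, _, card_insert_of_notMem hz, notMem_mono h.subset hz, h.extend hz hr hrz.symm⟩

theorem PendingPath.exists_balanced (h : PendingPath hist W x y z A R) :
    WaiterWinsHist (Kedges n) 1
      (fun hist' W' => ∃ x' y' A', #A' = #A + 1 ∧ BalancedPath hist' W' x' y' A' R) 1 hist W := by
  have hz := h.notMem
  have hcard := card_insert_of_notMem hz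
  have hne : ∀ v ∈ A, z ≠ v := fun v hv => (ne_of_mem_of_not_mem hv hz).symm
  refine .succ_of_star h.ne (hne x h.path.mem_left) (hne y h.path.mem_right) ?_ ?_
    ⟨_, _, _, hcard, h.absorb⟩ ⟨_, _, _, hcard, h.reverse.absorb⟩
  · exact Sym2.eq_swap ▸ notMem_union.2 ⟨h.notMem_toFinset hz, h.left_free z hz⟩
  · exact Sym2.eq_swap ▸ notMem_union.2 ⟨h.notMem_toFinset hz, h.right_free z hz⟩

theorem BalancedPath.rounds (h : BalancedPath hist W x y A R) (k : ℕ) (hk : #A + 2 * k ≤ n) :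
    WaiterWinsHist (Kedges n) 1
      (fun hist' W' => ∃ x' y' A', #A' = #A + 2 * k ∧ BalancedPath hist' W' x' y' A' R)
      (2 * k) hist W := by
  induction k with
  | zero => exact ⟨x, y, A, rfl, h⟩
  | succ k ih =>
    refine (ih (by lia)).trans (t := 1 + 1) fun hist' W' ⟨x', y', A', hA', h'⟩ => ?_
    refine (h'.exists_pending (by lia)).trans fun hist'' W'' ⟨x'', y'', z, A'', hA'', _, h''⟩ => ?_
    have hcard : #A'' + 1 = #A + 2 * (k + 1) := by lia
    simpa only [hcard] using h''.exists_balanced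

theorem Growing.balancedPath (h : Growing hist W x y A F) (hA : 3 ≤ #A) (hm : n / 5 < #A) :
    BalancedPath hist W x y A A where
  path := h.path
  ne := h.path.ne_of_two_le_card (Nat.le_of_succ_le hA)
  subset := Subset.rfl
  reserved := ⟨h.path.exists_subpath hm, h.inside⟩
  left_free v _ := Sym2.eq_swap ▸ notMem_of_edgeDegree_eq_zero (h.degree_left_eq_zero hA) v
  right_free v _ := Sym2.eq_swap ▸ notMem_of_edgeDegree_eq_zero h.degree_right v
  outside := h.outside
  degree_le v := (h.degree_le v).trans (by decide)
  degree_outside := h.degree_outside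
  degree_left := h.degree_left.trans (by decide)
  degree_right := h.degree_right.trans_le (by decide)

/-- The positions of the endgame: Client has a path from `x` to `y` with edge set `E`, which
contains Client's first edge `e₀` and misses only the vertex `z`. The bound `Δ` on Waiter's degrees
grows by one in each round. -/
structure NearSpanning (hist : List (Sym2 (Fin n))) (W : Finset (Sym2 (Fin n))) (x y z : Fin n)
    (A : Finset (Fin n)) (E : Finset (Sym2 (Fin n))) (e₀ : Sym2 (Fin n)) (R : Finset (Fin n))
    (Δ : ℕ) : Prop where
  path : PathOn x y A E
  subset : E ⊆ hist.toFinset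
  notMem : z ∉ A
  insert_eq_univ : insert z A = univ
  first_mem : e₀ ∈ E
  head_eq : hist.head? = some e₀
  notMem_reserved : z ∉ R
  reserved : Reserved (n / 5) hist.toFinset R W
  degree_le : ∀ v, edgeDegree W v ≤ Δ

theorem PendingPath.exists_nearSpanning (h : PendingPath hist W x y z A R) (hA : #A + 1 = n) :
    ∃ e₀, NearSpanning hist W x y z A hist.toFinset e₀ R 5 := by
  have hne : hist ≠ [] := List.toFinset_nonempty_iff _ |>.1 (h.path.nonempty_edges_of_ne h.ne)
  exact ⟨hist.head hne,
    { path := h.path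
      subset := Subset.rfl
      notMem := h.notMem
      insert_eq_univ := by
        rw [← card_eq_iff_eq_univ, card_insert_of_notMem h.notMem, Fintype.card_fin, hA]
      first_mem := List.mem_toFinset.2 (List.head_mem hne)
      head_eq := List.head?_eq_some_head hne
      notMem_reserved := notMem_mono h.subset h.notMem
      reserved := h.reserved
      degree_le := h.degree_le }⟩

namespace NearSpanning

variable {E E' : Finset (Sym2 (Fin n))} {e₀ : Sym2 (Fin n)} {Δ : ℕ} {a b u v w : Fin n}

theorem concat (h : NearSpanning hist W x y z A E e₀ R Δ) (e : Sym2 (Fin n))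
    (hcd : c ∉ R ∨ d ∉ R) :
    NearSpanning (hist ++ [e]) (insert s(c, d) W) x y z A E e₀ R (Δ + 1) where
  __ := h
  subset := toFinset_concat hist e ▸ h.subset.trans (subset_insert _ _)
  head_eq := by rw [List.head?_append, h.head_eq, Option.some_or]
  reserved := h.reserved.concat e hcd
  degree_le v := (edgeDegree_insert_le W _ v).trans (Nat.succ_le_succ (h.degree_le v))

theorem reroute (h : NearSpanning hist W x y z A E e₀ R Δ) (hP : PathOn a b A E')
    (hE : E' ⊆ hist.toFinset) (he₀ : e₀ ∈ E') : NearSpanning hist W a b z A E' e₀ R Δ where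
  __ := h
  path := hP
  subset := hE
  first_mem := he₀

theorem card_add_one_eq (h : NearSpanning hist W x y z A E e₀ R Δ) : #A + 1 = n := by
  rw [← card_insert_of_notMem h.notMem, h.insert_eq_univ, card_univ, Fintype.card_fin]

theorem ne_of_mem (h : NearSpanning hist W x y z A E e₀ R Δ) (hv : v ∈ A) : z ≠ v :=
  (ne_of_mem_of_not_mem hv h.notMem).symm

theorem notMem_edges (h : NearSpanning hist W x y z A E e₀ R Δ) (v : Fin n) : s(z, v) ∉ E :=
  fun he => h.notMem (h.path.left_mem_of_edge_mem he)

theorem hamWithProperties (h : NearSpanning hist W x y z A E e₀ R Δ) (hn : 3 ≤ n) (hΔ : Δ < 10)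
    (hx : s(z, x) ∈ hist.toFinset) (hy : s(z, y) ∈ hist.toFinset) :
    HamWithProperties n hist W := by
  have hP := h.path.cons h.notMem
  rw [h.insert_eq_univ] at hP
  obtain ⟨p, hp, hpE⟩ := hP.exists_isHamiltonianCycle (by rwa [Fintype.card_fin])
  obtain ⟨⟨a, b, q, hq, hlen, hqE, hqR⟩, hRW⟩ := h.reserved
  refine ⟨y, p, hp, fun e he => ?_, fun v => (h.degree_le v).trans_lt hΔ,
    ⟨e₀, h.head_eq, (hpE e₀).2 ?_⟩,
    ⟨a, b, q, hq, hlen, hqE, fun u v hu hv => hRW u (hqR u hu) v (hqR v hv)⟩⟩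
  · obtain rfl | he := mem_insert.1 ((hpE e).1 he)
    · exact hy
    · obtain rfl | he := mem_insert.1 he
      · exact Sym2.eq_swap ▸ hx
      · exact h.subset he
  · exact mem_insert_of_mem (mem_insert_of_mem h.first_mem)

/-- Waiter offers `zu` and `zw`, so that `z` can be inserted into the cycle next to `v`. -/
theorem wins_of_cycle_of_consecutiveTriple (h : NearSpanning hist W x y z A E e₀ R Δ)
    (hn : 3 ≤ n) (hΔ : Δ < 9) (hC : hist.toFinset = insert s(z, v) (insert s(x, y) E))
    (ht : ConsecutiveTriple x y A E u v w) (hv : v ∉ e₀) (hu : s(z, u) ∉ W)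
    (hw : s(z, w) ∉ W) :
    WaiterWinsHist (Kedges n) 1 (HamWithProperties n) 1 hist W := by
  have hfree : ∀ a, a ≠ v → s(z, a) ∉ hist.toFinset := fun a hav => by
    have hzx := h.ne_of_mem h.path.mem_left
    have hzy := h.ne_of_mem h.path.mem_right
    have := h.notMem_edges a
    rw [hC]
    grind
  have hwin : ∀ a b c, PathOn a v A (insert s(x, y) (E.erase s(b, v))) →
      HamWithProperties n (hist ++ [s(z, a)]) (insert s(z, c) W) := fun a b c hP => by
    refine ((h.concat s(z, a) (.inl h.notMem_reserved)).reroute hP ?_ ?_).hamWithProperties hn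
      (Nat.succ_lt_succ hΔ) ?_ ?_
    · grind [toFinset_concat]
    · exact mem_insert_of_mem (mem_erase.2 ⟨by grind, h.first_mem⟩)
    · grind [toFinset_concat]
    · grind [toFinset_concat]
  exact .succ_of_star ht.ne (h.ne_of_mem ht.left.left_mem) (h.ne_of_mem ht.right.right_mem)
    (notMem_union.2 ⟨hfree u ht.left.ne, hu⟩) (notMem_union.2 ⟨hfree w ht.right.ne.symm, hw⟩)
    (hwin u u w ht.left.flip) (hwin w w u (Sym2.eq_swap (a := v) ▸ ht.right.flip.reverse))

theorem card_edgeNeighbors_union_le (h : NearSpanning hist W x y z A E e₀ R Δ) (v : Fin n) :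
    #(edgeNeighbors W v ∪ e₀.toFinset) ≤ Δ + 2 := by
  have := (card_edgeNeighbors_le W v).trans (h.degree_le v)
  have := card_union_le (edgeNeighbors W v) e₀.toFinset
  have := Sym2.card_toFinset e₀
  split_ifs at this <;> lia

/-- When Client's path is closed to a cycle, Waiter offers to join `z` to the middle vertices of two
triples whose edges can be given up. -/
theorem wins_of_cycle (h : NearSpanning hist W x y z A E e₀ R Δ) (hn : 100 ≤ n) (hΔ : Δ ≤ 6)
    (hC : hist.toFinset = insert s(x, y) E) :
    WaiterWinsHist (Kedges n) 1 (HamWithProperties n) 2 hist W := by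
  have hcard := h.card_add_one_eq
  have hB := h.card_edgeNeighbors_union_le z
  obtain ⟨u, v, w, u', v', w', ht, ht', hd, hd'⟩ :=
    h.path.exists_two_consecutiveTriple (edgeNeighbors W z ∪ e₀.toFinset) (by lia)
  simp only [disjoint_insert_left, disjoint_singleton_left, mem_union, mem_edgeNeighbors,
    Sym2.mem_toFinset, mem_insert, mem_singleton, not_or] at hd hd'
  obtain ⟨⟨hu, -⟩, ⟨hv, hv₀⟩, hw, -⟩ := hd
  obtain ⟨⟨⟨-, huv', -⟩, hu', -⟩, ⟨⟨hvu', hvv', hvw'⟩, hv', hv₀'⟩, ⟨-, hwv', -⟩, hw', -⟩ := hd'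
  have hzx := h.ne_of_mem h.path.mem_left
  have hzy := h.ne_of_mem h.path.mem_right
  have hfree : ∀ a, s(z, a) ∉ W → s(z, a) ∉ hist.toFinset ∪ W := fun a ha =>
    hC ▸ notMem_union.2 ⟨notMem_insert_mk (h.notMem_edges a) (absurd · hzx) (absurd · hzy), ha⟩
  have hround := fun a b => h.concat (c := z) (d := b) s(z, a) (.inl h.notMem_reserved)
  have hhist := fun a => (toFinset_concat hist s(z, a)).trans (congrArg _ hC)
  exact .succ_of_star (Ne.symm hvv') (h.ne_of_mem ht.left.right_mem)
    (h.ne_of_mem ht'.left.right_mem) (hfree v hv) (hfree v' hv')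
    ((hround v v').wins_of_cycle_of_consecutiveTriple (by lia) (by lia) (hhist v) ht hv₀
      (notMem_insert_star hu (Ne.symm hvu')) (notMem_insert_star hw (Ne.symm hvw')))
    ((hround v' v).wins_of_cycle_of_consecutiveTriple (by lia) (by lia) (hhist v') ht' hv₀'
      (notMem_insert_star hu' huv') (notMem_insert_star hw' hwv'))

/-- Waiter offers `zx` and `zu`: the first closes the Hamilton path, the second closes its rotation
at `uv`. -/
theorem wins_of_path_of_splitsAt (h : NearSpanning hist W x y z A E e₀ R Δ) (hn : 3 ≤ n)
    (hΔ : Δ < 9) (hC : hist.toFinset = insert s(x, v) (insert s(z, y) E)) (hxy : x ≠ y)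
    (ht : SplitsAt x y A E u v) (hv : v ∉ e₀) (hux : u ≠ x) (huy : u ≠ y) (hx : s(z, x) ∉ W)
    (hu : s(z, u) ∉ W) :
    WaiterWinsHist (Kedges n) 1 (HamWithProperties n) 1 hist W := by
  have hfree : ∀ a, a ≠ y → s(z, a) ∉ hist.toFinset := fun a hay => by
    have hzx := h.ne_of_mem h.path.mem_left
    have hzv := h.ne_of_mem ht.right_mem
    have := h.notMem_edges a
    rw [hC]
    grind
  have hwin := fun a b => h.concat (c := z) (d := b) s(z, a) (.inl h.notMem_reserved)
  refine .succ_of_star hux (h.ne_of_mem ht.left_mem) (h.ne_of_mem h.path.mem_left)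
    (notMem_union.2 ⟨hfree u huy, hu⟩) (notMem_union.2 ⟨hfree x hxy, hx⟩) ?_ ?_
  · refine ((hwin u x).reroute ht.rotate ?_ ?_).hamWithProperties hn (Nat.succ_lt_succ hΔ) ?_ ?_
    · grind [toFinset_concat]
    · exact mem_insert_of_mem (mem_erase.2 ⟨by grind, h.first_mem⟩)
    · grind [toFinset_concat]
    · grind [toFinset_concat]
  · refine (hwin x u).hamWithProperties hn (Nat.succ_lt_succ hΔ) ?_ ?_
    · grind [toFinset_concat]
    · grind [toFinset_concat]

/-- When `z` is joined to the end `y` of Client's path, Waiter offers to rotate the path at its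
other end `x` before closing it. -/
theorem wins_of_path (h : NearSpanning hist W x y z A E e₀ R Δ) (hn : 100 ≤ n) (hΔ : Δ ≤ 6)
    (hC : hist.toFinset = insert s(z, y) E) (hxR : x ∉ R) (hxy : x ≠ y) (hx : s(z, x) ∉ W) :
    WaiterWinsHist (Kedges n) 1 (HamWithProperties n) 2 hist W := by
  have hcard := h.card_add_one_eq
  have hB : #(edgeNeighbors W z ∪ e₀.toFinset ∪ (edgeNeighbors W x ∪ {x, y})) ≤ 2 * Δ + 4 := by
    have := h.card_edgeNeighbors_union_le z
    have := (card_edgeNeighbors_le W x).trans (h.degree_le x)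
    have := card_union_le (edgeNeighbors W z ∪ e₀.toFinset) (edgeNeighbors W x ∪ {x, y})
    have := card_union_le (edgeNeighbors W x) {x, y}
    have := card_le_two (a := x) (b := y)
    lia
  obtain ⟨u, v, w, u', v', w', ht, ht', hd, hd'⟩ := h.path.exists_two_consecutiveTriple
    (edgeNeighbors W z ∪ e₀.toFinset ∪ (edgeNeighbors W x ∪ {x, y})) (by lia)
  simp only [disjoint_insert_left, disjoint_singleton_left, mem_union, mem_edgeNeighbors,
    Sym2.mem_toFinset, mem_insert, mem_singleton, not_or] at hd hd'
  obtain ⟨⟨⟨hu, -⟩, -, hux, huy⟩, ⟨⟨-, hv₀⟩, hxv, hvx, -⟩, -⟩ := hd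
  obtain ⟨⟨-, ⟨hu', -⟩, -, hux', huy'⟩, ⟨⟨-, hvv', -⟩, ⟨-, hv₀'⟩, hxv', hvx', -⟩, -⟩ := hd'
  have hzx := h.ne_of_mem h.path.mem_left
  have hfree : ∀ {a b}, SplitsAt x y A E a b → a ≠ x → s(x, b) ∉ W →
      s(x, b) ∉ hist.toFinset ∪ W := fun hab hax hb => hC ▸ notMem_union.2
    ⟨notMem_insert_mk (hab.notMem_of_ne hax.symm) (absurd · hzx.symm) (absurd · hxy), hb⟩
  have hround := fun a b => h.concat (c := x) (d := b) s(x, a) (.inl hxR)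
  have hhist := fun a => (toFinset_concat hist s(x, a)).trans (congrArg _ hC)
  have hzW : ∀ {a b}, b ∈ A → s(z, a) ∉ W → s(z, a) ∉ insert s(x, b) W := fun hb ha =>
    notMem_insert_mk ha (absurd · hzx) (absurd · (h.ne_of_mem hb))
  have hvA := ht.left.right_mem
  have hvA' := ht'.left.right_mem
  exact .succ_of_star (Ne.symm hvv') (Ne.symm hvx) (Ne.symm hvx') (hfree ht.left hux hxv)
    (hfree ht'.left hux' hxv')
    ((hround v v').wins_of_path_of_splitsAt (by lia) (by lia) (hhist v) hxy ht.left hv₀ hux huy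
      (hzW hvA' hx) (hzW hvA' hu))
    ((hround v' v).wins_of_path_of_splitsAt (by lia) (by lia) (hhist v') hxy ht'.left hv₀' hux'
      huy' (hzW hvA hx) (hzW hvA hu'))

end NearSpanning

theorem PendingPath.wins (h : PendingPath hist W x y z A R) (hn : 100 ≤ n) (hA : #A + 1 = n)
    (hxR : x ∉ R) : WaiterWinsHist (Kedges n) 1 (HamWithProperties n) 3 hist W := by
  obtain ⟨e₀, hspan⟩ := h.exists_nearSpanning hA
  have hzx := hspan.ne_of_mem h.path.mem_left
  have hzy := hspan.ne_of_mem h.path.mem_right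
  have hyx : s(y, x) ∉ hist.toFinset ∪ W := Sym2.eq_swap ▸
    notMem_union.2 ⟨h.path.notMem_of_three_le_card (by lia), h.ends_free⟩
  have hyz : s(y, z) ∉ hist.toFinset ∪ W :=
    notMem_union.2 ⟨h.notMem_toFinset h.notMem, h.right_free z h.notMem⟩
  refine .succ_of_star hzx.symm h.ne.symm hzy.symm hyx hyz ?_ ?_
  · refine (hspan.concat _ (.inr hspan.notMem_reserved)).wins_of_cycle hn le_rfl ?_
    rw [toFinset_concat, Sym2.eq_swap]
  · refine (hspan.concat _ (.inr hxR)).wins_of_path hn le_rfl ?_ hxR h.ne ?_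
    · rw [toFinset_concat, Sym2.eq_swap]
    · exact notMem_insert_mk (Sym2.eq_swap ▸ h.left_free z h.notMem) (absurd · hzy) (absurd · hzx)

theorem BalancedPath.wins (h : BalancedPath hist W x y A R) (hn : 100 ≤ n) {k : ℕ}
    (hk : #A + 2 * k + 2 = n) :
    WaiterWinsHist (Kedges n) 1 (HamWithProperties n) (2 * k + (1 + 3)) hist W :=
  (h.rounds k (by lia)).trans fun _ _ ⟨_, _, _, hA', h'⟩ =>
    (h'.exists_pending (by lia)).trans fun _ _ ⟨_, _, _, _, hA'', hxR, h''⟩ =>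
      h''.wins hn (by lia) hxR

end Strategy

/-- For every large enough `n`, in the unbiased Waiter-Client game on the edge set of `K_n`,
Waiter can force, within `n+1` rounds, Client's graph to contain a Hamilton cycle satisfying
the additional properties (1)–(3) above at the moment it is completed. -/
theorem WC_hamiltonicity_with_properties :
    ∃ n₀ : ℕ, ∀ n : ℕ, n₀ ≤ n →
      WaiterWinsHist (Kedges n) 1 (HamWithProperties n) (n + 1) [] ∅ := by
  refine ⟨100, fun n hn => ?_⟩
  obtain ⟨j, k, hj, hj', hjk⟩ : ∃ j k, n / 5 ≤ j ∧ j ≤ n / 5 + 1 ∧ 1 + j + 2 * k + 2 = n := by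
    obtain ⟨k, hk | hk⟩ := (n - n / 5 - 3).even_or_odd'
    · exact ⟨n / 5, k, by lia⟩
    · exact ⟨n / 5 + 1, k, by lia⟩
  have hstart : Growing [] ∅ _ _ {_} _ := .singleton (⟨0, by lia⟩ : Fin n)
  have hrounds : j + (2 * k + (1 + 3)) = n + 1 := by lia
  rw [← hrounds]
  refine (hstart.rounds j (by rw [card_singleton]; lia)).trans fun hist W ⟨x, y, A, F, hA, h⟩ => ?_
  rw [card_singleton] at hA
  exact (h.balancedPath (by lia) (by lia)).wins hn (by lia)
end
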